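/- Every parameterized decision problem solvable by an alternating Turing machine with f(k)·log n memory whose computation tree is a binary tree on f(k)·n^{O(1)} nodes (for some computable f) is solvable by an alternating Turing machine with g(k)·log n memory whose computation tree is obtained from a binary tree of depth O(log n)+g(k) by subdividing each edge g(k)·n^{O(1)} times, for some computable function g. -/

import Mathlib

/-!
Let `M` solve the problem with trees of size at most `f(k) * (n + 2) ^ c` in space `f(k) * log n`.
The idea is the one of Savitch, Ruzzo and Brent: the existence of an accepting tree is verified by
balanced splitting. A *fragment* is a computation tree from which at most one subtree, the hole,
has been cut off. To verify a fragment of size `s` from `a` to the hole `b`, one guesses the last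
node `v` on the way to the hole (on the way into larger subtrees, if there is no hole) whose
subtree has more than `s / 2` nodes, and branches into verifying the fragment from `a` to `v`, those
from the successors of `v`, and the input symbol scanned at `v` (`Fr.split`, `split_complete`).
After two rounds the size has halved, so `4 * log s + O(1)` forks suffice (`node_complete`), and
only a bounded number of configurations and numbers is stored at any time.

The machine cannot compute `f(k)`, but the size of the verified tree has to be bounded by
`f(k) * (n + 2) ^ c`, or else too much would be accepted. The bound is read off from the space:
the machine guesses a length `L` of its tape, which is at most `f(k) * log n`, and marks disjoint
segments of cells. That a segment has `log n` cells is verified by counting to `n + 2` in a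
mixed-radix system with one binary digit per cell of the segment and one additional bit. If `N`
segments fit then `N ≤ f(k)`, and the size budget is `N * (n + 2) ^ c`, computed by scanning the
input `c` times. The largest possible `N` is `f(k)`. Since a pass over the tape takes time
proportional to `f(k) * log n`, there may be only polynomially many passes between two forks; so
a trivial fork is made after every second segment, and the number of forks is at most
`4 * log (f(k) * (n + 2) ^ c) + f(k) / 2`, which is `O(log n) + f(k)`.

The machine is described as a `SweepMachine`, which rewrites its whole tape in one pass, the
new contents being guessed and checked locally; `SweepMachine.sound` and `SweepMachine.complete`
relate it to alternating Turing machines. Additions are checked by guessing the carries. For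
soundness, `Asrt` assigns to each control point an assertion that follows from acceptance there
(`goal_of_acc`); completeness (`sim_complete`) exhibits the accepting run for a given tree.
-/

namespace XALP

/-! ## Binary trees (used both for computation trees of alternating Turing
machines and for tree-shaped inputs such as tree decompositions). -/

inductive CTree (α : Type) : Type
  | leaf (a : α)
  | node1 (a : α) (t : CTree α)
  | node2 (a : α) (l r : CTree α)

namespace CTree

variable {α β : Type}

/-- The label of the root. -/
def root : CTree α → α
  | leaf a => a
  | node1 a _ => a
  | node2 a _ _ => a

/-- Total number of nodes (the treesize). -/
def size : CTree α → ℕ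
  | leaf _ => 1
  | node1 _ t => t.size + 1
  | node2 _ l r => l.size + r.size + 1

/-- Depth of the tree. -/
def depth : CTree α → ℕ
  | leaf _ => 0
  | node1 _ t => t.depth + 1
  | node2 _ l r => max l.depth r.depth + 1

/-- Maximum number of binary branchings (co-non-deterministic steps) on a
root-to-leaf path. -/
def branchDepth : CTree α → ℕ
  | leaf _ => 0
  | node1 _ t => t.branchDepth
  | node2 _ l r => max l.branchDepth r.branchDepth + 1

/-- All node labels satisfy `p`. -/
def Forall (p : α → Prop) : CTree α → Prop
  | leaf a => p a
  | node1 a t => p a ∧ Forall p t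
  | node2 a l r => p a ∧ Forall p l ∧ Forall p r

/-- Some node label satisfies `p`. -/
def Any (p : α → Prop) : CTree α → Prop
  | leaf a => p a
  | node1 a t => p a ∨ Any p t
  | node2 a l r => p a ∨ Any p l ∨ Any p r

def map (f : α → β) : CTree α → CTree β
  | leaf a => leaf (f a)
  | node1 a t => node1 (f a) (map f t)
  | node2 a l r => node2 (f a) (map f l) (map f r)

end CTree

/-- `SubdivShape m d j t`: the tree `t` has the shape of a binary tree of
depth at most `d` in which every edge has been subdivided at most `m` times;
`j` is the remaining subdivision budget on the current edge. -/
inductive SubdivShape {α : Type} (m : ℕ) : ℕ → ℕ → CTree α → Prop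
  | leaf (d j : ℕ) (a : α) : SubdivShape m d j (.leaf a)
  | branch (d j : ℕ) (a : α) (l r : CTree α)
      (hl : SubdivShape m d m l) (hr : SubdivShape m d m r) :
      SubdivShape m (d + 1) j (.node2 a l r)
  | unary (d j : ℕ) (a : α) (t : CTree α) (h : SubdivShape m d j t) :
      SubdivShape m d (j + 1) (.node1 a t)

/-- `t` is obtained from a binary tree of depth at most `d` by subdividing each
edge at most `m` times. -/
def IsSubdividedBinaryTree {α : Type} (d m : ℕ) (t : CTree α) : Prop :=
  SubdivShape m d m t

/-! ## Turing machines -/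

/-- Direction of a head move. -/
inductive Dir : Type
  | left
  | stay
  | right

def moveDir (i : ℤ) : Dir → ℤ
  | .left => i - 1
  | .stay => i
  | .right => i + 1

/-- The symbol of the (read-only) input tape at position `i` (`none` when the
head is outside of the input word). -/
def inputAt (x : List Bool) (i : ℤ) : Option Bool :=
  if 0 ≤ i then x[i.toNat]? else none

/-- Operations on the auxiliary stack: do nothing, push a symbol, or pop the
top element (only the top element of the stack may be accessed). -/
inductive StackOp (Γ : Type) : Type
  | none
  | push (s : Γ)
  | pop

def applyStackOp {Γ : Type} : StackOp Γ → List Γ → Option (List Γ)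
  | .none, st => some st
  | .push s, st => some (s :: st)
  | .pop, st => st.tail?

/-- A non-deterministic Turing machine with a read-only input tape, a work
tape, and an auxiliary stack (only the top element of the stack may be
inspected). -/
structure AuxTM where
  states : ℕ
  syms : ℕ
  start : Fin states
  accept : Fin states → Prop
  blank : Fin syms
  /-- Transition relation: from the current state, the input symbol under the
  input head, the work symbol under the work head and the top stack symbol
  (if any), nondeterministically choose a new state, a symbol to write, the
  two head movements, and a stack operation. -/
  trans : Fin states → Option Bool → Fin syms → Option (Fin syms) →
      (Fin states × Fin syms × Dir × Dir × StackOp (Fin syms)) → Prop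

namespace AuxTM

/-- A configuration: state, input head position, work tape contents, work head
position, and stack contents. -/
structure Cfg (M : AuxTM) where
  state : Fin M.states
  ipos : ℤ
  tape : ℤ → Fin M.syms
  wpos : ℤ
  stack : List (Fin M.syms)

/-- Initial configuration. -/
def init (M : AuxTM) : M.Cfg :=
  ⟨M.start, 0, fun _ => M.blank, 0, []⟩

/-- One computation step on input `x`. -/
def Step (M : AuxTM) (x : List Bool) (c c' : M.Cfg) : Prop :=
  ∃ q' w di dw op st',
    M.trans c.state (inputAt x c.ipos) (c.tape c.wpos) c.stack.head?
      (q', w, di, dw, op) ∧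
    applyStackOp op c.stack = some st' ∧
    c' = ⟨q', moveDir c.ipos di, Function.update c.tape c.wpos w,
      moveDir c.wpos dw, st'⟩

/-- The configuration uses at most `s` cells of the work tape. -/
def CfgOk (M : AuxTM) (s : ℕ) (c : M.Cfg) : Prop :=
  0 ≤ c.wpos ∧ c.wpos < (s : ℤ) ∧
    ∀ i : ℤ, (i < 0 ∨ (s : ℤ) ≤ i) → c.tape i = M.blank

/-- `M.AcceptsWith x P t c`: from configuration `c` on input `x` there is an
accepting run of at most `t` steps, all whose configurations satisfy the
invariant `P`. -/
inductive AcceptsWith (M : AuxTM) (x : List Bool) (P : M.Cfg → Prop) :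
    ℕ → M.Cfg → Prop
  | accept (t : ℕ) (c : M.Cfg) (hacc : M.accept c.state) (hP : P c) :
      AcceptsWith M x P t c
  | step (t : ℕ) (c c' : M.Cfg) (hP : P c) (hs : M.Step x c c')
      (h : AcceptsWith M x P t c') : AcceptsWith M x P (t + 1) c

end AuxTM

/-- An alternating Turing machine with a read-only input tape and a work tape.
States satisfying `univ` are universal: in them the machine makes a binary
co-non-deterministic step, given by the function `utrans`; in all other states
the machine makes (non-)deterministic steps given by the relation `trans`. -/
structure ATM where
  states : ℕ
  syms : ℕ
  start : Fin states
  accept : Fin states → Prop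
  univ : Fin states → Prop
  blank : Fin syms
  trans : Fin states → Option Bool → Fin syms →
      (Fin states × Fin syms × Dir × Dir) → Prop
  utrans : Fin states → Option Bool → Fin syms →
      ((Fin states × Fin syms × Dir × Dir) × (Fin states × Fin syms × Dir × Dir))

namespace ATM

/-- A configuration: state, input head position, work tape contents and work
head position. -/
structure Cfg (M : ATM) where
  state : Fin M.states
  ipos : ℤ
  tape : ℤ → Fin M.syms
  wpos : ℤ

/-- Initial configuration. -/
def init (M : ATM) : M.Cfg :=
  ⟨M.start, 0, fun _ => M.blank, 0⟩

/-- The configuration obtained by applying a transition. -/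
def applyTr (M : ATM) (c : M.Cfg) (tr : Fin M.states × Fin M.syms × Dir × Dir) :
    M.Cfg :=
  ⟨tr.1, moveDir c.ipos tr.2.2.1, Function.update c.tape c.wpos tr.2.1,
    moveDir c.wpos tr.2.2.2⟩

/-- The configuration uses at most `s` cells of the work tape. -/
def CfgOk (M : ATM) (s : ℕ) (c : M.Cfg) : Prop :=
  0 ≤ c.wpos ∧ c.wpos < (s : ℤ) ∧
    ∀ i : ℤ, (i < 0 ∨ (s : ℤ) ≤ i) → c.tape i = M.blank

/-- `M.ValidTree x t`: `t` is an accepting computation tree of `M` on input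
`x`: every leaf is an accepting configuration, unary nodes are
non-deterministic steps, and binary nodes are (binary) co-non-deterministic
steps. -/
inductive ValidTree (M : ATM) (x : List Bool) : CTree M.Cfg → Prop
  | leaf (c : M.Cfg) (h : M.accept c.state) : ValidTree M x (.leaf c)
  | estep (c : M.Cfg) (tr : Fin M.states × Fin M.syms × Dir × Dir)
      (t : CTree M.Cfg)
      (hne : ¬ M.univ c.state)
      (htr : M.trans c.state (inputAt x c.ipos) (c.tape c.wpos) tr)
      (hroot : t.root = M.applyTr c tr)
      (ht : ValidTree M x t) : ValidTree M x (.node1 c t)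
  | ustep (c : M.Cfg) (l r : CTree M.Cfg)
      (hu : M.univ c.state)
      (hl : l.root = M.applyTr c ((M.utrans c.state (inputAt x c.ipos) (c.tape c.wpos)).1))
      (hr : r.root = M.applyTr c ((M.utrans c.state (inputAt x c.ipos) (c.tape c.wpos)).2))
      (hlv : ValidTree M x l) (hrv : ValidTree M x r) :
      ValidTree M x (.node2 c l r)

end ATM

/-! ## Parameterized complexity classes -/

/-- A parameterized decision problem: a set of pairs of an input word and a
parameter value. -/
abbrev ParamProblem : Type := Set (List Bool × ℕ)

/-- A convenient version of the binary logarithm (positive for all `n`). -/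
def logb (n : ℕ) : ℕ := Nat.log 2 (n + 2)

/-- Characterisation (1): the problem is solved by a non-deterministic Turing
machine with an auxiliary stack in `f(k) · n^{O(1)}` time and `f(k) · log n`
space, for a computable `f`.  This class is XALP. -/
def SolvableAuxPDA (Q : ParamProblem) : Prop :=
  ∃ (M : AuxTM) (f : ℕ → ℕ) (c : ℕ), Computable f ∧
    ∀ x k, (x, k) ∈ Q ↔
      M.AcceptsWith x (M.CfgOk (f k * logb x.length))
        (f k * (x.length + 2) ^ c) M.init

/-- XALP: parameterized problems solvable by a non-deterministic Turing
machine with an auxiliary stack in `f(k) · n^{O(1)}` time and `f(k) · log n`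
space, for a computable function `f`. -/
def InXALP : ParamProblem → Prop := SolvableAuxPDA

/-- Characterisation (2): solvable by an alternating Turing machine with
`f(k) · log n` memory whose computation tree is a binary tree on
`f(k) · n^{O(1)}` nodes. -/
def SolvableATMTreeSize (Q : ParamProblem) : Prop :=
  ∃ (M : ATM) (f : ℕ → ℕ) (c : ℕ), Computable f ∧
    ∀ x k, (x, k) ∈ Q ↔
      ∃ t : CTree M.Cfg, t.root = M.init ∧ M.ValidTree x t ∧
        t.Forall (M.CfgOk (f k * logb x.length)) ∧
        t.size ≤ f k * (x.length + 2) ^ c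

/-- Characterisation (3): solvable by an alternating Turing machine with
`f(k) · log n` memory whose computation tree is obtained from a binary tree of
depth `O(log n) + f(k)` by subdividing each edge `f(k) · n^{O(1)}` times. -/
def SolvableATMSubdiv (Q : ParamProblem) : Prop :=
  ∃ (M : ATM) (f : ℕ → ℕ) (c C : ℕ), Computable f ∧
    ∀ x k, (x, k) ∈ Q ↔
      ∃ t : CTree M.Cfg, t.root = M.init ∧ M.ValidTree x t ∧
        t.Forall (M.CfgOk (f k * logb x.length)) ∧
        IsSubdividedBinaryTree (C * logb x.length + f k)
          (f k * (x.length + 2) ^ c) t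

/-- Characterisation (4): solvable by an alternating Turing machine with
`f(k) · log n` memory whose computation tree has size `f(k) · n^{O(1)}` and
uses at most `O(log n) + f(k)` co-non-deterministic steps per computation
path. -/
def SolvableATMFewCo (Q : ParamProblem) : Prop :=
  ∃ (M : ATM) (f : ℕ → ℕ) (c C : ℕ), Computable f ∧
    ∀ x k, (x, k) ∈ Q ↔
      ∃ t : CTree M.Cfg, t.root = M.init ∧ M.ValidTree x t ∧
        t.Forall (M.CfgOk (f k * logb x.length)) ∧
        t.size ≤ f k * (x.length + 2) ^ c ∧
        t.branchDepth ≤ C * logb x.length + f k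

/-! ## Space-bounded reductions (pl-reductions) -/

/-- A deterministic Turing machine transducer, with a read-only input tape, a
work tape and a write-only output tape (each step may append one output
bit). -/
structure Transducer where
  states : ℕ
  syms : ℕ
  start : Fin states
  halting : Fin states → Prop
  blank : Fin syms
  trans : Fin states → Option Bool → Fin syms →
      Fin states × Fin syms × Dir × Dir × Option Bool

namespace Transducer

structure Cfg (M : Transducer) where
  state : Fin M.states
  ipos : ℤ
  tape : ℤ → Fin M.syms
  wpos : ℤ
  out : List Bool

def init (M : Transducer) : M.Cfg :=
  ⟨M.start, 0, fun _ => M.blank, 0, []⟩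

def stepFn (M : Transducer) (x : List Bool) (c : M.Cfg) : M.Cfg :=
  match M.trans c.state (inputAt x c.ipos) (c.tape c.wpos) with
  | (q', w, di, dw, o) =>
    ⟨q', moveDir c.ipos di, Function.update c.tape c.wpos w,
      moveDir c.wpos dw, c.out ++ o.toList⟩

/-- The configuration uses at most `s` cells of the work tape (the write-only
output tape is not counted). -/
def CfgOk (M : Transducer) (s : ℕ) (c : M.Cfg) : Prop :=
  0 ≤ c.wpos ∧ c.wpos < (s : ℤ) ∧
    ∀ i : ℤ, (i < 0 ∨ (s : ℤ) ≤ i) → c.tape i = M.blank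

/-- On input `x`, `M` halts with output `y`, never using more than `s` work
tape cells. -/
def ComputesIn (M : Transducer) (x y : List Bool) (s : ℕ) : Prop :=
  ∃ n : ℕ, M.halting ((M.stepFn x)^[n] M.init).state ∧
    ((M.stepFn x)^[n] M.init).out = y ∧
    ∀ m ≤ n, M.CfgOk s ((M.stepFn x)^[m] M.init)

end Transducer

/-- A self-delimiting binary encoding of a natural number. -/
def encNat (n : ℕ) : List Bool :=
  (Nat.bits n).foldr (fun b acc => b :: b :: acc) [true, false]

/-- Encoding of the pair (input word, parameter) as a single word. -/
def encPairInput (x : List Bool) (k : ℕ) : List Bool := encNat k ++ x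

/-- `r` is a pl-reduction from `Q₁` to `Q₂`: it preserves membership, the
output parameter is bounded by a computable function `g` of the input
parameter, and `r` is computable by a deterministic transducer in space
`O(g(k) + log n)`. -/
def IsPlReduction (Q₁ Q₂ : ParamProblem) (r : List Bool × ℕ → List Bool × ℕ) :
    Prop :=
  (∀ p, p ∈ Q₁ ↔ r p ∈ Q₂) ∧
  ∃ g : ℕ → ℕ, Computable g ∧
    (∀ x k, (r (x, k)).2 ≤ g k) ∧
    ∃ (M : Transducer) (C : ℕ),
      ∀ x k, M.ComputesIn (encPairInput x k)
        (encPairInput (r (x, k)).1 (r (x, k)).2)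
        (g k + C * logb x.length + C)

def PlReducible (Q₁ Q₂ : ParamProblem) : Prop := ∃ r, IsPlReduction Q₁ Q₂ r

/-- `Q` is XALP-hard: every problem in XALP pl-reduces to `Q`. -/
def XALPHard (Q : ParamProblem) : Prop :=
  ∀ Q' : ParamProblem, InXALP Q' → PlReducible Q' Q

/-- `Q` is XALP-complete: it is in XALP and XALP-hard. -/
def XALPComplete (Q : ParamProblem) : Prop := InXALP Q ∧ XALPHard Q

/-! ## Encodings of structured inputs as binary words -/

def encBool (b : Bool) : List Bool := [b]

def encOption {α : Type} (e : α → List Bool) : Option α → List Bool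
  | Option.none => [false]
  | Option.some a => true :: e a

def encList {α : Type} (e : α → List Bool) (l : List α) : List Bool :=
  encNat l.length ++ (l.map e).foldr (· ++ ·) []

def encPair {α β : Type} (e₁ : α → List Bool) (e₂ : β → List Bool)
    (p : α × β) : List Bool :=
  e₁ p.1 ++ e₂ p.2

def encCTree {α : Type} (e : α → List Bool) : CTree α → List Bool
  | .leaf a => false :: false :: e a
  | .node1 a t => false :: true :: (e a ++ encCTree e t)
  | .node2 a l r => true :: false :: (e a ++ encCTree e l ++ encCTree e r)

/-! ## Graphs given by a number of vertices and a list of edges -/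

/-- A graph on vertex set `{0, …, n-1}` given by a list of edges. -/
structure GraphInst where
  n : ℕ
  edges : List (ℕ × ℕ)

/-- Adjacency in a graph given by an edge list. -/
def Adj (E : List (ℕ × ℕ)) (u v : ℕ) : Prop :=
  u ≠ v ∧ ((u, v) ∈ E ∨ (v, u) ∈ E)

instance (E : List (ℕ × ℕ)) (u v : ℕ) : Decidable (Adj E u v) := by
  unfold Adj; exact inferInstance

def GraphInst.WF (G : GraphInst) : Prop :=
  ∀ p ∈ G.edges, p.1 < G.n ∧ p.2 < G.n ∧ p.1 ≠ p.2

def encGraph (G : GraphInst) : List Bool :=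
  encNat G.n ++ encList (encPair encNat encNat) G.edges

/-! ## Tree decompositions and treewidth -/

/-- Count the nodes of the tree decomposition whose bag contains `v` and whose
parent bag does not contain `v` (the boolean argument indicates whether the
parent bag contains `v`; a connected occurrence set has at most one such
node). -/
def countEntries (v : ℕ) : CTree (List ℕ) → Bool → ℕ
  | .leaf a, pIn => if v ∈ a ∧ pIn = false then 1 else 0
  | .node1 a t, pIn =>
      (if v ∈ a ∧ pIn = false then 1 else 0) + countEntries v t (decide (v ∈ a))
  | .node2 a l r, pIn =>
      (if v ∈ a ∧ pIn = false then 1 else 0) +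
        countEntries v l (decide (v ∈ a)) + countEntries v r (decide (v ∈ a))

/-- `td` is a tree decomposition of `G`: bags cover all vertices, every edge is
contained in some bag, and the bags containing any fixed vertex form a
connected subtree. -/
def IsTreeDecomp (G : GraphInst) (td : CTree (List ℕ)) : Prop :=
  (∀ v < G.n, td.Any (fun bag => v ∈ bag)) ∧
  (∀ p ∈ G.edges, td.Any (fun bag => p.1 ∈ bag ∧ p.2 ∈ bag)) ∧
  (∀ v : ℕ, countEntries v td false ≤ 1) ∧
  td.Forall (fun bag => ∀ v ∈ bag, v < G.n)

/-- The width of the decomposition is at most `w` (bags have at most `w + 1`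
distinct vertices). -/
def WidthLe (td : CTree (List ℕ)) (w : ℕ) : Prop :=
  td.Forall (fun bag => bag.dedup.length ≤ w + 1)

def TreewidthLe (G : GraphInst) (w : ℕ) : Prop :=
  ∃ td, IsTreeDecomp G td ∧ WidthLe td w

/-- The treewidth of `G` equals `w`. -/
def TreewidthEq (G : GraphInst) (w : ℕ) : Prop :=
  TreewidthLe G w ∧ ∀ w' < w, ¬ TreewidthLe G w'

/-! ## Tree-Chained Multicolor Clique / Independent Set -/

/-- An instance of Tree-Chained Multicolor Clique (or Independent Set): a
binary tree each of whose nodes `i` carries `k` vertex classes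
`V_{i,1}, …, V_{i,k}`, and a graph (given by edges) on the union of all the
classes. -/
structure TCMCInstance where
  k : ℕ
  tree : CTree (List (List ℕ))
  edges : List (ℕ × ℕ)

def encTCMC (I : TCMCInstance) : List Bool :=
  encNat I.k ++ encCTree (encList (encList encNat)) I.tree ++
    encList (encPair encNat encNat) I.edges

/-- Well-formedness: every tree node carries exactly `k` pairwise disjoint
duplicate-free vertex classes. -/
def TCMCInstance.WF (I : TCMCInstance) : Prop :=
  I.tree.Forall (fun cls => cls.length = I.k ∧ (∀ X ∈ cls, X.Nodup) ∧
    List.Pairwise (fun X Y => ∀ v ∈ X, v ∉ Y) cls)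

/-- `ChainSol R p t`: one vertex can be chosen from each class of each node of
`t` so that any two choices in the same node or in adjacent nodes of the tree
are related by `R`; `p` is the list of choices made at the parent node (`[]`
for the root). -/
inductive ChainSol (R : ℕ → ℕ → Prop) : List ℕ → CTree (List (List ℕ)) → Prop
  | leaf (p c : List ℕ) (cls : List (List ℕ))
      (hc : List.Forall₂ (fun v X => v ∈ X) c cls)
      (hin : c.Pairwise R)
      (hcross : ∀ u ∈ p, ∀ v ∈ c, R u v) :
      ChainSol R p (.leaf cls)
  | node1 (p c : List ℕ) (cls : List (List ℕ)) (t : CTree (List (List ℕ)))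
      (hc : List.Forall₂ (fun v X => v ∈ X) c cls)
      (hin : c.Pairwise R)
      (hcross : ∀ u ∈ p, ∀ v ∈ c, R u v)
      (ht : ChainSol R c t) :
      ChainSol R p (.node1 cls t)
  | node2 (p c : List ℕ) (cls : List (List ℕ)) (l r : CTree (List (List ℕ)))
      (hc : List.Forall₂ (fun v X => v ∈ X) c cls)
      (hin : c.Pairwise R)
      (hcross : ∀ u ∈ p, ∀ v ∈ c, R u v)
      (hl : ChainSol R c l) (hr : ChainSol R c r) :
      ChainSol R p (.node2 cls l r)

/-- The instance has a tree-chained multicolor clique. -/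
def TCMCInstance.HasClique (I : TCMCInstance) : Prop :=
  ChainSol (Adj I.edges) [] I.tree

/-- The instance has a tree-chained multicolor independent set. -/
def TCMCInstance.HasIndepSet (I : TCMCInstance) : Prop :=
  ChainSol (fun u v => ¬ Adj I.edges u v) [] I.tree

/-- The parameterized problem Tree-Chained Multicolor Clique. -/
def TCMCLang : ParamProblem :=
  {p | ∃ I : TCMCInstance, encTCMC I = p.1 ∧ I.k = p.2 ∧ I.WF ∧ I.HasClique}

/-- The parameterized problem Tree-Chained Multicolor Independent Set. -/
def TCMISLang : ParamProblem :=
  {p | ∃ I : TCMCInstance, encTCMC I = p.1 ∧ I.k = p.2 ∧ I.WF ∧ I.HasIndepSet}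

/-! ## List Coloring and Pre-coloring Extension parameterized by treewidth -/

structure ListColInst where
  graph : GraphInst
  lists : List (List ℕ)

def ListColInst.WF (I : ListColInst) : Prop :=
  I.graph.WF ∧ I.lists.length = I.graph.n

/-- There is a proper coloring choosing for every vertex a color from its
list. -/
def ListColInst.HasColoring (I : ListColInst) : Prop :=
  ∃ col : List ℕ, List.Forall₂ (fun c L => c ∈ L) col I.lists ∧
    ∀ p ∈ I.graph.edges, col[p.1]? ≠ col[p.2]?

def encListCol (I : ListColInst) : List Bool :=
  encGraph I.graph ++ encList (encList encNat) I.lists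

/-- List Coloring, parameterized by the treewidth of the input graph. -/
def ListColoringTW : ParamProblem :=
  {p | ∃ I : ListColInst, encListCol I = p.1 ∧ I.WF ∧
    TreewidthEq I.graph p.2 ∧ I.HasColoring}

structure PrecolInst where
  graph : GraphInst
  numColors : ℕ
  pre : List (Option ℕ)

def PrecolInst.WF (I : PrecolInst) : Prop :=
  I.graph.WF ∧ I.pre.length = I.graph.n ∧
  (∀ c ∈ I.pre, ∀ a ∈ c, a < I.numColors) ∧
  (∀ p ∈ I.graph.edges, ∀ a : ℕ,
    I.pre[p.1]? = some (some a) → I.pre[p.2]? ≠ some (some a))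

/-- The given precoloring extends to a proper coloring of the whole graph with
the given number of colors. -/
def PrecolInst.HasExtension (I : PrecolInst) : Prop :=
  ∃ col : List ℕ, col.length = I.graph.n ∧ (∀ a ∈ col, a < I.numColors) ∧
    (∀ (v : ℕ) (a : ℕ), I.pre[v]? = some (some a) → col[v]? = some a) ∧
    ∀ p ∈ I.graph.edges, col[p.1]? ≠ col[p.2]?

def encPrecol (I : PrecolInst) : List Bool :=
  encGraph I.graph ++ encNat I.numColors ++ encList (encOption encNat) I.pre

/-- Pre-coloring Extension, parameterized by the treewidth of the input
graph. -/
def PrecolExtTW : ParamProblem :=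
  {p | ∃ I : PrecolInst, encPrecol I = p.1 ∧ I.WF ∧
    TreewidthEq I.graph p.2 ∧ I.HasExtension}

/-! ## Tree-chained satisfiability problems -/

/-- The variable scopes allowed for clauses: the variables of a single tree
node, or of two adjacent tree nodes. -/
def treeScopes : CTree (List ℕ) → List (List ℕ)
  | .leaf a => [a]
  | .node1 a t => [a, a ++ t.root] ++ treeScopes t
  | .node2 a l r => [a, a ++ l.root, a ++ r.root] ++ treeScopes l ++ treeScopes r

/-- Tree-Chained Weighted CNF-Satisfiability.  A literal is a pair of a sign
(`true` = positive) and a variable. -/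
structure TCSatInst where
  k : ℕ
  tree : CTree (List ℕ)
  clauses : List (List (Bool × ℕ))

def TCSatInst.WF (I : TCSatInst) : Prop :=
  I.tree.Forall List.Nodup ∧
  ∀ C ∈ I.clauses, ∃ s ∈ treeScopes I.tree, ∀ lit ∈ C, lit.2 ∈ s

/-- Some assignment sets at most `k` variables of each `X_i` to true and
satisfies all clauses. -/
def TCSatInst.HasAssignment (I : TCSatInst) : Prop :=
  ∃ σ : ℕ → Bool, I.tree.Forall (fun X => X.countP σ ≤ I.k) ∧
    ∀ C ∈ I.clauses, ∃ lit ∈ C, σ lit.2 = lit.1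

def encTCSat (I : TCSatInst) : List Bool :=
  encNat I.k ++ encCTree (encList encNat) I.tree ++
    encList (encList (encPair encBool encNat)) I.clauses

def TCWeightedCNFSat : ParamProblem :=
  {p | ∃ I : TCSatInst, encTCSat I = p.1 ∧ I.k = p.2 ∧ I.WF ∧ I.HasAssignment}

/-- Partitioned tree-chained satisfiability instance: each tree node carries a
partition of its variable set into `k` parts; all clause literals have the
same sign, so clauses are just lists of variables. -/
structure PartTCSatInst where
  k : ℕ
  tree : CTree (List (List ℕ))
  clauses : List (List ℕ)

def PartTCSatInst.WF (I : PartTCSatInst) : Prop :=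
  I.tree.Forall (fun parts => parts.length = I.k ∧ (∀ X ∈ parts, X.Nodup) ∧
    List.Pairwise (fun X Y => ∀ v ∈ X, v ∉ Y) parts) ∧
  ∀ C ∈ I.clauses, ∃ s ∈ treeScopes (I.tree.map List.flatten), ∀ v ∈ C, v ∈ s

/-- Some assignment sets exactly one variable of each part to true and
satisfies all clauses of positive literals. -/
def PartTCSatInst.HasPositiveAssignment (I : PartTCSatInst) : Prop :=
  ∃ σ : ℕ → Bool,
    I.tree.Forall (fun parts => ∀ X ∈ parts, X.countP σ = 1) ∧
    ∀ C ∈ I.clauses, ∃ v ∈ C, σ v = true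

/-- Some assignment sets exactly one variable of each part to true and
satisfies all clauses of negative literals. -/
def PartTCSatInst.HasNegativeAssignment (I : PartTCSatInst) : Prop :=
  ∃ σ : ℕ → Bool,
    I.tree.Forall (fun parts => ∀ X ∈ parts, X.countP σ = 1) ∧
    ∀ C ∈ I.clauses, ∃ v ∈ C, σ v = false

def encPartTCSat (I : PartTCSatInst) : List Bool :=
  encNat I.k ++ encCTree (encList (encList encNat)) I.tree ++
    encList (encList encNat) I.clauses

def PosPartTCWeightedCNFSat : ParamProblem :=
  {p | ∃ I : PartTCSatInst, encPartTCSat I = p.1 ∧ I.k = p.2 ∧ I.WF ∧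
    I.HasPositiveAssignment}

def NegPartTCWeightedCNFSat : ParamProblem :=
  {p | ∃ I : PartTCSatInst, encPartTCSat I = p.1 ∧ I.k = p.2 ∧ I.WF ∧
    I.HasNegativeAssignment}

/-! ## Set-based description of tree-chained multicolor independent sets -/

def ordPairs {α : Type} : List α → List (α × α)
  | [] => []
  | a :: l => l.map (fun b => (a, b)) ++ ordPairs l

def allPairs {α β : Type} (l₁ : List α) (l₂ : List β) : List (α × β) :=
  (l₁.map (fun a => l₂.map (fun b => (a, b)))).foldr (· ++ ·) []

/-- All pairs of distinct classes of the same tree node, and all pairs of a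
class of a node and a class of one of its children. -/
def relatedPairs : CTree (List (List ℕ)) → List (List ℕ × List ℕ)
  | .leaf a => ordPairs a
  | .node1 a t => ordPairs a ++ allPairs a t.root ++ relatedPairs t
  | .node2 a l r => ordPairs a ++ allPairs a l.root ++ allPairs a r.root ++
      relatedPairs l ++ relatedPairs r

/-- The edges of the graph only go between related distinct classes. -/
def EdgesRespectStructure (I : TCMCInstance) : Prop :=
  ∀ p ∈ I.edges, ∃ q ∈ relatedPairs I.tree,
    (p.1 ∈ q.1 ∧ p.2 ∈ q.2) ∨ (p.1 ∈ q.2 ∧ p.2 ∈ q.1)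

/-- `U` contains exactly one vertex of every class `V_{i,j}`. -/
def PickOnePerClass (tree : CTree (List (List ℕ))) (U : Finset ℕ) : Prop :=
  tree.Forall (fun parts => ∀ X ∈ parts, X.countP (fun v => decide (v ∈ U)) = 1)

/-- `U` is a tree-chained multicolor independent set of the instance `I`. -/
def SetIsTCMIS (I : TCMCInstance) (U : Finset ℕ) : Prop :=
  PickOnePerClass I.tree U ∧
  ∀ q ∈ relatedPairs I.tree, ∀ u ∈ q.1, ∀ v ∈ q.2,
    u ∈ U → v ∈ U → ¬ Adj I.edges u v

/-! ## Problems parameterized by logarithmic treewidth -/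

def HasIndepSetOfSize (G : GraphInst) (W : ℕ) : Prop :=
  ∃ S : Finset ℕ, (∀ v ∈ S, v < G.n) ∧ W ≤ S.card ∧
    ∀ p ∈ G.edges, ¬ (p.1 ∈ S ∧ p.2 ∈ S)

def HasVertexCoverOfSize (G : GraphInst) (L : ℕ) : Prop :=
  ∃ S : Finset ℕ, (∀ v ∈ S, v < G.n) ∧ S.card ≤ L ∧
    ∀ p ∈ G.edges, p.1 ∈ S ∨ p.2 ∈ S

def HasDominatingSetOfSize (G : GraphInst) (K : ℕ) : Prop :=
  ∃ S : Finset ℕ, (∀ v ∈ S, v < G.n) ∧ S.card ≤ K ∧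
    ∀ v < G.n, v ∉ S → ∃ u ∈ S, Adj G.edges u v

/-- Instance of a problem on a graph given together with a tree decomposition
and a numerical target. -/
structure TDGraphInst where
  graph : GraphInst
  td : CTree (List ℕ)
  target : ℕ

def encTDGraph (I : TDGraphInst) : List Bool :=
  encGraph I.graph ++ encCTree (encList encNat) I.td ++ encNat I.target

/-- Independent Set parameterized by logarithmic treewidth: the instance comes
with a tree decomposition of width at most `k log n`. -/
def IndependentSetLogTW : ParamProblem :=
  {p | ∃ I : TDGraphInst, encTDGraph I = p.1 ∧ I.graph.WF ∧
    IsTreeDecomp I.graph I.td ∧ WidthLe I.td (p.2 * Nat.log 2 I.graph.n) ∧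
    HasIndepSetOfSize I.graph I.target}

/-- Vertex Cover parameterized by logarithmic treewidth. -/
def VertexCoverLogTW : ParamProblem :=
  {p | ∃ I : TDGraphInst, encTDGraph I = p.1 ∧ I.graph.WF ∧
    IsTreeDecomp I.graph I.td ∧ WidthLe I.td (p.2 * Nat.log 2 I.graph.n) ∧
    HasVertexCoverOfSize I.graph I.target}

/-- Dominating Set parameterized by logarithmic treewidth. -/
def DominatingSetLogTW : ParamProblem :=
  {p | ∃ I : TDGraphInst, encTDGraph I = p.1 ∧ I.graph.WF ∧
    IsTreeDecomp I.graph I.td ∧ WidthLe I.td (p.2 * Nat.log 2 I.graph.n) ∧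
    HasDominatingSetOfSize I.graph I.target}

/-- Instance of Red-Blue Dominating Set with a tree decomposition: `blue`
records the color of each vertex (`true` = blue). -/
structure RBTDInst where
  graph : GraphInst
  blue : List Bool
  td : CTree (List ℕ)
  target : ℕ

def RBTDInst.WF (I : RBTDInst) : Prop :=
  I.graph.WF ∧ I.blue.length = I.graph.n

/-- There is a set of at most `target` blue vertices dominating all red
vertices. -/
def RBTDInst.HasRBDS (I : RBTDInst) : Prop :=
  ∃ S : Finset ℕ, (∀ v ∈ S, v < I.graph.n ∧ I.blue[v]? = some true) ∧
    S.card ≤ I.target ∧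
    ∀ v < I.graph.n, I.blue[v]? = some false → ∃ u ∈ S, Adj I.graph.edges u v

def encRBTD (I : RBTDInst) : List Bool :=
  encGraph I.graph ++ encList encBool I.blue ++
    encCTree (encList encNat) I.td ++ encNat I.target

/-- Red-Blue Dominating Set parameterized by logarithmic treewidth. -/
def RedBlueDominatingSetLogTW : ParamProblem :=
  {p | ∃ I : RBTDInst, encRBTD I = p.1 ∧ I.WF ∧
    IsTreeDecomp I.graph I.td ∧ WidthLe I.td (p.2 * Nat.log 2 I.graph.n) ∧
    I.HasRBDS}

/-! ## Cliquewidth, Max Cut and Maximum Regular Induced Subgraph -/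

/-- Cliquewidth expressions with `w` labels. -/
inductive CWExpr (w : ℕ) : Type
  | vert (l : Fin w)
  | union (e₁ e₂ : CWExpr w)
  | addEdges (i j : Fin w) (e : CWExpr w)
  | relabel (i j : Fin w) (e : CWExpr w)

/-- Evaluate a cliquewidth expression to a labelled graph: a list of labels of
the vertices `0, …, len - 1`, and a list of edges. -/
def CWExpr.eval {w : ℕ} : CWExpr w → List (Fin w) × List (ℕ × ℕ)
  | .vert l => ([l], [])
  | .union e₁ e₂ =>
      let r₁ := e₁.eval
      let r₂ := e₂.eval
      (r₁.1 ++ r₂.1,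
        r₁.2 ++ r₂.2.map (fun p => (p.1 + r₁.1.length, p.2 + r₁.1.length)))
  | .addEdges i j e =>
      let r := e.eval
      if i = j then r
      else
        (r.1, r.2 ++ ((List.range r.1.length).map (fun u =>
          (List.range r.1.length).filterMap (fun v =>
            if r.1[u]? = some i ∧ r.1[v]? = some j ∧ u ≠ v then some (u, v)
            else none))).foldr (· ++ ·) [])
  | .relabel i j e =>
      let r := e.eval
      (r.1.map (fun l => if l = i then j else l), r.2)

/-- The graph `G` can be constructed by a cliquewidth expression with `w`
labels (up to isomorphism). -/
def CliquewidthLe (G : GraphInst) (w : ℕ) : Prop :=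
  ∃ e : CWExpr w, (e.eval).1.length = G.n ∧
    ∃ π : Fin G.n ≃ Fin G.n, ∀ u v : Fin G.n,
      Adj G.edges u.val v.val ↔ Adj (e.eval).2 (π u).val (π v).val

def CliquewidthEq (G : GraphInst) (w : ℕ) : Prop :=
  CliquewidthLe G w ∧ ∀ w' < w, ¬ CliquewidthLe G w'

/-- Normalized well-formedness for edge lists used in counting problems. -/
def GraphInst.WFcut (G : GraphInst) : Prop :=
  G.edges.Nodup ∧ ∀ p ∈ G.edges, p.1 < p.2 ∧ p.2 < G.n

/-- There is a partition of the vertices into two parts with at least `W`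
crossing edges. -/
def HasCutOfSize (G : GraphInst) (W : ℕ) : Prop :=
  ∃ S : Finset ℕ,
    W ≤ G.edges.countP (fun p => decide (p.1 ∈ S) != decide (p.2 ∈ S))

/-- There is an induced subgraph on at least `W` vertices that is regular. -/
def HasRegularInducedSubgraph (G : GraphInst) (W : ℕ) : Prop :=
  ∃ S : Finset ℕ, (∀ v ∈ S, v < G.n) ∧ W ≤ S.card ∧
    ∃ d : ℕ, ∀ v ∈ S, (S.filter (fun u => Adj G.edges u v)).card = d

/-- Instance of a graph problem with a numerical target. -/
structure TargetGraphInst where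
  graph : GraphInst
  target : ℕ

def encTargetGraph (I : TargetGraphInst) : List Bool :=
  encGraph I.graph ++ encNat I.target

/-- Max Cut parameterized by the cliquewidth of the input graph. -/
def MaxCutCW : ParamProblem :=
  {p | ∃ I : TargetGraphInst, encTargetGraph I = p.1 ∧ I.graph.WFcut ∧
    CliquewidthEq I.graph p.2 ∧ HasCutOfSize I.graph I.target}

/-- Maximum Regular Induced Subgraph parameterized by the cliquewidth of the
input graph. -/
def MaxRegularInducedSubgraphCW : ParamProblem :=
  {p | ∃ I : TargetGraphInst, encTargetGraph I = p.1 ∧ I.graph.WFcut ∧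
    CliquewidthEq I.graph p.2 ∧ HasRegularInducedSubgraph I.graph I.target}

/-! ### Sweep machines -/

/-- Instructions of a sweep machine with control states `Q` and column alphabet `S`:
accept, branch universally, make a non-deterministic choice that may depend on the scanned input
symbol and may move the input head, or rewrite the whole word in one left-to-right pass.
In a pass, `Φ prev last old new` decides whether the column `old` may be replaced by `new`;
`prev` is the (old, new) pair of the column to the left, `last` marks the rightmost column. -/
inductive Instr (Q S : Type) : Type
  | acc
  | fork (q₁ q₂ : Q)
  | choose (R : Option Bool → Q → Dir → Prop)
  | sweep (Φ : Option (S × S) → Bool → S → S → Prop) (q' : Q)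

/-- A sweep machine: an alternating machine whose memory is a word of fixed length `L`, only
accessed through whole-word passes. -/
structure SweepMachine where
  Q : Type
  S : Type
  finQ : Finite Q
  finS : Finite S
  start : Q
  init : S
  instr : Q → Instr Q S

/-- The (old, new) pair of columns to the left of position `i`. -/
def prv {S : Type} (w w' : ℕ → S) : ℕ → Option (S × S)
  | 0 => none
  | i + 1 => some (w i, w' i)

lemma prv_congr {S : Type} (w u v : ℕ → S) (i : ℕ) (h : ∀ j < i, u j = v j) :
    prv w u i = prv w v i := by
  cases i with
  | zero => rfl
  | succ i => simp [prv, h i (by omega)]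

/-- The word `w` can be rewritten to `w'` by one pass with local rule `Φ`. -/
def SweepRel {S : Type} (Φ : Option (S × S) → Bool → S → S → Prop) (L : ℕ)
    (w w' : ℕ → S) : Prop :=
  ∀ i < L, Φ (prv w w' i) (decide (i + 1 = L)) (w i) (w' i)

namespace SweepMachine

/-- Acceptance of a sweep machine from control state `q`, input head position `p` and word `w`. -/
inductive Acc (H : SweepMachine) (x : List Bool) (L : ℕ) : H.Q → ℤ → (ℕ → H.S) → Prop
  | acc (q p w) (hq : H.instr q = .acc) : Acc H x L q p w
  | fork (q q₁ q₂ p w) (hq : H.instr q = .fork q₁ q₂) (h₁ : Acc H x L q₁ p w)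
      (h₂ : Acc H x L q₂ p w) : Acc H x L q p w
  | choose (q R q' d p w) (hq : H.instr q = .choose R) (hR : R (inputAt x p) q' d)
      (h : Acc H x L q' (moveDir p d) w) : Acc H x L q p w
  | sweep (q Φ q' p w w') (hq : H.instr q = .sweep Φ q') (hΦ : SweepRel Φ L w w')
      (h : Acc H x L q' p w') : Acc H x L q p w

/-- Acceptance with a resource bound: at most `d` forks on a path, at most `m` other instructions
between two forks, and at most `j` of them before the first fork. -/
inductive AccB (H : SweepMachine) (x : List Bool) (L m : ℕ) :
    ℕ → ℕ → H.Q → ℤ → (ℕ → H.S) → Prop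
  | acc (d j q p w) (hq : H.instr q = .acc) : AccB H x L m d j q p w
  | fork (d j q q₁ q₂ p w) (hq : H.instr q = .fork q₁ q₂) (h₁ : AccB H x L m d m q₁ p w)
      (h₂ : AccB H x L m d m q₂ p w) : AccB H x L m (d + 1) j q p w
  | choose (d j q R q' dir p w) (hq : H.instr q = .choose R) (hR : R (inputAt x p) q' dir)
      (h : AccB H x L m d j q' (moveDir p dir) w) : AccB H x L m d (j + 1) q p w
  | sweep (d j q Φ q' p w w') (hq : H.instr q = .sweep Φ q') (hΦ : SweepRel Φ L w w')
      (h : AccB H x L m d j q' p w') : AccB H x L m d (j + 1) q p w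

lemma AccB.mono {H : SweepMachine} {x : List Bool} {L m d j q p w}
    (h : H.AccB x L m d j q p w) : ∀ d' j', d ≤ d' → j ≤ j' → H.AccB x L m d' j' q p w := by
  induction h with
  | acc d j q p w hq => intro d' j' _ _; exact .acc _ _ _ _ _ hq
  | fork d j q q₁ q₂ p w hq h₁ h₂ ih₁ ih₂ =>
    intro d' j' hd hj
    obtain ⟨d'', rfl⟩ : ∃ e, d' = e + 1 := ⟨d' - 1, by omega⟩
    exact .fork _ _ _ _ _ _ _ hq (ih₁ _ _ (by omega) le_rfl) (ih₂ _ _ (by omega) le_rfl)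
  | choose d j q R q' dir p w hq hR h ih =>
    intro d' j' hd hj
    obtain ⟨j'', rfl⟩ : ∃ e, j' = e + 1 := ⟨j' - 1, by omega⟩
    exact .choose _ _ _ _ _ _ _ _ hq hR (ih _ _ hd (by omega))
  | sweep d j q Φ q' p w w' hq hΦ h ih =>
    intro d' j' hd hj
    obtain ⟨j'', rfl⟩ : ∃ e, j' = e + 1 := ⟨j' - 1, by omega⟩
    exact .sweep _ _ _ _ _ _ _ _ hq hΦ (ih _ _ hd (by omega))

/-! ### Implementing a sweep machine by an alternating Turing machine -/

/-- Control states of the Turing machine that implements a sweep machine: laying out the word,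
being at an instruction (work head on cell `0`), being inside a pass, and returning to cell `0`. -/
inductive TSt (Q S : Type) : Type
  | alloc (b : Bool)
  | idle (q : Q)
  | sw (q : Q) (prev : Option (S × S))
  | ret (q : Q)

/-- Tape symbols: a blank, or a column together with flags marking the first and last cell. -/
abbrev TSym (S : Type) : Type := Option (Bool × Bool × S)

lemma finite_TSt (Q S : Type) [Finite Q] [Finite S] : Finite (TSt Q S) := by
  let f : TSt Q S → (Bool ⊕ Q) ⊕ ((Q × Option (S × S)) ⊕ Q)
    | .alloc b => .inl (.inl b)
    | .idle q => .inl (.inr q)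
    | .sw q p => .inr (.inl (q, p))
    | .ret q => .inr (.inr q)
  refine Finite.of_injective f ?_
  intro a b h
  cases a <;> cases b <;> simp_all [f]

variable (H : SweepMachine)

instance : Finite H.Q := H.finQ
instance : Finite H.S := H.finS
instance : Finite (TSt H.Q H.S) := finite_TSt _ _

/-- The transition relation of the implementing Turing machine. -/
def ttrans : TSt H.Q H.S → Option Bool → TSym H.S →
    (TSt H.Q H.S × TSym H.S × Dir × Dir) → Prop
  | .alloc b, _, _, tr =>
      tr = (.alloc false, some (b, false, H.init), .stay, .right) ∨
      tr = (.ret H.start, some (b, true, H.init), .stay, .stay)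
  | .idle q, σ, a, tr =>
      (∃ R q' d, H.instr q = .choose R ∧ R σ q' d ∧ tr = (.idle q', a, d, .stay)) ∨
      (∃ Φ q', H.instr q = .sweep Φ q' ∧ tr = (.sw q none, a, .stay, .stay))
  | .sw q prev, _, a, tr =>
      ∃ Φ q' f l s s', H.instr q = .sweep Φ q' ∧ a = some (f, l, s) ∧ Φ prev l s s' ∧
        ((l = true ∧ tr = (.ret q', some (f, l, s'), .stay, .stay)) ∨
         (l = false ∧ tr = (.sw q (some (s, s')), some (f, l, s'), .stay, .right)))
  | .ret q, _, a, tr =>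
      ∃ l s, (a = some (true, l, s) ∧ tr = (.idle q, a, .stay, .stay)) ∨
        (a = some (false, l, s) ∧ tr = (.ret q, a, .stay, .left))

/-- Universal control states of the implementing Turing machine. -/
def tuniv (st : TSt H.Q H.S) : Prop := ∃ q q₁ q₂, st = .idle q ∧ H.instr q = .fork q₁ q₂

/-- The two successor states of a universal control state. -/
def tfork : TSt H.Q H.S → TSt H.Q H.S × TSt H.Q H.S
  | .idle q =>
    match H.instr q with
    | .fork q₁ q₂ => (.idle q₁, .idle q₂)
    | _ => (.idle q, .idle q)
  | st => (st, st)

noncomputable def eSt : TSt H.Q H.S ≃ Fin (Nat.card (TSt H.Q H.S)) := Finite.equivFin _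
noncomputable def eSym : TSym H.S ≃ Fin (Nat.card (TSym H.S)) := Finite.equivFin _

/-- The alternating Turing machine implementing the sweep machine `H`. -/
noncomputable def toATM : ATM where
  states := Nat.card (TSt H.Q H.S)
  syms := Nat.card (TSym H.S)
  start := H.eSt (.alloc true)
  accept := fun s => ∃ q, H.eSt.symm s = .idle q ∧ H.instr q = .acc
  univ := fun s => H.tuniv (H.eSt.symm s)
  blank := H.eSym none
  trans := fun s σ a tr => H.ttrans (H.eSt.symm s) σ (H.eSym.symm a)
    (H.eSt.symm tr.1, H.eSym.symm tr.2.1, tr.2.2)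
  utrans := fun s _ a =>
    ((H.eSt (H.tfork (H.eSt.symm s)).1, a, .stay, .stay),
     (H.eSt (H.tfork (H.eSt.symm s)).2, a, .stay, .stay))

/-- The configuration of `H.toATM` with the given typed data. -/
noncomputable def cfg (st : TSt H.Q H.S) (p : ℤ) (tape : ℤ → TSym H.S) (i : ℤ) : H.toATM.Cfg :=
  ⟨H.eSt st, p, fun z => H.eSym (tape z), i⟩

/-- The tape holding the word `w` of length `L`. -/
def encT (L : ℕ) (w : ℕ → H.S) : ℤ → TSym H.S := fun z =>
  if 0 ≤ z ∧ z < L then some (decide (z = 0), decide (z + 1 = L), w z.toNat) else none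

/-- The tape after `i` cells have been laid out without closing the word. -/
def allocT (i : ℕ) : ℤ → TSym H.S := fun z =>
  if 0 ≤ z ∧ z < i then some (decide (z = 0), false, H.init) else none

lemma applyTr_cfg (st p tape i st' a di dw) :
    H.toATM.applyTr (H.cfg st p tape i) (H.eSt st', H.eSym a, di, dw) =
      H.cfg st' (moveDir p di) (Function.update tape i a) (moveDir i dw) := by
  simp only [ATM.applyTr, cfg]
  congr 1
  funext z
  by_cases hz : z = i
  · subst hz
    rw [Function.update_self]
    exact Function.update_self _ _ _
  · rw [Function.update_of_ne hz]
    exact Function.update_of_ne hz _ _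

lemma cfg_inj {st p tape i st' p' tape' i'}
    (h : H.cfg st p tape i = H.cfg st' p' tape' i') :
    st = st' ∧ p = p' ∧ tape = tape' ∧ i = i' := by
  refine ⟨H.eSt.injective (congrArg ATM.Cfg.state h), congrArg ATM.Cfg.ipos h, ?_,
    congrArg ATM.Cfg.wpos h⟩
  funext z
  exact H.eSym.injective (congrFun (congrArg ATM.Cfg.tape h) z)

lemma encT_congr {L : ℕ} {w w' : ℕ → H.S} (h : ∀ i < L, w i = w' i) :
    H.encT L w = H.encT L w' := by
  funext z
  simp only [encT]
  split_ifs with hz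
  · rw [h z.toNat (by omega)]
  · rfl

lemma encT_apply {L : ℕ} (w : ℕ → H.S) {i : ℕ} (hi : i < L) :
    H.encT L w i = some (decide (i = 0), decide (i + 1 = L), w i) := by
  have h1 : (0 : ℤ) ≤ (i : ℤ) ∧ (i : ℤ) < L := by omega
  have h2 : ((i : ℤ) + 1 = L) ↔ i + 1 = L := by omega
  simp [encT, h1, h2]

lemma encT_update {L : ℕ} (w : ℕ → H.S) {i : ℕ} (hi : i < L) (s : H.S) :
    Function.update (H.encT L w) i (some (decide (i = 0), decide (i + 1 = L), s)) =
      H.encT L (Function.update w i s) := by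
  funext z
  by_cases hz : z = i
  · subst hz
    rw [Function.update_self, encT_apply _ _ hi]; simp
  · rw [Function.update_of_ne hz]
    simp only [encT]
    split_ifs with h
    · rw [Function.update_of_ne (by omega)]
    · rfl

lemma allocT_close (i : ℕ) :
    Function.update (H.allocT i) i (some (decide (i = 0), true, H.init)) =
      H.encT (i + 1) (fun _ => H.init) := by
  funext z
  by_cases hz : z = i
  · subst hz
    have : (0 : ℤ) ≤ (i : ℤ) ∧ (i : ℤ) < ((i + 1 : ℕ) : ℤ) := by omega
    rw [Function.update_self]
    simp [encT]
  · rw [Function.update_of_ne hz]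
    simp only [encT, allocT]
    by_cases h : 0 ≤ z ∧ z < i
    · have h' : 0 ≤ z ∧ z < ((i + 1 : ℕ) : ℤ) := by omega
      have h2 : ¬ (z + 1 = ((i + 1 : ℕ) : ℤ)) := by omega
      rw [if_pos h, if_pos h', decide_eq_false h2]
    · have h' : ¬ (0 ≤ z ∧ z < ((i + 1 : ℕ) : ℤ)) := by omega
      rw [if_neg h, if_neg h']

lemma allocT_extend (i : ℕ) :
    Function.update (H.allocT i) i (some (decide (i = 0), false, H.init)) = H.allocT (i + 1) := by
  funext z
  by_cases hz : z = i
  · subst hz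
    have : (0 : ℤ) ≤ (i : ℤ) ∧ (i : ℤ) < ((i + 1 : ℕ) : ℤ) := by omega
    rw [Function.update_self]
    simp [allocT]
  · rw [Function.update_of_ne hz]
    simp only [allocT]
    by_cases h : 0 ≤ z ∧ z < i
    · have h' : 0 ≤ z ∧ z < ((i + 1 : ℕ) : ℤ) := by omega
      rw [if_pos h, if_pos h']
    · have h' : ¬ (0 ≤ z ∧ z < ((i + 1 : ℕ) : ℤ)) := by omega
      rw [if_neg h, if_neg h']

lemma init_eq : H.toATM.init = H.cfg (.alloc true) 0 (H.allocT 0) 0 := by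
  simp only [ATM.init, cfg, toATM]
  congr 1
  funext z
  have : ¬ (0 ≤ z ∧ z < ((0 : ℕ) : ℤ)) := by omega
  rw [allocT, if_neg this]

end SweepMachine

namespace SweepMachine
variable (H : SweepMachine)

lemma typed_step {x : List Bool} {st p tape} {i : ℤ} {tr} {c'}
    (htr : H.toATM.trans (H.cfg st p tape i).state (inputAt x (H.cfg st p tape i).ipos)
      ((H.cfg st p tape i).tape (H.cfg st p tape i).wpos) tr)
    (hr : c' = H.toATM.applyTr (H.cfg st p tape i) tr) :
    ∃ st' a di dw, H.ttrans st (inputAt x p) (tape i) (st', a, di, dw) ∧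
      c' = H.cfg st' (moveDir p di) (Function.update tape i a) (moveDir i dw) := by
  obtain ⟨s', a', di, dw⟩ := tr
  obtain ⟨s0, rfl⟩ := H.eSt.surjective s'
  obtain ⟨a0, rfl⟩ := H.eSym.surjective a'
  exact ⟨s0, a0, di, dw, by simpa [toATM, cfg] using htr, by rw [hr]; exact H.applyTr_cfg ..⟩

/-- Accepting computation trees of the implementing Turing machine yield acceptance of the sweep
machine; the four parts describe the possible kinds of root configurations. -/
lemma sound_aux (x : List Bool) (s : ℕ) (t : CTree H.toATM.Cfg)
    (hv : H.toATM.ValidTree x t) (hf : t.Forall (H.toATM.CfgOk s)) :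
    (∀ L q p w, 1 ≤ L → t.root = H.cfg (.idle q) p (H.encT L w) 0 → H.Acc x L q p w) ∧
    (∀ L q p w (i : ℕ), i < L → t.root = H.cfg (.ret q) p (H.encT L w) i → H.Acc x L q p w) ∧
    (∀ L q Φ q' p w u (i : ℕ), i < L → H.instr q = .sweep Φ q' →
      t.root = H.cfg (.sw q (prv w u i)) p (H.encT L (fun j => if j < i then u j else w j)) i →
      ∃ w', (∀ j < i, w' j = u j) ∧
        (∀ j, i ≤ j → j < L → Φ (prv w w' j) (decide (j + 1 = L)) (w j) (w' j)) ∧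
        H.Acc x L q' p w') ∧
    (∀ i : ℕ, t.root = H.cfg (.alloc (decide (i = 0))) 0 (H.allocT i) i →
      ∃ L, 1 ≤ L ∧ L ≤ s ∧ H.Acc x L H.start 0 (fun _ => H.init)) := by
  induction hv with
  | leaf c h =>
    obtain ⟨q₀, hq₀, hacc⟩ := h
    refine ⟨?_, ?_, ?_, ?_⟩
    · rintro L q p w hL rfl
      simp [cfg] at hq₀
      subst hq₀
      exact .acc _ _ _ hacc
    · rintro L q p w i hi rfl
      simp [cfg] at hq₀
    · rintro L q Φ q' p w u i hi hq rfl
      simp [cfg] at hq₀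
    · rintro i rfl
      simp [cfg] at hq₀
  | estep c tr t hne htr hroot ht ih =>
    obtain ⟨hc, hf⟩ := hf
    obtain ⟨ih1, ih2, ih3, ih4⟩ := ih hf
    refine ⟨?_, ?_, ?_, ?_⟩
    · rintro L q p w hL rfl
      obtain ⟨st', a, di, dw, h1, h2⟩ := H.typed_step htr hroot
      rcases h1 with ⟨R, q', d, hq, hR, he⟩ | ⟨Φ, q', hq, he⟩
      · simp only [Prod.mk.injEq] at he
        obtain ⟨rfl, rfl, rfl, rfl⟩ := he
        rw [Function.update_eq_self] at h2
        exact .choose _ _ _ _ _ _ hq hR (ih1 _ _ _ _ hL h2)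
      · simp only [Prod.mk.injEq] at he
        obtain ⟨rfl, rfl, rfl, rfl⟩ := he
        rw [Function.update_eq_self] at h2
        obtain ⟨w', _, hw', hacc⟩ := ih3 L q Φ q' p w w 0 hL hq (by simpa [prv, moveDir] using h2)
        exact .sweep _ _ _ _ _ _ hq (fun j hj => hw' j (Nat.zero_le _) hj) hacc
    · rintro L q p w i hi rfl
      obtain ⟨st', a, di, dw, h1, h2⟩ := H.typed_step htr hroot
      rcases h1 with ⟨l, s, ⟨ha, he⟩ | ⟨ha, he⟩⟩
      · simp only [Prod.mk.injEq] at he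
        obtain ⟨rfl, rfl, rfl, rfl⟩ := he
        rw [Function.update_eq_self] at h2
        rw [encT_apply _ _ hi] at ha
        simp only [Option.some.injEq, Prod.mk.injEq, decide_eq_true_eq] at ha
        obtain ⟨rfl, -⟩ := ha
        exact ih1 _ _ _ _ (by omega) h2
      · simp only [Prod.mk.injEq] at he
        obtain ⟨rfl, rfl, rfl, rfl⟩ := he
        rw [Function.update_eq_self] at h2
        rw [encT_apply _ _ hi] at ha
        simp only [Option.some.injEq, Prod.mk.injEq, decide_eq_false_iff_not] at ha
        refine ih2 _ _ _ _ (i - 1) (by omega) ?_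
        rw [h2]
        congr 1
        simp only [moveDir]
        omega
    · rintro L q Φ q' p w u i hi hq rfl
      obtain ⟨st', a, di, dw, h1, h2⟩ := H.typed_step htr hroot
      obtain ⟨Φ₁, q₁, f, l, s, s', hq₁, ha, hΦ, h1⟩ := h1
      rw [hq] at hq₁
      simp only [Instr.sweep.injEq] at hq₁
      obtain ⟨rfl, rfl⟩ := hq₁
      rw [encT_apply _ _ hi] at ha
      simp only [Option.some.injEq, Prod.mk.injEq, lt_irrefl, if_false] at ha
      obtain ⟨rfl, rfl, rfl⟩ := ha
      -- the rewritten prefix, including the current column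
      have hword : (Function.update (fun j => if j < i then u j else w j) i s') =
          fun j => if j < i + 1 then Function.update u i s' j else w j := by
        funext j
        by_cases hj : j = i
        · subst hj; simp
        · rw [Function.update_of_ne hj]
          by_cases hj' : j < i
          · simp [hj', Function.update_of_ne hj, Nat.lt_succ_of_lt hj']
          · have : ¬ j < i + 1 := by omega
            simp [hj', this]
      have hpu : prv w u i = prv w (Function.update u i s') i :=
        prv_congr _ _ _ _ (fun j hj => by rw [Function.update_of_ne (by omega)])
      rcases h1 with ⟨hl, he⟩ | ⟨hl, he⟩
      · simp only [Prod.mk.injEq] at he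
        obtain ⟨rfl, rfl, rfl, rfl⟩ := he
        rw [encT_update _ _ hi, hword] at h2
        have hiL : i + 1 = L := by simpa using hl
        refine ⟨Function.update u i s', fun j hj => Function.update_of_ne (by omega) _ _, ?_, ?_⟩
        · intro j hj1 hj2
          have : j = i := by omega
          subst this
          rw [← hpu]
          simpa using hΦ
        · refine ih2 L q' p _ i hi ?_
          rw [h2, H.encT_congr (w' := Function.update u i s')]
          · rfl
          · intro j hj
            simp [show j < i + 1 by omega]
      · simp only [Prod.mk.injEq] at he
        obtain ⟨rfl, rfl, rfl, rfl⟩ := he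
        rw [encT_update _ _ hi, hword] at h2
        have hiL : ¬ i + 1 = L := by simpa using hl
        obtain ⟨w', hw1, hw2, hw3⟩ := ih3 L q Φ q' p w (Function.update u i s') (i + 1)
          (by omega) hq (by rw [h2]; simp [prv, moveDir])
        have hw1' : ∀ j < i, w' j = u j := fun j hj => by
          rw [hw1 j (by omega), Function.update_of_ne (by omega)]
        refine ⟨w', hw1', ?_, hw3⟩
        intro j hj1 hj2
        rcases Nat.lt_or_ge i j with h | h
        · exact hw2 j h hj2
        · have : j = i := by omega
          subst this
          rw [← prv_congr w u w' j (fun k hk => (hw1' k hk).symm), hw1 j (by omega)]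
          simpa using hΦ
    · rintro i rfl
      obtain ⟨st', a, di, dw, h1, h2⟩ := H.typed_step htr hroot
      rcases h1 with he | he
      · simp only [Prod.mk.injEq] at he
        obtain ⟨rfl, rfl, rfl, rfl⟩ := he
        rw [allocT_extend] at h2
        exact ih4 (i + 1) (by rw [h2]; simp [moveDir])
      · simp only [Prod.mk.injEq] at he
        obtain ⟨rfl, rfl, rfl, rfl⟩ := he
        rw [allocT_close] at h2
        have hi : (i : ℤ) < s := hc.2.1
        exact ⟨i + 1, by omega, by omega, ih2 _ _ _ _ i (by omega) h2⟩
  | ustep c l r hu hl hr hlv hrv ihl ihr =>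
    obtain ⟨hc, hfl, hfr⟩ := hf
    obtain ⟨ihl, -⟩ := ihl hfl
    obtain ⟨ihr, -⟩ := ihr hfr
    obtain ⟨q₀, q₁, q₂, hq₀, hq⟩ := hu
    refine ⟨?_, ?_, ?_, ?_⟩
    · rintro L q p w hL rfl
      have : q = q₀ := by simpa [cfg] using hq₀
      subst this
      have key : ∀ st : TSt H.Q H.S, H.toATM.applyTr (H.cfg (.idle q) p (H.encT L w) 0)
          (H.eSt st, H.eSym (H.encT L w 0), .stay, .stay) = H.cfg st p (H.encT L w) 0 := by
        intro st
        rw [applyTr_cfg, Function.update_eq_self]; rfl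
      refine .fork _ _ _ _ _ hq (ihl L q₁ p w hL ?_) (ihr L q₂ p w hL ?_)
      · rw [hl, ← key (.idle q₁)]
        simp [toATM, tfork, hq, cfg]
      · rw [hr, ← key (.idle q₂)]
        simp [toATM, tfork, hq, cfg]
    · rintro L q p w i hi rfl
      simp [cfg] at hq₀
    · rintro L q Φ q' p w u i hi hq rfl
      simp [cfg] at hq₀
    · rintro i rfl
      simp [cfg] at hq₀

lemma sound (x : List Bool) (s : ℕ) (t : CTree H.toATM.Cfg) (hroot : t.root = H.toATM.init)
    (hv : H.toATM.ValidTree x t) (hf : t.Forall (H.toATM.CfgOk s)) :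
    ∃ L, 1 ≤ L ∧ L ≤ s ∧ H.Acc x L H.start 0 (fun _ => H.init) :=
  (H.sound_aux x s t hv hf).2.2.2 0 (by rw [hroot, init_eq]; rfl)

/-- `H.TAcc x s m d j c`: the Turing machine has an accepting tree rooted at `c` in space `s` which
is a subdivided binary tree of depth `d` with subdivision bound `m` (and `j` before the first
branching). -/
def TAcc (x : List Bool) (s m d j : ℕ) (c : H.toATM.Cfg) : Prop :=
  ∃ t : CTree H.toATM.Cfg, t.root = c ∧ H.toATM.ValidTree x t ∧
    t.Forall (H.toATM.CfgOk s) ∧ SubdivShape m d j t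

end SweepMachine

lemma SubdivShape.mono {α : Type} {m d j : ℕ} {t : CTree α} (h : SubdivShape m d j t) :
    ∀ m' d' j', m ≤ m' → d ≤ d' → j ≤ j' → SubdivShape m' d' j' t := by
  induction h with
  | leaf d j a => intro m' d' j' _ _ _; exact .leaf _ _ _
  | branch d j a l r hl hr ihl ihr =>
    intro m' d' j' hm hd hj
    obtain ⟨d'', rfl⟩ : ∃ e, d' = e + 1 := ⟨d' - 1, by omega⟩
    exact .branch _ _ _ _ _ (ihl _ _ _ hm (by omega) hm) (ihr _ _ _ hm (by omega) hm)
  | unary d j a t h ih =>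
    intro m' d' j' hm hd hj
    obtain ⟨j'', rfl⟩ : ∃ e, j' = e + 1 := ⟨j' - 1, by omega⟩
    exact .unary _ _ _ _ (ih _ _ _ hm hd (by omega))

namespace SweepMachine
variable {H : SweepMachine} {x : List Bool} {s m d j : ℕ}

lemma TAcc.mono {c} (h : H.TAcc x s m d j c) {j'} (hj : j ≤ j') : H.TAcc x s m d j' c := by
  obtain ⟨t, h1, h2, h3, h4⟩ := h
  exact ⟨t, h1, h2, h3, h4.mono _ _ _ le_rfl le_rfl hj⟩

lemma TAcc.step {st p tape} {i : ℤ} {st' a di dw}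
    (hne : ¬ H.tuniv st) (htr : H.ttrans st (inputAt x p) (tape i) (st', a, di, dw))
    (hok : H.toATM.CfgOk s (H.cfg st p tape i))
    (h : H.TAcc x s m d j
      (H.cfg st' (moveDir p di) (Function.update tape i a) (moveDir i dw))) :
    H.TAcc x s m d (j + 1) (H.cfg st p tape i) := by
  obtain ⟨t, h1, h2, h3, h4⟩ := h
  refine ⟨.node1 (H.cfg st p tape i) t, rfl, ?_, ⟨hok, h3⟩, .unary _ _ _ _ h4⟩
  refine .estep _ (H.eSt st', H.eSym a, di, dw) _ ?_ ?_ ?_ h2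
  · simpa [toATM, cfg] using hne
  · simpa [toATM, cfg] using htr
  · rw [h1, applyTr_cfg]

lemma cfgOk_encT {L : ℕ} (hL : L ≤ s) (st p w) {i : ℕ} (hi : i < L) :
    H.toATM.CfgOk s (H.cfg st p (H.encT L w) i) := by
  refine ⟨by simp [cfg], by simp [cfg]; omega, ?_⟩
  intro z hz
  have : ¬ (0 ≤ z ∧ z < (L : ℤ)) := by omega
  simp [cfg, encT, this, toATM]

lemma TAcc.ret {L : ℕ} (hL : L ≤ s) {q p w} (h : H.TAcc x s m d j (H.cfg (.idle q) p (H.encT L w) 0))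
    (i : ℕ) (hi : i < L) : H.TAcc x s m d (j + (i + 1)) (H.cfg (.ret q) p (H.encT L w) i) := by
  induction i with
  | zero =>
    refine TAcc.step (st' := .idle q) (a := H.encT L w ((0 : ℕ) : ℤ)) (di := .stay) (dw := .stay)
      (by simp [tuniv]) ?_ (cfgOk_encT hL _ _ _ hi) ?_
    · refine ⟨decide (0 + 1 = L), w 0, .inl ⟨?_, rfl⟩⟩
      rw [encT_apply _ _ hi]; rfl
    · rw [Function.update_eq_self]
      exact h
  | succ i ih =>
    refine TAcc.step (st' := .ret q) (a := H.encT L w ((i + 1 : ℕ) : ℤ)) (di := .stay)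
      (dw := .left) (by simp [tuniv]) ?_ (cfgOk_encT hL _ _ _ hi) ?_
    · refine ⟨decide (i + 1 + 1 = L), w (i + 1), .inr ⟨?_, rfl⟩⟩
      rw [encT_apply _ _ hi]; simp
    · rw [Function.update_eq_self]
      have : moveDir ((i + 1 : ℕ) : ℤ) .left = i := by simp [moveDir]
      rw [this]
      exact ih (by omega)

lemma TAcc.sw {L : ℕ} (hL : L ≤ s) {q Φ q' p w w'} (hq : H.instr q = .sweep Φ q')
    (hΦ : SweepRel Φ L w w')
    (h : H.TAcc x s m d j (H.cfg (.idle q') p (H.encT L w') 0))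
    (k i : ℕ) (hi : i + (k + 1) = L) :
    H.TAcc x s m d (j + L + (k + 1))
      (H.cfg (.sw q (prv w w' i)) p (H.encT L (fun j => if j < i then w' j else w j)) i) := by
  induction k generalizing i with
  | zero =>
    refine TAcc.step (st' := .ret q') (a := some (decide (i = 0), decide (i + 1 = L), w' i))
      (di := .stay) (dw := .stay) (by simp [tuniv]) ?_ (cfgOk_encT hL _ _ _ (by omega)) ?_
    · refine ⟨Φ, q', _, _, w i, w' i, hq, ?_, hΦ i (by omega), .inl ⟨by simp; omega, rfl⟩⟩
      rw [encT_apply _ _ (by omega)]; simp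
    · rw [encT_update _ _ (by omega), H.encT_congr (w' := w')]
      · refine (TAcc.ret hL h i (by omega)).mono (by omega)
      · intro n hn
        by_cases hni : n = i
        · subst hni; simp
        · rw [Function.update_of_ne hni]
          simp [show n < i by omega]
  | succ k ih =>
    refine TAcc.step (st' := .sw q (some (w i, w' i)))
      (a := some (decide (i = 0), decide (i + 1 = L), w' i))
      (di := .stay) (dw := .right) (by simp [tuniv]) ?_ (cfgOk_encT hL _ _ _ (by omega)) ?_
    · refine ⟨Φ, q', _, _, w i, w' i, hq, ?_, hΦ i (by omega), .inr ⟨by simp; omega, rfl⟩⟩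
      rw [encT_apply _ _ (by omega)]; simp
    · rw [encT_update _ _ (by omega),
        H.encT_congr (w' := fun n => if n < i + 1 then w' n else w n)]
      · exact ih (i + 1) (by omega)
      · intro n hn
        by_cases hni : n = i
        · subst hni; simp
        · rw [Function.update_of_ne hni]
          by_cases hn' : n < i
          · simp [hn', show n < i + 1 by omega]
          · simp [hn', show ¬ n < i + 1 by omega]

/-- Every instruction of the sweep machine costs at most `2 * L + 1` Turing machine steps. -/
lemma AccB.toTAcc {L q p w} (hL : L ≤ s) (hL1 : 1 ≤ L) (h : H.AccB x L m d j q p w) :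
    H.TAcc x s ((2 * L + 1) * m) d ((2 * L + 1) * j) (H.cfg (.idle q) p (H.encT L w) 0) := by
  induction h with
  | acc d j q p w hq =>
    refine ⟨.leaf _, rfl, .leaf _ ⟨q, by simp, hq⟩, cfgOk_encT (i := 0) hL _ _ _ hL1,
      .leaf _ _ _⟩
  | fork d j q q₁ q₂ p w hq h₁ h₂ ih₁ ih₂ =>
    obtain ⟨l, l1, l2, l3, l4⟩ := ih₁
    obtain ⟨r, r1, r2, r3, r4⟩ := ih₂
    have key : ∀ st : TSt H.Q H.S, H.toATM.applyTr (H.cfg (.idle q) p (H.encT L w) 0)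
        (H.eSt st, H.eSym (H.encT L w 0), .stay, .stay) = H.cfg st p (H.encT L w) 0 := by
      intro st
      rw [applyTr_cfg, Function.update_eq_self]; rfl
    refine ⟨.node2 (H.cfg (.idle q) p (H.encT L w) 0) l r, rfl, ?_,
      ⟨cfgOk_encT (i := 0) hL _ _ _ hL1, l3, r3⟩, .branch _ _ _ _ _ l4 r4⟩
    refine .ustep _ _ _ ⟨q, q₁, q₂, by simp [cfg], hq⟩ ?_ ?_ l2 r2
    · rw [l1, ← key (.idle q₁)]
      simp [toATM, tfork, hq, cfg]
    · rw [r1, ← key (.idle q₂)]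
      simp [toATM, tfork, hq, cfg]
  | choose d j q R q' dir p w hq hR h ih =>
    refine TAcc.mono (j := (2 * L + 1) * j + 1) ?_ (by ring_nf; omega)
    refine TAcc.step (st' := .idle q') (a := H.encT L w 0) (di := dir) (dw := .stay)
      (by simp [tuniv, hq]) (.inl ⟨R, q', dir, hq, hR, rfl⟩) (cfgOk_encT (i := 0) hL _ _ _ hL1) ?_
    rw [Function.update_eq_self]
    exact ih
  | sweep d j q Φ q' p w w' hq hΦ h ih =>
    refine TAcc.mono (j := ((2 * L + 1) * j + L + (L - 1 + 1)) + 1) ?_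
      (by rw [show L - 1 + 1 = L by omega]; ring_nf; omega)
    refine TAcc.step (st' := .sw q none) (a := H.encT L w 0) (di := .stay) (dw := .stay)
      (by simp [tuniv, hq]) (.inr ⟨Φ, q', hq, rfl⟩) (cfgOk_encT (i := 0) hL _ _ _ hL1) ?_
    rw [Function.update_eq_self]
    have := TAcc.sw hL hq hΦ ih (L - 1) 0 (by omega)
    simpa [prv, moveDir] using this

lemma TAcc.alloc {L : ℕ} (hL : L ≤ s)
    (h : H.TAcc x s m d j (H.cfg (.idle H.start) 0 (H.encT L (fun _ => H.init)) 0))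
    (k i : ℕ) (hi : i + (k + 1) = L) :
    H.TAcc x s m d (j + L + (k + 1)) (H.cfg (.alloc (decide (i = 0))) 0 (H.allocT i) i) := by
  have hok : H.toATM.CfgOk s (H.cfg (.alloc (decide (i = 0))) 0 (H.allocT i) i) := by
    refine ⟨by simp [cfg], by simp [cfg]; omega, ?_⟩
    intro z hz
    have : ¬ (0 ≤ z ∧ z < (i : ℤ)) := by omega
    simp [cfg, allocT, this, toATM]
  induction k generalizing i with
  | zero =>
    refine TAcc.step (by simp [tuniv]) (.inr rfl) hok ?_
    rw [allocT_close, show i + 1 = L by omega]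
    exact (TAcc.ret hL h i (by omega)).mono (by omega)
  | succ k ih =>
    refine TAcc.step (by simp [tuniv]) (.inl rfl) hok ?_
    rw [allocT_extend]
    have := ih (i + 1) (by omega) (by
      refine ⟨by simp [cfg]; omega, by simp [cfg]; omega, ?_⟩
      intro z hz
      have : ¬ (0 ≤ z ∧ z < ((i + 1 : ℕ) : ℤ)) := by omega
      simp only [cfg, allocT, if_neg this, toATM])
    simpa [moveDir] using this

lemma complete {L : ℕ} (hL : L ≤ s) (hL1 : 1 ≤ L)
    (h : H.AccB x L m d m H.start 0 (fun _ => H.init)) :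
    ∃ t : CTree H.toATM.Cfg, t.root = H.toATM.init ∧ H.toATM.ValidTree x t ∧
      t.Forall (H.toATM.CfgOk s) ∧ IsSubdividedBinaryTree d ((2 * L + 1) * (m + 1)) t := by
  obtain ⟨t, h1, h2, h3, h4⟩ := TAcc.alloc hL (h.toTAcc hL hL1) (L - 1) 0 (by omega)
  refine ⟨t, by rw [h1, init_eq]; rfl, h2, h3, h4.mono _ _ _ ?_ le_rfl ?_⟩
  · exact Nat.mul_le_mul le_rfl (by omega)
  · rw [show L - 1 + 1 = L by omega]; ring_nf; omega

end SweepMachine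

/-! ### Mixed-radix arithmetic with local carries -/

/-- The weight of position `i` in the mixed-radix system with bases `b`. -/
def wt (b : ℕ → ℕ) (i : ℕ) : ℕ := ∏ j ∈ Finset.range i, b j

/-- The value of a word `d` of length `L`; the entries need not be smaller than the bases. -/
def val (b d : ℕ → ℕ) (L : ℕ) : ℕ := ∑ i ∈ Finset.range L, d i * wt b i

/-- The digits of `N`. -/
def dig (b : ℕ → ℕ) (N i : ℕ) : ℕ := N / wt b i % b i

/-- The carry entering position `i` when `c j` is the carry leaving position `j`. -/
def cin (c : ℕ → ℕ) : ℕ → ℕ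
  | 0 => 0
  | i + 1 => c i

lemma wt_zero (b) : wt b 0 = 1 := by simp [wt]
lemma wt_succ (b i) : wt b (i + 1) = wt b i * b i := by simp [wt, Finset.prod_range_succ]
lemma val_zero (b d) : val b d 0 = 0 := by simp [val]
lemma val_succ (b d L) : val b d (L + 1) = val b d L + d L * wt b L := by
  simp [val, Finset.sum_range_succ]

lemma wt_pos {b : ℕ → ℕ} (hb : ∀ i, 0 < b i) (i : ℕ) : 0 < wt b i :=
  Finset.prod_pos fun j _ => hb j

lemma wt_const (β i : ℕ) : wt (fun _ => β) i = β ^ i := by simp [wt]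

lemma val_add (b d e L) : val b (fun i => d i + e i) L = val b d L + val b e L := by
  simp [val, add_mul, Finset.sum_add_distrib]

lemma val_congr {b d e : ℕ → ℕ} {L : ℕ} (h : ∀ i < L, d i = e i) : val b d L = val b e L :=
  Finset.sum_congr rfl fun i hi => by rw [h i (Finset.mem_range.1 hi)]

lemma val_first (b : ℕ → ℕ) {L : ℕ} (hL : 0 < L) (m : ℕ) :
    val b (fun i => if i = 0 then m else 0) L = m := by
  simp [val, ite_mul, wt_zero, hL]

lemma val_null (b : ℕ → ℕ) (L : ℕ) : val b (fun _ => 0) L = 0 := by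
  simp [val]

lemma carry_sum {a b c d : ℕ → ℕ} {L : ℕ} (h : ∀ i < L, a i + cin c i = d i + b i * c i) :
    val b a L = val b d L + wt b L * cin c L := by
  induction L with
  | zero => simp [val_zero, cin]
  | succ n ih =>
    have h1 := ih fun i hi => h i (by omega)
    have h2 := h n (by omega)
    rw [val_succ, val_succ, wt_succ, h1]
    rw [show cin c (n + 1) = c n from rfl]
    have : wt b n * cin c n + a n * wt b n = wt b n * (d n + b n * c n) := by rw [← h2]; ring
    linarith [this, mul_add (wt b n) (d n) (b n * c n), mul_assoc (wt b n) (b n) (c n)]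

lemma val_lt {b d : ℕ → ℕ} {L : ℕ} (h : ∀ i < L, d i < b i) : val b d L < wt b L := by
  induction L with
  | zero => simp [val_zero, wt_zero]
  | succ n ih =>
    have h1 := ih fun i hi => h i (by omega)
    have h2 := h n (by omega)
    rw [val_succ, wt_succ]
    calc val b d n + d n * wt b n < wt b n + d n * wt b n := by omega
      _ = wt b n * (d n + 1) := by ring
      _ ≤ wt b n * b n := Nat.mul_le_mul_left _ h2

lemma dig_lt {b : ℕ → ℕ} (hb : ∀ i, 0 < b i) (N i : ℕ) : dig b N i < b i :=
  Nat.mod_lt _ (hb i)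

lemma val_dig {b : ℕ → ℕ} {L N : ℕ} (h : N < wt b L) :
    val b (dig b N) L = N := by
  have : ∀ n, val b (dig b N) n = N % wt b n := by
    intro n
    induction n with
    | zero => simp [val_zero, wt_zero, Nat.mod_one]
    | succ n ih => rw [val_succ, ih, wt_succ, Nat.mod_mul, dig]; ring
  rw [this, Nat.mod_eq_of_lt h]

lemma dig_zero (b : ℕ → ℕ) (i : ℕ) : dig b 0 i = 0 := by simp [dig]

/-- Carries exist for adding digit columns whose total is `N`: the carry leaving position `i` is
the part of the partial sum up to `i` that exceeds the weight of position `i + 1`. -/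
lemma exists_carry {a b : ℕ → ℕ} {L K N : ℕ} (hb : ∀ i, 0 < b i) (hK : 0 < K)
    (ha : ∀ i, a i ≤ K * (b i - 1)) (hN : val b a L = N) (hlt : N < wt b L) :
    ∃ c : ℕ → ℕ, (∀ i, c i < K) ∧ (∀ i < L, a i + cin c i = dig b N i + b i * c i) ∧
      cin c L = 0 := by
  have hcin : ∀ i, cin (fun i => val b a (i + 1) / wt b (i + 1)) i = val b a i / wt b i := by
    intro i
    cases i <;> simp [cin, val_zero]
  refine ⟨fun i => val b a (i + 1) / wt b (i + 1), ?_, ?_, ?_⟩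
  · have hbd : ∀ n, val b a n + K ≤ K * wt b n := by
      intro n
      induction n with
      | zero => simp [val_zero, wt_zero]
      | succ n ih =>
        rw [val_succ, wt_succ]
        obtain ⟨e, he⟩ : ∃ e, b n = e + 1 := ⟨b n - 1, by have := hb n; omega⟩
        have h1 : a n ≤ K * e := by have := ha n; rwa [he, Nat.add_sub_cancel] at this
        have h2 : a n * wt b n ≤ K * e * wt b n := Nat.mul_le_mul_right _ h1
        rw [he]
        calc val b a n + a n * wt b n + K ≤ K * wt b n + K * e * wt b n := by omega
          _ = K * (wt b n * (e + 1)) := by ring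
    intro i
    rw [Nat.div_lt_iff_lt_mul (wt_pos hb _)]
    have := hbd (i + 1)
    omega
  · intro i hi
    rw [hcin]
    have hW := wt_pos hb i
    have h1 : val b a (i + 1) / wt b i = val b a i / wt b i + a i := by
      rw [val_succ, Nat.add_mul_div_right _ _ hW]
    have h2 : ∀ n, i + 1 ≤ n → ∃ R, val b a n = val b a (i + 1) + wt b (i + 1) * R := by
      intro n hn
      induction n, hn using Nat.le_induction with
      | base => exact ⟨0, by simp⟩
      | succ n hn ih =>
        obtain ⟨R, hR⟩ := ih
        have : wt b (i + 1) ∣ wt b n :=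
          Finset.prod_dvd_prod_of_subset _ _ _ (Finset.range_mono hn)
        obtain ⟨e, he⟩ := this
        exact ⟨R + a n * e, by rw [val_succ, hR, he]; ring⟩
    obtain ⟨R, hR⟩ := h2 L hi
    have h3 : N / wt b i = val b a (i + 1) / wt b i + b i * R := by
      rw [← hN, hR, wt_succ, mul_assoc, Nat.add_mul_div_left _ _ hW]
    have h4 : val b a (i + 1) / wt b (i + 1) = val b a (i + 1) / wt b i / b i := by
      rw [wt_succ, Nat.div_div_eq_div_mul]
    beta_reduce
    rw [dig, h3, Nat.add_mul_mod_self_left, h4, h1, Nat.mod_add_div, add_comm]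
  · rw [hcin, hN, Nat.div_eq_of_lt hlt]

/-! ### The simulating sweep machine -/

/-- Transitions of `M`. -/
abbrev Tr (M : ATM) : Type := Fin M.states × Fin M.syms × Dir × Dir

/-- Names of the stored configurations: the current one `A`, the hole `B`, the guessed split
point `V` and its successors `V1`, `V2`. -/
inductive GT : Type
  | A | B | V | V1 | V2

/-- Names of the stored numbers: the number `cnt` of segments found so far, operands `x`, `y`, `y0`
of the multiplication (and of input walks), the size budget `s` and its parts `s1`, `s2`, `s3`, the
offset `z` added to input positions, a slack `r`, and the counters `sg`, `sg0` of a segment. -/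
inductive DT : Type
  | cnt | x | y | y0 | s | s1 | s2 | s3 | z | r | sg | sg0

instance : Finite GT :=
  Finite.of_injective (fun k => (⟨k.ctorIdx, by cases k <;> decide⟩ : Fin 5)) fun a b h => by
    cases a <;> cases b <;> first | rfl | exact absurd h (by decide)

instance : Finite DT :=
  Finite.of_injective (fun k => (⟨k.ctorIdx, by cases k <;> decide⟩ : Fin 12)) fun a b h => by
    cases a <;> cases b <;> first | rfl | exact absurd h (by decide)

/-- The base in which numbers are stored: large enough for `L` digits, `L` the word length, to
hold all numbers that are needed. -/
def bet (c : ℕ) : ℕ := 4 ^ (c + 3)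

lemma bet_ge (c : ℕ) : 4 ≤ bet c := by
  calc 4 = 4 ^ 1 := by norm_num
    _ ≤ 4 ^ (c + 3) := Nat.pow_le_pow_right (by norm_num) (by omega)

/-- A column of the word: for each configuration the tape symbol in this cell, the state if the
work head is here, and a digit of the shifted input position; for each number a digit; and carries.
The flags `used` and `cur` mark the cells already counted and those of the current segment. -/
@[ext] structure Col (M : ATM) (c : ℕ) where
  used : Bool
  cur : Bool
  sy : GT → Fin M.syms
  st : GT → Option (Fin M.states)
  u : GT → Fin (bet c)
  dg : DT → Fin (bet c)
  cy : Fin 4 → Fin 4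

lemma finite_Dir : Finite Dir := by
  refine Finite.of_injective (fun d : Dir => (match d with
    | .left => 0 | .stay => 1 | .right => 2 : Fin 3)) ?_
  intro a b h
  cases a <;> cases b <;> simp_all

instance : Finite Dir := finite_Dir

instance (M : ATM) (c : ℕ) : Finite (Col M c) := by
  refine Finite.of_injective (fun m : Col M c =>
    (m.used, m.cur, m.sy, m.st, m.u, m.dg, m.cy)) ?_
  intro a b h
  cases a; cases b; simp_all

/-- The finite part of a guessed split point: its state `q`, scanned work symbol `a` and scanned
input symbol `σ`, the transitions to its successors, whether it is binary, and whether the current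
fragment (`h`) and the fragments at the successors (`h2`, `h3`) have a hole. -/
structure Spl (M : ATM) where
  h : Bool
  h2 : Bool
  h3 : Bool
  bin : Bool
  q : Fin M.states
  a : Fin M.syms
  σ : Option Bool
  tr1 : Tr M
  tr2 : Tr M

instance (M : ATM) : Finite (Spl M) := by
  refine Finite.of_injective (fun m : Spl M =>
    (m.h, m.h2, m.h3, m.bin, m.q, m.a, m.σ, m.tr1, m.tr2)) ?_
  intro a b h
  cases a; cases b; simp_all

/-- The split data describe a step of `M`, and the hole, if any, goes to one successor. -/
def Spl.Valid {M : ATM} (δ : Spl M) : Prop :=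
  (δ.bin = false ∧ ¬ M.univ δ.q ∧ M.trans δ.q δ.σ δ.a δ.tr1 ∧ δ.tr2 = δ.tr1 ∧ δ.h2 = δ.h) ∨
  (δ.bin = true ∧ M.univ δ.q ∧ M.utrans δ.q δ.σ δ.a = (δ.tr1, δ.tr2) ∧
    ((δ.h2 = δ.h ∧ δ.h3 = false) ∨ (δ.h2 = false ∧ δ.h3 = δ.h)))

/-- Control points without parameter. -/
inductive K0 : Type
  | ok | blk | seg | bk | fk | exit | fin | bHole | bAcc | chkL | cwEq | cwGe

/-- Control points of a scan of the input that adds a number `n + 2` times. -/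
inductive K1 : Type
  | walk | wadd | e1 | e2 | rw | rw1 | done

/-- Control points of a split. -/
inductive K2 : Type
  | split | f0 | f1 | f2 | cp1 | cp2 | cp3

/-- Control points of the verification of a guessed input symbol. -/
inductive K3 : Type
  | chk | chk0 | cw | cwadd

instance : Finite K0 :=
  Finite.of_injective (fun k => (⟨k.ctorIdx, by cases k <;> decide⟩ : Fin 12)) fun a b h => by
    cases a <;> cases b <;> first | rfl | exact absurd h (by decide)

instance : Finite K1 :=
  Finite.of_injective (fun k => (⟨k.ctorIdx, by cases k <;> decide⟩ : Fin 7)) fun a b h => by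
    cases a <;> cases b <;> first | rfl | exact absurd h (by decide)

instance : Finite K2 :=
  Finite.of_injective (fun k => (⟨k.ctorIdx, by cases k <;> decide⟩ : Fin 7)) fun a b h => by
    cases a <;> cases b <;> first | rfl | exact absurd h (by decide)

instance : Finite K3 :=
  Finite.of_injective (fun k => (⟨k.ctorIdx, by cases k <;> decide⟩ : Fin 4)) fun a b h => by
    cases a <;> cases b <;> first | rfl | exact absurd h (by decide)

/-- Control states. A scan carries `none` when it measures a segment, and `some r` when it is a
multiplication by `n + 2` to be followed by `r` more; `node h` verifies a fragment, which has a hole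
if `h` is true. -/
inductive Lab (M : ATM) (c : ℕ) : Type
  | z (k : K0)
  | w (k : K1) (m : Option (Fin c))
  | node (h : Bool)
  | sp (k : K2) (δ : Spl M)
  | ck (k : K3) (σ : Option Bool)

instance (M : ATM) (c : ℕ) : Finite (Lab M c) := by
  let f : Lab M c → (K0 ⊕ (K1 × Option (Fin c))) ⊕ (Bool ⊕ ((K2 × Spl M) ⊕ (K3 × Option Bool)))
    | .z k => .inl (.inl k)
    | .w k m => .inl (.inr (k, m))
    | .node h => .inr (.inl h)
    | .sp k δ => .inr (.inr (.inl (k, δ)))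
    | .ck k σ => .inr (.inr (.inr (k, σ)))
  refine Finite.of_injective f ?_
  intro a b h
  cases a <;> cases b <;> simp_all [f]

section machine
variable (M : ATM) (c : ℕ)

/-- A pass whose rule is a condition `K` relating each old column to the new one and a condition
`C` on neighbouring columns of the new word. -/
def pass {S : Type} (K : S → S → Prop) (C : Option S → Bool → S → Prop) :
    Option (S × S) → Bool → S → S → Prop :=
  fun prev last o n => K o n ∧ C (prev.map Prod.snd) last n

variable {M c}

/-- Local check, with carry track `k`, that the columns `a` sum up to the number with digits `d`
in the mixed-radix system with bases `b`. The Boolean argument tells the leftmost column. -/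
def addC (k : Fin 4) (b a : Bool → Col M c → ℕ) (d : Col M c → ℕ) :
    Option (Col M c) → Bool → Col M c → Prop :=
  fun p last n =>
    a p.isNone n + (p.elim 0 fun m => (m.cy k : ℕ)) = d n + b p.isNone n * (n.cy k : ℕ) ∧
    d n < b p.isNone n ∧ (last = true → (n.cy k : ℕ) = 0)

/-- The base of ordinary numbers. -/
def bB : Bool → Col M c → ℕ := fun _ _ => bet c

/-- The bases for measuring a segment: the number of values representable with `m` cells in the
segment is `2 ^ (m + 1)`. -/
def bS : Bool → Col M c → ℕ := fun first n => (if first then 2 else 1) * (if n.cur then 2 else 1)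

/-- The digit `1` in the leftmost column. -/
def one (first : Bool) : ℕ := if first then 1 else 0

/-- The stored configuration `h` is the successor of the stored configuration `g` under the
transition `tr`. -/
def trC (k : Fin 4) (g h : GT) (tr : Tr M) : Option (Col M c) → Bool → Col M c → Prop :=
  fun p last n =>
    (n.sy h = if (n.st g).isSome then tr.2.1 else n.sy g) ∧
    (∀ q, n.st h = some q → q = tr.1) ∧
    (match tr.2.2.2 with
      | .stay => (n.st h).isSome = (n.st g).isSome
      | .right => (n.st h).isSome = (p.elim false fun m => (m.st g).isSome) ∧
          (last = true → n.st g = none)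
      | .left => (n.st g).isSome = (p.elim false fun m => (m.st h).isSome) ∧
          (last = true → n.st h = none)) ∧
    (match tr.2.2.1 with
      | .stay => n.u h = n.u g
      | .right => addC k bB (fun f n => (n.u g : ℕ) + one f) (fun n => (n.u h : ℕ)) p last n
      | .left => addC k bB (fun f n => (n.u h : ℕ) + one f) (fun n => (n.u g : ℕ)) p last n)

/-- Exactly one column of the stored configuration `g` carries the work head. -/
def headC (k : Fin 4) (g : GT) : Option (Col M c) → Bool → Col M c → Prop :=
  fun p last n =>
    (if (n.st g).isSome then 1 else 0) + (p.elim 0 fun m => (m.cy k : ℕ)) = (n.cy k : ℕ) ∧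
    (last = true → (n.cy k : ℕ) = 1)

/-- The stored configuration `g` of the old column is stored as `g'` in the new one. -/
def cpG (g g' : GT) (o n : Col M c) : Prop :=
  n.sy g' = o.sy g ∧ n.st g' = o.st g ∧ n.u g' = o.u g

/-- The control point at which `r` multiplications by `n + 2` remain. -/
def nxt (M : ATM) (c : ℕ) : ℕ → Lab M c
  | 0 => .z .fin
  | r + 1 => if h : r < c then .w .walk (some ⟨r, h⟩) else .z .fin

/-- The pass that performs one addition of a scan. -/
def addP : Option (Fin c) → Option (Col M c × Col M c) → Bool → Col M c → Col M c → Prop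
  | none => pass
      (fun o n => n.used = o.used ∧ n.cur = o.cur ∧ n.dg .cnt = o.dg .cnt ∧ n.dg .sg0 = o.dg .sg)
      (addC 0 bS (fun f n => (n.dg .sg0 : ℕ) + one f) (fun n => n.dg .sg))
  | some _ => pass
      (fun o n => n.dg .x = o.dg .x ∧ n.dg .y0 = o.dg .y)
      (addC 0 bB (fun _ n => (n.dg .y0 : ℕ) + n.dg .x) (fun n => n.dg .y))

/-- The program of the simulating machine. -/
def prog : Lab M c → Instr (Lab M c) (Col M c)
  | .z .ok => .acc
  | .z .blk => .choose fun _ q d => d = .stay ∧ (q = .z .seg ∨ q = .z .exit)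
  | .z .seg => .sweep (pass (fun o n => (n.cur = true → o.used = false) ∧
      n.used = (o.used || n.cur) ∧ n.dg .cnt = o.dg .cnt ∧ (n.dg .sg : ℕ) = 0)
      (fun _ _ _ => True)) (.w .walk none)
  | .z .bk => .choose fun _ q d => d = .stay ∧ (q = .z .blk ∨ q = .z .fk)
  | .z .fk => .fork (.z .ok) (.z .blk)
  | .z .exit => .sweep (pass (fun o n => n.dg .x = o.dg .cnt ∧ (n.dg .y : ℕ) = 0)
      (fun _ _ _ => True)) (nxt M c c)
  | .w .walk m => .choose fun σ q d =>
      (σ ≠ none ∧ d = .right ∧ q = .w .wadd m) ∨ (σ = none ∧ d = .stay ∧ q = .w .e1 m)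
  | .w .wadd m => .sweep (addP m) (.w .walk m)
  | .w .e1 m => .sweep (addP m) (.w .e2 m)
  | .w .e2 m => .sweep (addP m) (.w .rw m)
  | .w .rw m => .choose fun _ q d => d = .left ∧ q = .w .rw1 m
  | .w .rw1 m => .choose fun σ q d =>
      (σ ≠ none ∧ d = .left ∧ q = .w .rw1 m) ∨ (σ = none ∧ d = .right ∧ q = .w .done m)
  | .w .done none => .sweep (pass (fun o n => n.used = o.used ∧ n.dg .y0 = o.dg .cnt)
      (addC 0 bB (fun f n => (n.dg .y0 : ℕ) + one f) (fun n => n.dg .cnt))) (.z .bk)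
  | .w .done (some r) => .sweep (pass (fun o n => n.dg .x = o.dg .y ∧ (n.dg .y : ℕ) = 0)
      (fun _ _ _ => True)) (nxt M c r)
  | .z .fin => .sweep (pass (fun o n => n.dg .s = o.dg .x)
      (fun p _ n => n.sy .A = M.blank ∧ n.st .A = (if p.isNone then some M.start else none) ∧
        n.u .A = n.dg .z)) (.node false)
  | .node h => .choose fun _ q d => d = .stay ∧
      ((h = true ∧ q = .z .bHole) ∨ (h = false ∧ q = .z .bAcc) ∨
        ∃ δ : Spl M, δ.Valid ∧ δ.h = h ∧ q = .sp .split δ)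
  | .z .bHole => .sweep (pass (fun o n => n = o) (fun _ _ n => cpG .A .B n n)) (.z .ok)
  | .z .bAcc => .sweep (pass (fun o n => n.st = o.st ∧ n.dg .s = o.dg .s)
      (fun p last n => (∀ q, n.st .A = some q → M.accept q) ∧
        addC 0 bB (fun f n => (n.dg .r : ℕ) + one f) (fun n => n.dg .s) p last n)) (.z .ok)
  | .sp .split δ => .sweep (pass
      (fun o n => cpG .A .A o n ∧ cpG .B .B o n ∧ n.dg .s = o.dg .s ∧ n.dg .z = o.dg .z)
      (fun p last n =>
        (∀ q, n.st .V = some q → q = δ.q ∧ n.sy .V = δ.a) ∧ headC 0 .V p last n ∧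
        trC 2 .V .V1 δ.tr1 p last n ∧ trC 3 .V .V2 δ.tr2 p last n ∧
        addC 1 bB (fun f n => (n.dg .s1 : ℕ) + n.dg .s2 + n.dg .s3 + one f) (fun n => n.dg .s)
          p last n)) (.sp .f0 δ)
  | .sp .f0 δ => .fork (.sp .f1 δ) (.sp .f2 δ)
  | .sp .f1 δ => .fork (.sp .cp1 δ) (.ck .chk δ.σ)
  | .sp .f2 δ => .fork (.sp .cp2 δ) (.sp .cp3 δ)
  | .sp .cp1 _ => .sweep (pass (fun o n => cpG .A .A o n ∧ cpG .V .B o n ∧ n.dg .s = o.dg .s1 ∧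
      n.dg .z = o.dg .z) (fun _ _ _ => True)) (.node true)
  | .sp .cp2 δ => .sweep (pass (fun o n => cpG .V1 .A o n ∧ cpG .B .B o n ∧ n.dg .s = o.dg .s2 ∧
      n.dg .z = o.dg .z) (fun _ _ _ => True)) (.node δ.h2)
  | .sp .cp3 δ => if δ.bin then
      .sweep (pass (fun o n => cpG .V2 .A o n ∧ cpG .B .B o n ∧ n.dg .s = o.dg .s3 ∧
        n.dg .z = o.dg .z) (fun _ _ _ => True)) (.node δ.h3) else .acc
  | .ck .chk σ => .choose fun _ q d => d = .stay ∧ ((σ = none ∧ q = .z .chkL) ∨ q = .ck .chk0 σ)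
  | .z .chkL => .sweep (pass (fun o n => n.u .V = o.u .V ∧ n.dg .z = o.dg .z)
      (addC 0 bB (fun f n => (n.u .V : ℕ) + n.dg .r + one f) (fun n => n.dg .z))) (.z .ok)
  | .ck .chk0 σ => .sweep (pass (fun o n => n.u .V = o.u .V ∧ n.dg .z = o.dg .z ∧
      n.dg .y = o.dg .z) (fun _ _ _ => True)) (.ck .cw σ)
  | .ck .cw σ => .choose fun τ q d =>
      (d = .right ∧ q = .ck .cwadd σ) ∨ (σ = τ ∧ d = .stay ∧ q = .z .cwEq) ∨
      (σ = none ∧ τ = none ∧ d = .stay ∧ q = .z .cwGe)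
  | .ck .cwadd σ => .sweep (pass (fun o n => n.u .V = o.u .V ∧ n.dg .z = o.dg .z ∧
      n.dg .y0 = o.dg .y)
      (addC 0 bB (fun f n => (n.dg .y0 : ℕ) + one f) (fun n => n.dg .y))) (.ck .cw σ)
  | .z .cwEq => .sweep (pass (fun o n => n = o) (fun _ _ n => n.u .V = n.dg .y)) (.z .ok)
  | .z .cwGe => .sweep (pass (fun o n => n.u .V = o.u .V ∧ n.dg .y = o.dg .y)
      (addC 0 bB (fun _ n => (n.dg .y : ℕ) + n.dg .r) (fun n => (n.u .V : ℕ)))) (.z .ok)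

/-- The all-zero column. -/
def col0 (M : ATM) (c : ℕ) : Col M c where
  used := false
  cur := false
  sy := fun _ => M.blank
  st := fun _ => none
  u := fun _ => ⟨0, by have := bet_ge c; omega⟩
  dg := fun _ => ⟨0, by have := bet_ge c; omega⟩
  cy := fun _ => 0

/-- The sweep machine simulating `M`. -/
def sim (M : ATM) (c : ℕ) : SweepMachine where
  Q := Lab M c
  S := Col M c
  finQ := inferInstance
  finS := inferInstance
  start := .z .blk
  init := col0 M c
  instr := prog

end machine

/-! ### Reading off numbers and configurations from a word -/

/-- The new column to the left of position `i`. -/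
def prevc {S : Type} (w : ℕ → S) : ℕ → Option S
  | 0 => none
  | i + 1 => some (w i)

lemma pass_iff {S : Type} {K : S → S → Prop} {C : Option S → Bool → S → Prop} {L : ℕ}
    {w w' : ℕ → S} : SweepRel (pass K C) L w w' ↔
      (∀ i < L, K (w i) (w' i)) ∧ ∀ i < L, C (prevc w' i) (decide (i + 1 = L)) (w' i) := by
  have : ∀ i, (prv w w' i).map Prod.snd = prevc w' i := by
    intro i; cases i <;> rfl
  simp only [SweepRel, pass, this]
  exact ⟨fun h => ⟨fun i hi => (h i hi).1, fun i hi => (h i hi).2⟩,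
    fun h i hi => ⟨h.1 i hi, h.2 i hi⟩⟩

lemma prevc_isNone {S : Type} (w : ℕ → S) (i : ℕ) : (prevc w i).isNone = decide (i = 0) := by
  cases i <;> simp [prevc]

section
variable {M : ATM} {c : ℕ}

lemma prevc_cin (w : ℕ → Col M c) (k : Fin 4) (i : ℕ) :
    ((prevc w i).elim 0 fun m => (m.cy k : ℕ)) = cin (fun i => ((w i).cy k : ℕ)) i := by
  cases i <;> rfl

variable (L : ℕ)

/-- The number stored in track `t`. -/
def num (w : ℕ → Col M c) (t : DT) : ℕ := val (fun _ => bet c) (fun i => (w i).dg t) L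

/-- The shifted input position stored with the configuration `g`. -/
def unum (w : ℕ → Col M c) (g : GT) : ℕ := val (fun _ => bet c) (fun i => (w i).u g) L

/-- The number stored in track `t`, read with the bases used for measuring a segment. -/
def snum (w : ℕ → Col M c) (t : DT) : ℕ :=
  val (fun i => bS (decide (i = 0)) (w i)) (fun i => (w i).dg t) L

variable {L}

lemma add_sound {k : Fin 4} {b a : Bool → Col M c → ℕ} {d : Col M c → ℕ} {w : ℕ → Col M c}
    (hL : 0 < L) (h : ∀ i < L, addC k b a d (prevc w i) (decide (i + 1 = L)) (w i)) :
    val (fun i => b (decide (i = 0)) (w i)) (fun i => a (decide (i = 0)) (w i)) L =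
      val (fun i => b (decide (i = 0)) (w i)) (fun i => d (w i)) L ∧
    val (fun i => b (decide (i = 0)) (w i)) (fun i => d (w i)) L <
      wt (fun i => b (decide (i = 0)) (w i)) L := by
  simp only [addC, prevc_isNone, prevc_cin, decide_eq_true_eq] at h
  refine ⟨?_, val_lt fun i hi => (h i hi).2.1⟩
  rw [carry_sum fun i hi => (h i hi).1]
  obtain ⟨n, rfl⟩ : ∃ n, L = n + 1 := ⟨L - 1, by omega⟩
  rw [show cin (fun i => ((w i).cy k : ℕ)) (n + 1) = ((w n).cy k : ℕ) from rfl,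
    (h n (by omega)).2.2 rfl]
  omega

lemma val_one {b f : ℕ → ℕ} (hL : 0 < L) :
    val b (fun i => f i + one (decide (i = 0))) L = val b f L + 1 := by
  rw [val_add]
  congr 1
  rw [← val_first b hL 1]
  exact val_congr fun i _ => by simp [one]

lemma num_congr {w w' : ℕ → Col M c} {t t' : DT} (h : ∀ i < L, (w' i).dg t' = (w i).dg t) :
    num L w' t' = num L w t := val_congr fun i hi => by rw [h i hi]

lemma num_null {w : ℕ → Col M c} {t : DT} (h : ∀ i < L, ((w i).dg t : ℕ) = 0) :
    num L w t = 0 := by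
  rw [num, val_congr h, val_null]

lemma unum_congr {w w' : ℕ → Col M c} {g g' : GT} (h : ∀ i < L, (w' i).u g' = (w i).u g) :
    unum L w' g' = unum L w g := val_congr fun i hi => by rw [h i hi]

lemma wt_congr {b b' : ℕ → ℕ} {n : ℕ} (h : ∀ i < n, b i = b' i) : wt b n = wt b' n :=
  Finset.prod_congr rfl fun i hi => h i (Finset.mem_range.1 hi)

lemma snum_congr {w w' : ℕ → Col M c} {t t' : DT} (h : ∀ i < L, (w' i).dg t' = (w i).dg t)
    (hc : ∀ i < L, (w' i).cur = (w i).cur) :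
    snum L w' t' = snum L w t := by
  unfold snum val
  refine Finset.sum_congr rfl fun i hi => ?_
  rw [Finset.mem_range] at hi
  beta_reduce
  rw [h i hi, wt_congr (b' := fun i => bS (decide (i = 0)) (w i))]
  intro j hj
  simp only [bS, hc j (by omega)]

/-- The number of marked cells. -/
def cardU (L : ℕ) (f : ℕ → Bool) : ℕ := ∑ i ∈ Finset.range L, if f i then 1 else 0

lemma wt_bS_le (w : ℕ → Col M c) (n : ℕ) :
    wt (fun i => bS (decide (i = 0)) (w i)) n ≤ 2 ^ (cardU n (fun i => (w i).cur) + 1) := by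
  have key : wt (fun i => bS (decide (i = 0)) (w i)) n =
      (if n = 0 then 1 else 2) * 2 ^ cardU n (fun i => (w i).cur) := by
    induction n with
    | zero => simp [wt_zero, cardU]
    | succ n ih =>
      rw [wt_succ, ih]
      simp only [cardU, Finset.sum_range_succ, pow_add, bS]
      rcases n with _ | n
      · by_cases h : (w 0).cur <;> simp [h]
      · by_cases h : (w (n + 1)).cur
        · simp [h]; ring
        · simp [h]
  rw [key, pow_succ, mul_comm]
  gcongr
  split_ifs <;> norm_num

/-- The configuration `a` is stored as `g` in the word `w`. -/
structure Rep (L : ℕ) (w : ℕ → Col M c) (g : GT) (a : M.Cfg) : Prop where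
  ok : M.CfgOk L a
  sy : ∀ i < L, (w i).sy g = a.tape i
  st : ∀ i < L, (w i).st g = if (i : ℤ) = a.wpos then some a.state else none
  u : (unum L w g : ℤ) = a.ipos + num L w .z

lemma Rep.congr {w w' : ℕ → Col M c} {g g' : GT} {a : M.Cfg} (h : Rep L w g a)
    (hg : ∀ i < L, cpG g g' (w i) (w' i)) (hz : ∀ i < L, (w' i).dg .z = (w i).dg .z) :
    Rep L w' g' a where
  ok := h.ok
  sy i hi := by rw [(hg i hi).1, h.sy i hi]
  st i hi := by rw [(hg i hi).2.1, h.st i hi]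
  u := by rw [unum_congr fun i hi => (hg i hi).2.2, num_congr hz, h.u]

lemma Rep.unique {w : ℕ → Col M c} {g g' : GT} {a b : M.Cfg} (ha : Rep L w g a)
    (hb : Rep L w g' b) (hg : ∀ i < L, cpG g g' (w i) (w i)) : a = b := by
  have hb' := ha.congr hg fun _ _ => rfl
  obtain ⟨j, hj⟩ : ∃ j : ℕ, (j : ℤ) = a.wpos := ⟨a.wpos.toNat, by have := ha.ok.1; omega⟩
  have hjL : j < L := by have := ha.ok.2.1; omega
  have h1 := hb'.st j hjL
  rw [hb.st j hjL, if_pos hj] at h1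
  have h2 : (j : ℤ) = b.wpos ∧ b.state = a.state := by
    split_ifs at h1 with h
    exact ⟨h, by simpa using h1⟩
  have h3 : a.ipos = b.ipos := by have h3 := hb.u; have h4 := hb'.u; omega
  have h5 : a.tape = b.tape := by
    funext z
    by_cases hz : z < 0 ∨ (L : ℤ) ≤ z
    · rw [ha.ok.2.2 z hz, hb.ok.2.2 z hz]
    · obtain ⟨i, rfl⟩ : ∃ i : ℕ, (i : ℤ) = z := ⟨z.toNat, by omega⟩
      rw [← hb'.sy i (by omega), hb.sy i (by omega)]
  cases a; cases b; simp_all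

lemma Rep.tr {w : ℕ → Col M c} {g h : GT} {v : M.Cfg} {k : Fin 4} {tr : Tr M}
    (hv : Rep L w g v)
    (hC : ∀ i < L, trC k g h tr (prevc w i) (decide (i + 1 = L)) (w i)) :
    Rep L w h (M.applyTr v tr) := by
  obtain ⟨q', a', di, dw⟩ := tr
  obtain ⟨j, hj⟩ : ∃ j : ℕ, (j : ℤ) = v.wpos := ⟨v.wpos.toNat, by have := hv.ok.1; omega⟩
  have hjL : j < L := by have := hv.ok.2.1; omega
  have hg : ∀ i < L, ((w i).st g).isSome = decide (i = j) := by
    intro i hi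
    rw [hv.st i hi, ← hj]
    by_cases h : i = j <;> simp [h]
  have hg' : ∀ i < L, (w i).st g = none ↔ i ≠ j := by
    intro i hi
    have := hg i hi
    rw [← Option.isNone_iff_eq_none, ← Option.not_isSome, this]
    simp
  have hst : (0 ≤ moveDir v.wpos dw ∧ moveDir v.wpos dw < L) ∧
      ∀ i < L, ((w i).st h).isSome = decide ((i : ℤ) = moveDir v.wpos dw) := by
    have hs := fun i hi => (hC i hi).2.2.1
    cases dw with
    | stay =>
      refine ⟨⟨hv.ok.1, hv.ok.2.1⟩, fun i hi => ?_⟩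
      have := hs i hi
      simp only at this
      rw [this, hg i hi, moveDir, ← hj]
      simp
    | right =>
      simp only [moveDir, ← hj]
      have hjl : j + 1 < L := by
        by_contra hcon
        have h1 := (hs j hjL).2 (by simp; omega)
        exact (hg' j hjL).1 h1 rfl
      refine ⟨by omega, fun i hi => ?_⟩
      rw [(hs i hi).1]
      cases i with
      | zero => simp [prevc]; omega
      | succ i => simp [prevc, hg i (by omega)]
    | left =>
      simp only [moveDir, ← hj]
      have hj0 : j ≠ 0 := by
        rintro rfl
        have h1 := (hs 0 hjL).1
        rw [hg 0 hjL] at h1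
        simp [prevc] at h1
      refine ⟨by omega, fun i hi => ?_⟩
      by_cases hl : i + 1 < L
      · have h1 := (hs (i + 1) hl).1
        rw [hg _ hl] at h1
        simp only [prevc, Option.elim] at h1
        rw [← h1]
        have : ((i : ℤ) = j - 1) ↔ i + 1 = j := by omega
        simp [this]
      · have h1 := (hs i hi).2 (by simp; omega)
        rw [h1]
        have : ¬ ((i : ℤ) = j - 1) := by omega
        simp [this]
  refine ⟨⟨hst.1.1, hst.1.2, fun z hz => ?_⟩, fun i hi => ?_, fun i hi => ?_, ?_⟩
  · have : z ≠ v.wpos := by omega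
    simp only [ATM.applyTr, Function.update_of_ne this]
    exact hv.ok.2.2 z hz
  · have h1 := (hC i hi).1
    rw [h1, hg i hi]
    by_cases hij : i = j
    · subst hij; simp [ATM.applyTr, hj]
    · have : (i : ℤ) ≠ v.wpos := by omega
      simp [ATM.applyTr, Function.update_of_ne this, hij, hv.sy i hi]
  · have h1 := hst.2 i hi
    have h2 := (hC i hi).2.1
    change _ = if (i : ℤ) = moveDir v.wpos dw then some q' else none
    by_cases h : (i : ℤ) = moveDir v.wpos dw
    · simp only [h, decide_true] at h1
      obtain ⟨q, hq⟩ := Option.isSome_iff_exists.1 h1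
      rw [hq, h2 q hq, if_pos h]
    · rw [if_neg h]
      simpa [h] using h1
  · have h1 := fun i hi => (hC i hi).2.2.2
    have hL : 0 < L := by omega
    have hu := hv.u
    simp only [ATM.applyTr]
    cases di with
    | stay =>
      simp only at h1
      rw [unum_congr h1, hu]; rfl
    | right =>
      simp only at h1
      have h2 := (add_sound hL h1).1
      rw [val_one (f := fun i => ((w i).u g : ℕ)) hL] at h2
      change unum L w g + 1 = unum L w h at h2
      simp only [moveDir]; omega
    | left =>
      simp only at h1
      have h2 := (add_sound hL h1).1
      rw [val_one (f := fun i => ((w i).u h : ℕ)) hL] at h2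
      change unum L w h + 1 = unum L w g at h2
      simp only [moveDir]; omega

/-- A stored configuration with exactly one head can be read off. -/
lemma exists_rep {w : ℕ → Col M c} {g : GT} {k : Fin 4} {q : Fin M.states} {a : Fin M.syms}
    (hL : 0 < L) (hq : ∀ i < L, ∀ q', (w i).st g = some q' → q' = q ∧ (w i).sy g = a)
    (hC : ∀ i < L, headC k g (prevc w i) (decide (i + 1 = L)) (w i)) :
    ∃ v, Rep L w g v ∧ v.state = q ∧ v.tape v.wpos = a := by
  simp only [headC, prevc_cin, decide_eq_true_eq] at hC
  have h1 : val (fun _ => 1) (fun i => if ((w i).st g).isSome then 1 else 0) L = 1 := by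
    rw [carry_sum (c := fun i => ((w i).cy k : ℕ)) (d := fun _ => 0)
      (fun i hi => by rw [(hC i hi).1]; simp)]
    obtain ⟨n, rfl⟩ : ∃ n, L = n + 1 := ⟨L - 1, by omega⟩
    rw [val_null, show cin (fun i => ((w i).cy k : ℕ)) (n + 1) = ((w n).cy k : ℕ) from rfl,
      (hC n (by omega)).2 rfl, wt_const]
    simp
  simp only [val, wt_const, one_pow, mul_one, Finset.sum_boole, Nat.cast_id] at h1
  obtain ⟨j, hj⟩ := Finset.card_eq_one.1 h1
  have hj' : ∀ i, (i < L ∧ ((w i).st g).isSome) ↔ i = j := by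
    intro i
    have := Finset.ext_iff.1 hj i
    simpa using this
  obtain ⟨hjL, hjs⟩ := (hj' j).2 rfl
  obtain ⟨q', hq'⟩ := Option.isSome_iff_exists.1 hjs
  obtain ⟨rfl, rfl⟩ := hq j hjL q' hq'
  refine ⟨⟨q', (unum L w g : ℤ) - num L w .z,
    fun z => if 0 ≤ z ∧ z < L then (w z.toNat).sy g else M.blank, j⟩, ⟨⟨?_, ?_, ?_⟩, ?_, ?_, ?_⟩,
    rfl, ?_⟩
  · simp
  · simpa using hjL
  · intro z hz
    have : ¬ (0 ≤ z ∧ z < L) := by omega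
    exact if_neg this
  · intro i hi
    have : (0 : ℤ) ≤ i ∧ (i : ℤ) < L := by omega
    simp [this]
  · intro i hi
    by_cases h : i = j
    · subst h; simp [hq']
    · have := mt (hj' i).1 h
      simp [h]
      simpa [hi] using this
  · simp
  · have : (0 : ℤ) ≤ j ∧ (j : ℤ) < L := by omega
    simp [this]

end

/-! ### Soundness of the simulation -/

section
variable {M : ATM} {c : ℕ} {x : List Bool} {L : ℕ}

/-- The configuration `a` has an accepting computation tree of size at most `s` within space
`L`. -/
def TT (M : ATM) (x : List Bool) (L : ℕ) (a : M.Cfg) (s : ℕ) : Prop :=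
  ∃ t : CTree M.Cfg, t.root = a ∧ M.ValidTree x t ∧ t.Forall (M.CfgOk L) ∧ t.size ≤ s

lemma TT.mono {a : M.Cfg} {s s' : ℕ} (h : TT M x L a s) (hs : s ≤ s') : TT M x L a s' := by
  obtain ⟨t, h1, h2, h3, h4⟩ := h
  exact ⟨t, h1, h2, h3, h4.trans hs⟩

/-- What is verified about a fragment from `a` with budget `s`: it extends accepting computation
trees of the hole `b` (if there is a hole) to accepting computation trees of `a`. -/
def Frag (M : ATM) (x : List Bool) (L : ℕ) (h : Bool) (a b : M.Cfg) (s : ℕ) : Prop :=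
  ∀ m, (h = true → TT M x L b m) → TT M x L a (m + s)

/-- What an accepting run of the machine proves: for some `N` with `N * log n ≤ L` there is an
accepting computation tree of `M` of size at most `N * (n + 2) ^ c`. -/
def Goal (M : ATM) (c : ℕ) (x : List Bool) (L : ℕ) : Prop :=
  ∃ N, N * logb x.length ≤ L ∧ TT M x L M.init (N * (x.length + 2) ^ c)

/-- The assertion established by acceptance from each control point. -/
def Asrt (x : List Bool) (L : ℕ) : Lab M c → ℤ → (ℕ → Col M c) → Prop
  | .z .ok, _, _ => True
  | .z .blk, p, w | .z .seg, p, w | .z .bk, p, w | .z .fk, p, w | .z .exit, p, w =>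
      p = 0 → num L w .cnt * logb x.length ≤ cardU L (fun i => (w i).used) → Goal M c x L
  | .w k none, p, w =>
      let fit := num L w .cnt * logb x.length + cardU L (fun i => (w i).cur) ≤
        cardU L (fun i => (w i).used)
      let fit' := (num L w .cnt + 1) * logb x.length ≤ cardU L (fun i => (w i).used)
      match k with
      | .walk => 0 ≤ p → p ≤ x.length → fit → (snum L w .sg : ℤ) = p → Goal M c x L
      | .wadd => 0 ≤ p → p ≤ x.length → fit → (snum L w .sg : ℤ) + 1 = p → Goal M c x L
      | .e1 => 0 ≤ p → p ≤ x.length → fit → x.length ≤ snum L w .sg → Goal M c x L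
      | .e2 => 0 ≤ p → p ≤ x.length → fit → x.length + 1 ≤ snum L w .sg → Goal M c x L
      | .rw => 0 ≤ p → p ≤ x.length → fit' → Goal M c x L
      | .rw1 => -1 ≤ p → p < x.length → fit' → Goal M c x L
      | .done => p = 0 → fit' → Goal M c x L
  | .w k (some r), p, w =>
      let G := TT M x L M.init (num L w .x * (x.length + 2) ^ ((r : ℕ) + 1))
      let G' := TT M x L M.init (num L w .y * (x.length + 2) ^ (r : ℕ))
      match k with
      | .walk => 0 ≤ p → p ≤ x.length → (num L w .y : ℤ) = num L w .x * p → G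
      | .wadd => 0 ≤ p → p ≤ x.length → (num L w .y + num L w .x : ℤ) = num L w .x * p → G
      | .e1 => 0 ≤ p → p ≤ x.length → num L w .y ≤ num L w .x * x.length → G
      | .e2 => 0 ≤ p → p ≤ x.length → num L w .y ≤ num L w .x * (x.length + 1) → G
      | .rw => 0 ≤ p → p ≤ x.length → G'
      | .rw1 => -1 ≤ p → p < x.length → G'
      | .done => p = 0 → G'
  | .z .fin, p, w => p = 0 → TT M x L M.init (num L w .x)
  | .node h, p, w => p = 0 → ∀ a b, Rep L w .A a → (h = true → Rep L w .B b) →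
      Frag M x L h a b (num L w .s)
  | .z .bHole, _, w => ∀ a b, Rep L w .A a → Rep L w .B b → a = b
  | .z .bAcc, _, w => ∀ a, Rep L w .A a → TT M x L a (num L w .s)
  | .sp .split δ, p, w => p = 0 → δ.Valid → ∀ a b, Rep L w .A a → (δ.h = true → Rep L w .B b) →
      Frag M x L δ.h a b (num L w .s)
  | .sp .f0 δ, p, w => p = 0 → δ.Valid → ∀ a b v, Rep L w .A a → (δ.h = true → Rep L w .B b) →
      Rep L w .V v → Rep L w .V1 (M.applyTr v δ.tr1) → Rep L w .V2 (M.applyTr v δ.tr2) →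
      v.state = δ.q → v.tape v.wpos = δ.a →
      num L w .s1 + num L w .s2 + num L w .s3 + 1 = num L w .s →
      Frag M x L δ.h a b (num L w .s)
  | .sp .f1 δ, p, w => p = 0 → ∀ a v, Rep L w .A a → Rep L w .V v →
      Frag M x L true a v (num L w .s1) ∧ inputAt x v.ipos = δ.σ
  | .sp .f2 δ, p, w => p = 0 →
      (∀ a b, Rep L w .V1 a → (δ.h2 = true → Rep L w .B b) →
        Frag M x L δ.h2 a b (num L w .s2)) ∧
      (δ.bin = true → ∀ a b, Rep L w .V2 a → (δ.h3 = true → Rep L w .B b) →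
        Frag M x L δ.h3 a b (num L w .s3))
  | .sp .cp1 _, p, w => p = 0 → ∀ a v, Rep L w .A a → Rep L w .V v →
      Frag M x L true a v (num L w .s1)
  | .sp .cp2 δ, p, w => p = 0 → ∀ a b, Rep L w .V1 a → (δ.h2 = true → Rep L w .B b) →
      Frag M x L δ.h2 a b (num L w .s2)
  | .sp .cp3 δ, p, w => p = 0 → δ.bin = true → ∀ a b, Rep L w .V2 a →
      (δ.h3 = true → Rep L w .B b) → Frag M x L δ.h3 a b (num L w .s3)
  | .ck .chk σ, p, w | .ck .chk0 σ, p, w => p = 0 → ∀ i : ℤ, (unum L w .V : ℤ) = i + num L w .z →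
      inputAt x i = σ
  | .z .chkL, _, w => ∀ i : ℤ, (unum L w .V : ℤ) = i + num L w .z → i < 0
  | .ck .cw σ, p, w => 0 ≤ p → (num L w .y : ℤ) = num L w .z + p →
      ∀ i : ℤ, (unum L w .V : ℤ) = i + num L w .z → inputAt x i = σ
  | .ck .cwadd σ, p, w => 0 ≤ p → (num L w .y : ℤ) + 1 = num L w .z + p →
      ∀ i : ℤ, (unum L w .V : ℤ) = i + num L w .z → inputAt x i = σ
  | .z .cwEq, _, w => unum L w .V = num L w .y
  | .z .cwGe, _, w => num L w .y ≤ unum L w .V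

lemma inputAt_ne_none {p : ℤ} (h : inputAt x p ≠ none) : 0 ≤ p ∧ p < x.length := by
  unfold inputAt at h
  split_ifs at h with h0
  · have := (List.getElem?_eq_some_iff.1 (Option.ne_none_iff_exists'.1 h).choose_spec).1
    omega
  · exact absurd rfl h

lemma inputAt_eq_none {p : ℤ} : inputAt x p = none ↔ p < 0 ∨ x.length ≤ p := by
  unfold inputAt
  split_ifs with h0
  · rw [List.getElem?_eq_none_iff]; omega
  · simp; omega

lemma cardU_le (f : ℕ → Bool) : cardU L f ≤ L := by
  calc cardU L f ≤ ∑ i ∈ Finset.range L, 1 := Finset.sum_le_sum fun i _ => by split_ifs <;> simp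
    _ = L := by simp

lemma cardU_congr {f g : ℕ → Bool} (h : ∀ i < L, f i = g i) : cardU L f = cardU L g :=
  Finset.sum_congr rfl fun i hi => by rw [h i (Finset.mem_range.1 hi)]

lemma addP_none_sound {w w' : ℕ → Col M c} (hL : 0 < L) (h : SweepRel (addP none) L w w') :
    cardU L (fun i => (w' i).used) = cardU L (fun i => (w i).used) ∧
    cardU L (fun i => (w' i).cur) = cardU L (fun i => (w i).cur) ∧
    num L w' .cnt = num L w .cnt ∧ snum L w' .sg = snum L w .sg + 1 ∧
    snum L w' .sg < 2 ^ (cardU L (fun i => (w i).cur) + 1) := by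
  obtain ⟨hK, hC⟩ := pass_iff.1 h
  have hc : ∀ i < L, (w' i).cur = (w i).cur := fun i hi => (hK i hi).2.1
  have h1 := add_sound hL hC
  rw [val_one (f := fun i => ((w' i).dg .sg0 : ℕ)) hL] at h1
  change snum L w' .sg0 + 1 = snum L w' .sg ∧ snum L w' .sg < _ at h1
  rw [snum_congr (w := w) (t := .sg) (fun i hi => (hK i hi).2.2.2) hc] at h1
  refine ⟨cardU_congr fun i hi => (hK i hi).1, cardU_congr hc,
    num_congr fun i hi => (hK i hi).2.2.1, h1.1.symm, h1.2.trans_le ?_⟩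
  rw [← cardU_congr hc]
  exact wt_bS_le w' L

lemma addP_some_sound {w w' : ℕ → Col M c} {r : Fin c} (hL : 0 < L)
    (h : SweepRel (addP (some r)) L w w') :
    num L w' .x = num L w .x ∧ num L w' .y = num L w .y + num L w .x := by
  obtain ⟨hK, hC⟩ := pass_iff.1 h
  have h1 := (add_sound hL hC).1
  rw [val_add] at h1
  change num L w' .y0 + num L w' .x = num L w' .y at h1
  have hx : num L w' .x = num L w .x := num_congr fun i hi => (hK i hi).1
  have hy : num L w' .y0 = num L w .y := num_congr fun i hi => (hK i hi).2
  exact ⟨hx, by omega⟩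

lemma asrt_nxt {r : ℕ} {w : ℕ → Col M c} (h : Asrt x L (nxt M c r) 0 w)
    (hy : num L w .y = 0) : TT M x L M.init (num L w .x * (x.length + 2) ^ r) := by
  cases r with
  | zero => simpa [nxt, Asrt] using h
  | succ r =>
    rw [nxt] at h
    split_ifs at h with hr
    · exact h le_rfl (by simp) (by simp [hy])
    · exact TT.mono (h rfl) (Nat.le_mul_of_pos_right _ (by positivity))

/-- Verified fragments above and below a split point compose. -/
lemma frag_split {δ : Spl M} (hδ : δ.Valid) {a b v : M.Cfg} {s1 s2 s3 : ℕ}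
    (hv : M.CfgOk L v) (hq : v.state = δ.q) (ha : v.tape v.wpos = δ.a)
    (hσ : inputAt x v.ipos = δ.σ) (h1 : Frag M x L true a v s1)
    (h2 : Frag M x L δ.h2 (M.applyTr v δ.tr1) b s2)
    (h3 : δ.bin = true → Frag M x L δ.h3 (M.applyTr v δ.tr2) b s3) :
    Frag M x L δ.h a b (s1 + s2 + s3 + 1) := by
  intro m hm
  suffices h : TT M x L v (m + s2 + s3 + 1) from
    (h1 _ fun _ => h).mono (by omega)
  rcases hδ with ⟨-, hu, htr, -, hh⟩ | ⟨hbin, hu, htr, hh⟩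
  · obtain ⟨t, t1, t2, t3, t4⟩ := h2 m (fun h => hm (hh ▸ h))
    exact ⟨.node1 v t, rfl, .estep _ _ _ (hq ▸ hu) (by rw [hq, ha, hσ]; exact htr) t1 t2,
      ⟨hv, t3⟩, by simp only [CTree.size]; omega⟩
  · have key : ∀ m2 m3, m2 + m3 = m → (δ.h2 = true → TT M x L b m2) →
        (δ.h3 = true → TT M x L b m3) → TT M x L v (m + s2 + s3 + 1) := by
      intro m2 m3 hmm hm2 hm3
      obtain ⟨t, t1, t2, t3, t4⟩ := h2 m2 hm2
      obtain ⟨t', t1', t2', t3', t4'⟩ := h3 hbin m3 hm3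
      refine ⟨.node2 v t t', rfl, .ustep _ _ _ (hq ▸ hu) ?_ ?_ t2 t2', ⟨hv, t3, t3'⟩,
        by simp only [CTree.size]; omega⟩
      · rw [hq, ha, hσ, htr, t1]
      · rw [hq, ha, hσ, htr, t1']
    rcases hh with ⟨e2, e3⟩ | ⟨e2, e3⟩
    · exact key m 0 (by simp) (fun h => hm (e2 ▸ h)) (by simp [e3])
    · exact key 0 m (by simp) (by simp [e2]) (fun h => hm (e3 ▸ h))

lemma Rep.init {w : ℕ → Col M c} (hL : 0 < L)
    (h : ∀ i < L, (w i).sy .A = M.blank ∧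
      (w i).st .A = (if (prevc w i).isNone then some M.start else none) ∧
        (w i).u .A = (w i).dg .z) : Rep L w .A M.init where
  ok := ⟨le_rfl, by simpa [ATM.init] using hL, fun _ _ => rfl⟩
  sy i hi := (h i hi).1
  st i hi := by
    rw [(h i hi).2.1, prevc_isNone]
    simp [ATM.init]
  u := by
    have : unum L w .A = num L w .z := val_congr fun i hi => by rw [(h i hi).2.2]
    simp [this, ATM.init]

end

section
variable {M : ATM} {c : ℕ} {x : List Bool} {L : ℕ}

lemma asrt_fork {q q₁ q₂ : Lab M c} {p : ℤ} {w : ℕ → Col M c} (hq : prog q = .fork q₁ q₂)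
    (h₁ : Asrt x L q₁ p w) (h₂ : Asrt x L q₂ p w) : Asrt x L q p w := by
  rcases q with k | ⟨k, m⟩ | h | ⟨k, δ⟩ | ⟨k, σ⟩
  · cases k <;> simp only [prog, reduceCtorEq, Instr.fork.injEq] at hq
    obtain ⟨rfl, rfl⟩ := hq
    exact h₂
  · cases k <;> rcases m with _ | m <;> simp [prog] at hq
  · simp [prog] at hq
  · cases k <;> simp only [prog, reduceCtorEq, Instr.fork.injEq] at hq
    · obtain ⟨rfl, rfl⟩ := hq
      intro hp hδ a b v ha hb hv hv1 hv2 hvq hva hs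
      obtain ⟨g1, g2⟩ := h₁ hp a v ha hv
      obtain ⟨g3, g4⟩ := h₂ hp
      rw [← hs]
      have hh2 : δ.h2 = true → δ.h = true := by
        rcases hδ with h | h
        · simp [h]
        · rcases h.2.2.2 with h | h <;> simp [h]
      have hh3 : δ.bin = true → δ.h3 = true → δ.h = true := by
        rcases hδ with h | h
        · simp [h]
        · rcases h.2.2.2 with h | h <;> simp [h]
      exact frag_split hδ hv.ok hvq hva g2 g1 (g3 _ b hv1 fun h => hb (hh2 h))
        fun h => g4 h _ b hv2 fun h' => hb (hh3 h h')
    · obtain ⟨rfl, rfl⟩ := hq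
      intro hp a v ha hv
      exact ⟨h₁ hp a v ha hv, h₂ hp _ hv.u⟩
    · obtain ⟨rfl, rfl⟩ := hq
      exact fun hp => ⟨h₁ hp, h₂ hp⟩
    · split_ifs at hq
  · cases k <;> simp [prog] at hq

lemma asrt_choose {q q' : Lab M c} {p : ℤ} {w : ℕ → Col M c} {R d}
    (hq : prog q = .choose R) (hR : R (inputAt x p) q' d) (h : Asrt x L q' (moveDir p d) w) :
    Asrt x L q p w := by
  rcases q with k | ⟨k, m⟩ | hh | ⟨k, δ⟩ | ⟨k, σ⟩
  · cases k <;> simp only [prog, reduceCtorEq, Instr.choose.injEq] at hq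
    · subst hq
      obtain ⟨rfl, rfl | rfl⟩ := hR <;> exact h
    · subst hq
      obtain ⟨rfl, rfl | rfl⟩ := hR <;> exact h
  · cases k
    · simp only [prog, Instr.choose.injEq] at hq
      subst hq
      rcases hR with ⟨h1, rfl, rfl⟩ | ⟨h1, rfl, rfl⟩
      · have := inputAt_ne_none h1
        cases m with
        | none =>
          intro hp hp' hf hs
          exact h (by simp [moveDir]; omega) (by simp [moveDir]; omega) hf
            (by simp [moveDir]; omega)
        | some r =>
          intro hp hp' hs
          exact h (by simp [moveDir]; omega) (by simp [moveDir]; omega)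
            (by simp only [moveDir]; rw [hs]; ring)
      · have := inputAt_eq_none.1 h1
        cases m with
        | none =>
          intro hp hp' hf hs
          exact h hp hp' hf (by omega)
        | some r =>
          intro hp hp' hs
          have : p = x.length := by omega
          subst this
          exact h hp hp' (by exact_mod_cast hs.le)
    · simp [prog] at hq
    · simp [prog] at hq
    · simp [prog] at hq
    · simp only [prog, Instr.choose.injEq] at hq
      subst hq
      obtain ⟨rfl, rfl⟩ := hR
      cases m with
      | none =>
        intro hp hp' hf
        exact h (by simp [moveDir]; omega) (by simp [moveDir]; omega) hf
      | some r =>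
        intro hp hp'
        exact h (by simp [moveDir]; omega) (by simp [moveDir]; omega)
    · simp only [prog, Instr.choose.injEq] at hq
      subst hq
      rcases hR with ⟨h1, rfl, rfl⟩ | ⟨h1, rfl, rfl⟩
      · have := inputAt_ne_none h1
        cases m with
        | none =>
          intro hp hp' hf
          exact h (by simp [moveDir]; omega) (by simp [moveDir]; omega) hf
        | some r =>
          intro hp hp'
          exact h (by simp [moveDir]; omega) (by simp [moveDir]; omega)
      · have := inputAt_eq_none.1 h1
        cases m with
        | none =>
          intro hp hp' hf
          exact h (by simp [moveDir]; omega) hf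
        | some r =>
          intro hp hp'
          exact h (by simp [moveDir]; omega)
    · cases m <;> simp [prog] at hq
  · simp only [prog, Instr.choose.injEq] at hq
    subst hq
    obtain ⟨rfl, ⟨rfl, rfl⟩ | ⟨rfl, rfl⟩ | ⟨δ, hδ, rfl, rfl⟩⟩ := hR
    · intro hp a b ha hb m hm
      rw [h a b ha (hb rfl)]
      exact (hm rfl).mono (by omega)
    · intro hp a b ha hb m hm
      exact (h a ha).mono (by omega)
    · intro hp
      exact h hp hδ
  · cases k <;> simp only [prog, reduceCtorEq] at hq
    split_ifs at hq
  · cases k <;> simp only [prog, reduceCtorEq, Instr.choose.injEq] at hq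
    · subst hq
      obtain ⟨rfl, ⟨rfl, rfl⟩ | rfl⟩ := hR
      · intro hp i hi
        exact inputAt_eq_none.2 (.inl (h i hi))
      · exact h
    · subst hq
      rcases hR with ⟨rfl, rfl⟩ | ⟨rfl, rfl, rfl⟩ | ⟨rfl, h0, rfl, rfl⟩
      · intro hp hy
        exact h (by simp [moveDir]; omega) (by simp [moveDir]; omega)
      · intro hp hy i hi
        have h' : unum L w .V = num L w .y := h
        congr 1; omega
      · intro hp hy i hi
        have h' : num L w .y ≤ unum L w .V := h
        have := inputAt_eq_none.1 h0
        exact inputAt_eq_none.2 (.inr (by omega))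

lemma asrt_sweep {q q' : Lab M c} {p : ℤ} {w w' : ℕ → Col M c} {Φ} (hL : 0 < L)
    (hq : prog q = .sweep Φ q') (hΦ : SweepRel Φ L w w') (h : Asrt x L q' p w') :
    Asrt x L q p w := by
  rcases q with k | ⟨k, m⟩ | hh | ⟨k, δ⟩ | ⟨k, σ⟩
  · cases k <;> simp only [prog, reduceCtorEq, Instr.sweep.injEq] at hq
    all_goals
      obtain ⟨rfl, rfl⟩ := hq
      obtain ⟨hK, hC⟩ := pass_iff.1 hΦ
    -- a new segment consists of cells not used before
    · intro hp hf
      subst hp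
      have h1 : cardU L (fun i => (w' i).used) =
          cardU L (fun i => (w i).used) + cardU L (fun i => (w' i).cur) := by
        unfold cardU
        rw [← Finset.sum_add_distrib]
        refine Finset.sum_congr rfl fun i hi => ?_
        obtain ⟨e1, e2, -, -⟩ := hK i (Finset.mem_range.1 hi)
        cases h3 : (w' i).cur <;> cases h4 : (w i).used <;> simp_all
      have h2 : num L w' .cnt = num L w .cnt := num_congr fun i hi => (hK i hi).2.2.1
      have h3 : snum L w' .sg = 0 := by
        rw [snum, val_congr fun i hi => (hK i hi).2.2.2, val_null]
      exact h le_rfl (by simp) (by rw [h1, h2]; omega) (by simp [h3])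
    · intro hp hf
      subst hp
      have h1 : num L w' .x = num L w .cnt := num_congr fun i hi => (hK i hi).1
      have h2 := asrt_nxt h (num_null fun i hi => (hK i hi).2)
      exact ⟨num L w .cnt, hf.trans (cardU_le _), by rwa [h1] at h2⟩
    · intro hp
      subst hp
      have h1 : num L w' .s = num L w .x := num_congr fun i hi => hK i hi
      have := h rfl M.init M.init (Rep.init hL hC) (by simp) 0 (by simp)
      rwa [h1, zero_add] at this
    · intro a b ha hb
      refine ha.unique hb fun i hi => ?_
      have := hC i hi
      rwa [hK i hi] at this
    · intro a ha
      obtain ⟨j, hj⟩ : ∃ j : ℕ, (j : ℤ) = a.wpos := ⟨a.wpos.toNat, by have := ha.ok.1; omega⟩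
      have hjL : j < L := by have := ha.ok.2.1; omega
      have h1 := (hC j hjL).1 a.state (by rw [(hK j hjL).1, ha.st j hjL, if_pos hj])
      have h2 := (add_sound hL fun i hi => (hC i hi).2).1
      rw [val_one (f := fun i => ((w' i).dg .r : ℕ)) hL] at h2
      change _ = num L w' .s at h2
      rw [num_congr (w := w) fun i hi => (hK i hi).2] at h2
      exact ⟨.leaf a, rfl, .leaf _ h1, ha.ok, by simp only [CTree.size]; omega⟩
    · intro i hi
      have h2 := (add_sound hL hC).1
      rw [val_one (f := fun i => ((w' i).u .V : ℕ) + (w' i).dg .r) hL, val_add] at h2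
      change unum L w' .V + num L w' .r + 1 = num L w' .z at h2
      rw [num_congr (w := w) (t := .z) fun i hi => (hK i hi).2,
        unum_congr (w := w) fun i hi => (hK i hi).1] at h2
      omega
    · change val _ _ L = val _ _ L
      refine val_congr fun i hi => ?_
      have := hC i hi
      rw [hK i hi] at this
      rw [this]
    · have h2 := (add_sound hL hC).1
      rw [val_add] at h2
      change num L w' .y + num L w' .r = unum L w' .V at h2
      rw [num_congr (w := w) (t := .y) fun i hi => (hK i hi).2,
        unum_congr (w := w) fun i hi => (hK i hi).1] at h2
      change num L w .y ≤ unum L w .V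
      omega
  · cases k
    · simp [prog] at hq
    · simp only [prog, Instr.sweep.injEq] at hq
      obtain ⟨rfl, rfl⟩ := hq
      cases m with
      | none =>
        obtain ⟨e1, e2, e3, e4, -⟩ := addP_none_sound hL hΦ
        intro hp hp' hf hs
        exact h hp hp' (by rw [e1, e2, e3]; exact hf) (by rw [e4]; push_cast; exact hs)
      | some r =>
        obtain ⟨e1, e2⟩ := addP_some_sound hL hΦ
        intro hp hp' hs
        have := h hp hp' (by rw [e1, e2]; push_cast; exact hs)
        rwa [e1] at this
    · simp only [prog, Instr.sweep.injEq] at hq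
      obtain ⟨rfl, rfl⟩ := hq
      cases m with
      | none =>
        obtain ⟨e1, e2, e3, e4, -⟩ := addP_none_sound hL hΦ
        intro hp hp' hf hs
        exact h hp hp' (by rw [e1, e2, e3]; exact hf) (by rw [e4]; omega)
      | some r =>
        obtain ⟨e1, e2⟩ := addP_some_sound hL hΦ
        intro hp hp' hs
        have := h hp hp' (by rw [e1, e2, mul_add]; omega)
        rwa [e1] at this
    · simp only [prog, Instr.sweep.injEq] at hq
      obtain ⟨rfl, rfl⟩ := hq
      cases m with
      | none =>
        obtain ⟨e1, e2, e3, e4, e5⟩ := addP_none_sound hL hΦ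
        intro hp hp' hf hs
        -- counting to `n + 2` within the segment bounds its length from below
        have h1 : logb x.length ≤ cardU L (fun i => (w i).cur) := by
          have : logb x.length < cardU L (fun i => (w i).cur) + 1 :=
            Nat.log_lt_of_lt_pow (by omega) (by omega)
          omega
        exact h hp hp' (by rw [e1, e3, add_mul]; omega)
      | some r =>
        obtain ⟨e1, e2⟩ := addP_some_sound hL hΦ
        intro hp hp' hs
        refine (h hp hp').mono ?_
        rw [e2, pow_succ, mul_comm ((x.length + 2) ^ (r : ℕ)), ← mul_assoc]
        gcongr
        rw [mul_add] at hs ⊢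
        omega
    · simp [prog] at hq
    · simp [prog] at hq
    · cases m with
      | none =>
        simp only [prog, Instr.sweep.injEq] at hq
        obtain ⟨rfl, rfl⟩ := hq
        obtain ⟨hK, hC⟩ := pass_iff.1 hΦ
        intro hp hf
        have h2 := (add_sound hL hC).1
        rw [val_one (f := fun i => ((w' i).dg .y0 : ℕ)) hL] at h2
        change num L w' .y0 + 1 = num L w' .cnt at h2
        rw [num_congr (w := w) (t := .cnt) fun i hi => (hK i hi).2] at h2
        refine h hp ?_
        rw [← h2, cardU_congr fun i hi => (hK i hi).1]
        exact hf
      | some r =>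
        simp only [prog, Instr.sweep.injEq] at hq
        obtain ⟨rfl, rfl⟩ := hq
        obtain ⟨hK, hC⟩ := pass_iff.1 hΦ
        intro hp
        subst hp
        have h1 : num L w' .x = num L w .y := num_congr fun i hi => (hK i hi).1
        have h2 := asrt_nxt h (num_null fun i hi => (hK i hi).2)
        rwa [h1] at h2
  · simp [prog] at hq
  · cases k <;> simp only [prog, reduceCtorEq, Instr.sweep.injEq] at hq
    · obtain ⟨rfl, rfl⟩ := hq
      obtain ⟨hK, hC⟩ := pass_iff.1 hΦ
      intro hp hδ a b ha hb
      obtain ⟨v, hv, hvq, hva⟩ := exists_rep hL (fun i hi => (hC i hi).1)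
        fun i hi => (hC i hi).2.1
      have hz : ∀ i < L, (w' i).dg .z = (w i).dg .z := fun i hi => (hK i hi).2.2.2
      have h2 := (add_sound hL fun i hi => (hC i hi).2.2.2.2).1
      rw [val_one (f := fun i => ((w' i).dg .s1 : ℕ) + (w' i).dg .s2 + (w' i).dg .s3) hL,
        val_add, val_add] at h2
      have h3 := h hp hδ a b v (ha.congr (fun i hi => (hK i hi).1) hz)
        (fun e => (hb e).congr (fun i hi => (hK i hi).2.1) hz) hv
        (hv.tr fun i hi => (hC i hi).2.2.1) (hv.tr fun i hi => (hC i hi).2.2.2.1) hvq hva h2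
      rwa [num_congr (w := w) fun i hi => (hK i hi).2.2.1] at h3
    · obtain ⟨rfl, rfl⟩ := hq
      obtain ⟨hK, hC⟩ := pass_iff.1 hΦ
      intro hp a v ha hv
      have hz : ∀ i < L, (w' i).dg .z = (w i).dg .z := fun i hi => (hK i hi).2.2.2
      have h3 := h hp a v (ha.congr (fun i hi => (hK i hi).1) hz)
        (fun _ => hv.congr (fun i hi => (hK i hi).2.1) hz)
      rwa [num_congr (w := w) fun i hi => (hK i hi).2.2.1] at h3
    · obtain ⟨rfl, rfl⟩ := hq
      obtain ⟨hK, hC⟩ := pass_iff.1 hΦ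
      intro hp a v ha hv
      have hz : ∀ i < L, (w' i).dg .z = (w i).dg .z := fun i hi => (hK i hi).2.2.2
      have h3 := h hp a v (ha.congr (fun i hi => (hK i hi).1) hz)
        (fun e => (hv e).congr (fun i hi => (hK i hi).2.1) hz)
      rwa [num_congr (w := w) fun i hi => (hK i hi).2.2.1] at h3
    · intro hp hbin
      rw [if_pos hbin, Instr.sweep.injEq] at hq
      obtain ⟨rfl, rfl⟩ := hq
      obtain ⟨hK, hC⟩ := pass_iff.1 hΦ
      intro a v ha hv
      have hz : ∀ i < L, (w' i).dg .z = (w i).dg .z := fun i hi => (hK i hi).2.2.2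
      have h3 := h hp a v (ha.congr (fun i hi => (hK i hi).1) hz)
        (fun e => (hv e).congr (fun i hi => (hK i hi).2.1) hz)
      rwa [num_congr (w := w) fun i hi => (hK i hi).2.2.1] at h3
  · cases k <;> simp only [prog, reduceCtorEq, Instr.sweep.injEq] at hq
    · obtain ⟨rfl, rfl⟩ := hq
      obtain ⟨hK, hC⟩ := pass_iff.1 hΦ
      intro hp i hi
      have e1 : unum L w' .V = unum L w .V := unum_congr fun i hi => (hK i hi).1
      have e2 : num L w' .z = num L w .z := num_congr fun i hi => (hK i hi).2.1
      have e3 : num L w' .y = num L w .z := num_congr fun i hi => (hK i hi).2.2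
      exact h hp.ge (by omega) i (by omega)
    · obtain ⟨rfl, rfl⟩ := hq
      obtain ⟨hK, hC⟩ := pass_iff.1 hΦ
      intro hp hy i hi
      have e1 : unum L w' .V = unum L w .V := unum_congr fun i hi => (hK i hi).1
      have e2 : num L w' .z = num L w .z := num_congr fun i hi => (hK i hi).2.1
      have h2 := (add_sound hL hC).1
      rw [val_one (f := fun i => ((w' i).dg .y0 : ℕ)) hL] at h2
      change num L w' .y0 + 1 = num L w' .y at h2
      rw [num_congr (w := w) (t := .y) fun i hi => (hK i hi).2.2] at h2
      exact h hp (by omega) i (by omega)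

/-- Acceptance of the simulating machine establishes the assertion of the control point. -/
theorem asrt_of_acc (hL : 0 < L) {q : (sim M c).Q} {p : ℤ} {w : ℕ → (sim M c).S}
    (h : (sim M c).Acc x L q p w) : Asrt (M := M) (c := c) x L q p w := by
  induction h with
  | acc q p w hq =>
    change prog q = _ at hq
    rcases q with k | ⟨k, m⟩ | hh | ⟨k, δ⟩ | ⟨k, σ⟩
    · cases k <;> simp only [prog, reduceCtorEq] at hq
      trivial
    · cases k <;> rcases m with _ | m <;> simp [prog] at hq
    · simp [prog] at hq
    · cases k <;> simp only [prog, reduceCtorEq] at hq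
      split_ifs at hq with hb
      exact fun _ h => absurd h hb
    · cases k <;> simp [prog] at hq
  | fork q q₁ q₂ p w hq h₁ h₂ ih₁ ih₂ => exact asrt_fork hq ih₁ ih₂
  | choose q R q' d p w hq hR h ih => exact asrt_choose hq hR ih
  | sweep q Φ q' p w w' hq hΦ h ih => exact asrt_sweep hL hq hΦ ih

theorem goal_of_acc (hL : 0 < L)
    (h : (sim M c).Acc x L (sim M c).start 0 (fun _ => (sim M c).init)) : Goal M c x L := by
  have h1 : Asrt x L (.z .blk) 0 (fun _ => col0 M c) := asrt_of_acc hL h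
  refine h1 rfl ?_
  rw [num_null fun i _ => rfl]
  simp

end

/-! ### Words encoding given numbers and configurations -/

/-- The information held by a word, apart from the carries: marked cells, configurations and
numbers. -/
structure Abs (M : ATM) where
  used : ℕ → Bool
  cur : ℕ → Bool
  cf : GT → M.Cfg
  nm : DT → ℕ

/-- The bases for measuring the segment `f`. -/
def bSn (f : ℕ → Bool) (i : ℕ) : ℕ := (if i = 0 then 2 else 1) * (if f i then 2 else 1)

/-- Whether a number is stored with the bases for measuring a segment. -/
def isS : DT → Bool
  | .sg | .sg0 => true
  | _ => false

lemma bSn_pos (f : ℕ → Bool) (i : ℕ) : 0 < bSn f i := by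
  unfold bSn; split_ifs <;> norm_num

lemma bSn_le (f : ℕ → Bool) (i : ℕ) : bSn f i ≤ 4 := by
  unfold bSn; split_ifs <;> norm_num

lemma bet_pos (c : ℕ) : 0 < bet c := by have := bet_ge c; omega

section
variable {M : ATM} {c : ℕ} {x : List Bool} {L : ℕ}

/-- The word encoding `S`, with the carries `cy`. -/
def enc (c : ℕ) (S : Abs M) (cy : Fin 4 → ℕ → Fin 4) (i : ℕ) : Col M c where
  used := S.used i
  cur := S.cur i
  sy := fun g => (S.cf g).tape i
  st := fun g => if (i : ℤ) = (S.cf g).wpos then some (S.cf g).state else none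
  u := fun g => ⟨dig (fun _ => bet c) ((S.cf g).ipos + S.nm .z).toNat i,
    dig_lt (fun _ => bet_pos c) _ _⟩
  dg := fun t => ⟨if isS t then dig (bSn S.cur) (S.nm t) i else dig (fun _ => bet c) (S.nm t) i, by
    split_ifs
    · exact (dig_lt (bSn_pos _) _ _).trans_le ((bSn_le _ _).trans (bet_ge c))
    · exact dig_lt (fun _ => bet_pos c) _ _⟩
  cy := fun k => cy k i

/-- Suitable carries exist on track `k` whenever the addition is correct. -/
lemma exists_addC (k : Fin 4) {b a : Bool → Col M c → ℕ} {d : Col M c → ℕ} (S : Abs M)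
    (b' a' : ℕ → ℕ) (N : ℕ)
    (hb : ∀ cy i, b (decide (i = 0)) (enc c S cy i) = b' i)
    (ha : ∀ cy i, a (decide (i = 0)) (enc c S cy i) = a' i)
    (hd : ∀ cy i, d (enc c S cy i) = dig b' N i) (hb0 : ∀ i, 0 < b' i)
    (hle : ∀ i, a' i ≤ 4 * (b' i - 1)) (hv : val b' a' L = N) (hN : N < wt b' L) :
    ∃ C : ℕ → Fin 4, ∀ cy : Fin 4 → ℕ → Fin 4, cy k = C → ∀ i < L,
      addC k b a d (prevc (enc c S cy) i) (decide (i + 1 = L)) (enc c S cy i) := by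
  obtain ⟨C, hC, h1, h2⟩ := exists_carry hb0 (by norm_num : 0 < 4) hle hv hN
  refine ⟨fun i => ⟨C i, hC i⟩, fun cy hcy i hi => ?_⟩
  simp only [addC, prevc_isNone, prevc_cin, decide_eq_true_eq]
  have h3 : ∀ i, ((enc c S cy i).cy k : ℕ) = C i := fun i => by simp [enc, hcy]
  rw [hb, ha, hd, h3]
  simp only [h3]
  refine ⟨h1 i hi, dig_lt hb0 _ _, ?_⟩
  rintro rfl
  exact h2

lemma dig_le {b : ℕ → ℕ} (hb : ∀ i, 0 < b i) (N i : ℕ) : dig b N i ≤ b i - 1 := by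
  have := dig_lt hb N i; omega

/-- Carries for adding one. -/
lemma exists_inc (k : Fin 4) {a : Bool → Col M c → ℕ} {d : Col M c → ℕ} (S : Abs M) (n n' : ℕ)
    (hL : 0 < L)
    (ha : ∀ cy i, a (decide (i = 0)) (enc c S cy i) =
      dig (fun _ => bet c) n i + one (decide (i = 0)))
    (hd : ∀ cy i, d (enc c S cy i) = dig (fun _ => bet c) n' i)
    (hn : n' = n + 1) (hN : n' < bet c ^ L) :
    ∃ C : ℕ → Fin 4, ∀ cy : Fin 4 → ℕ → Fin 4, cy k = C → ∀ i < L,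
      addC k bB a d (prevc (enc c S cy) i) (decide (i + 1 = L)) (enc c S cy i) := by
  have hb := bet_ge c
  refine exists_addC k S (fun _ => bet c) _ n' (fun _ _ => rfl) ha hd (fun _ => by omega)
    (fun i => ?_) ?_ (by rwa [wt_const])
  · have := dig_le (b := fun _ => bet c) (fun _ => bet_pos c) n i
    have h1 : one (decide (i = 0)) ≤ 1 := by unfold one; split_ifs <;> simp
    omega
  · rw [val_one hL, val_dig (by rw [wt_const]; omega), hn]

/-- Carries for adding two numbers. -/
lemma exists_add (k : Fin 4) {a : Bool → Col M c → ℕ} {d : Col M c → ℕ} (S : Abs M) (n₁ n₂ n' : ℕ)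
    (ha : ∀ cy i, a (decide (i = 0)) (enc c S cy i) =
      dig (fun _ => bet c) n₁ i + dig (fun _ => bet c) n₂ i)
    (hd : ∀ cy i, d (enc c S cy i) = dig (fun _ => bet c) n' i)
    (hn : n' = n₁ + n₂) (hN : n' < bet c ^ L) :
    ∃ C : ℕ → Fin 4, ∀ cy : Fin 4 → ℕ → Fin 4, cy k = C → ∀ i < L,
      addC k bB a d (prevc (enc c S cy) i) (decide (i + 1 = L)) (enc c S cy i) := by
  have hb := bet_ge c
  refine exists_addC k S (fun _ => bet c) _ n' (fun _ _ => rfl) ha hd (fun _ => by omega)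
    (fun i => ?_) ?_ (by rwa [wt_const])
  · have h1 := dig_le (b := fun _ => bet c) (fun _ => bet_pos c) n₁ i
    have h2 := dig_le (b := fun _ => bet c) (fun _ => bet_pos c) n₂ i
    omega
  · rw [val_add, val_dig (by rw [wt_const]; omega), val_dig (by rw [wt_const]; omega), hn]

lemma exists_headC (k : Fin 4) (g : GT) (S : Abs M) (h : M.CfgOk L (S.cf g)) :
    ∃ C : ℕ → Fin 4, ∀ cy : Fin 4 → ℕ → Fin 4, cy k = C → ∀ i < L,
      headC k g (prevc (enc c S cy) i) (decide (i + 1 = L)) (enc c S cy i) := by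
  obtain ⟨j, hj⟩ : ∃ j : ℕ, (j : ℤ) = (S.cf g).wpos := ⟨_, Int.toNat_of_nonneg h.1⟩
  have hjL := h.2.1
  refine ⟨fun i => if j ≤ i then 1 else 0, fun cy hcy i hi => ?_⟩
  simp only [headC, prevc_cin, decide_eq_true_eq]
  have h3 : ∀ i, ((enc c S cy i).cy k : ℕ) = if j ≤ i then 1 else 0 := fun i => by
    simp only [enc, hcy]; split_ifs <;> rfl
  have h4 : ((enc c S cy i).st g).isSome = decide (i = j) := by
    simp only [enc, ← hj]
    by_cases e : i = j <;> simp [e]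
  rw [h4, h3]
  simp only [h3]
  constructor
  · cases i with
    | zero => simp only [cin]; by_cases e : j = 0 <;> simp [e, eq_comm]
    | succ i =>
      simp only [cin, decide_eq_true_eq]
      split_ifs <;> omega
  · intro e
    rw [if_pos (by omega)]

lemma exists_trC (k : Fin 4) (g h : GT) (tr : Tr M) (S : Abs M) (hL : 0 < L)
    (hh : S.cf h = M.applyTr (S.cf g) tr) (hg : M.CfgOk L (S.cf g)) (hok : M.CfgOk L (S.cf h))
    (hz : 0 ≤ (S.cf g).ipos + S.nm .z) (hz' : 0 ≤ (S.cf h).ipos + S.nm .z)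
    (hb : (S.cf g).ipos + S.nm .z < (bet c ^ L : ℕ))
    (hb' : (S.cf h).ipos + S.nm .z < (bet c ^ L : ℕ)) :
    ∃ C : ℕ → Fin 4, ∀ cy : Fin 4 → ℕ → Fin 4, cy k = C → ∀ i < L,
      trC k g h tr (prevc (enc c S cy) i) (decide (i + 1 = L)) (enc c S cy i) := by
  obtain ⟨q', a', di, dw⟩ := tr
  have hip : (S.cf h).ipos = moveDir (S.cf g).ipos di := by rw [hh]; rfl
  have hwp : (S.cf h).wpos = moveDir (S.cf g).wpos dw := by rw [hh]; rfl
  have hstt : (S.cf h).state = q' := by rw [hh]; rfl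
  have htp : (S.cf h).tape = Function.update (S.cf g).tape (S.cf g).wpos a' := by rw [hh]; rfl
  have hu : ∃ C : ℕ → Fin 4, ∀ cy : Fin 4 → ℕ → Fin 4, cy k = C → ∀ i < L,
      (match di with
      | .stay => (enc c S cy i).u h = (enc c S cy i).u g
      | .right => addC k bB (fun f n => (n.u g : ℕ) + one f) (fun n => (n.u h : ℕ))
          (prevc (enc c S cy) i) (decide (i + 1 = L)) (enc c S cy i)
      | .left => addC k bB (fun f n => (n.u h : ℕ) + one f) (fun n => (n.u g : ℕ))
          (prevc (enc c S cy) i) (decide (i + 1 = L)) (enc c S cy i)) := by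
    cases di with
    | stay => exact ⟨fun _ => 0, fun cy _ i _ => by simp [enc, hip, moveDir]⟩
    | right =>
      simp only [moveDir] at hip
      exact exists_inc k S ((S.cf g).ipos + S.nm .z).toNat ((S.cf h).ipos + S.nm .z).toNat hL
        (fun _ _ => rfl) (fun _ _ => rfl) (by omega) (by omega)
    | left =>
      simp only [moveDir] at hip
      exact exists_inc k S ((S.cf h).ipos + S.nm .z).toNat ((S.cf g).ipos + S.nm .z).toNat hL
        (fun _ _ => rfl) (fun _ _ => rfl) (by omega) (by omega)
  obtain ⟨C, hC⟩ := hu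
  refine ⟨C, fun cy hcy i hi =>
    ⟨?_, ?_, ?_, by have := hC cy hcy i hi; cases di <;> exact this⟩⟩
  · simp only [enc, htp, Function.update_apply]
    split_ifs <;> simp_all
  · intro q hq
    simp only [enc] at hq
    split_ifs at hq
    simp only [Option.some.injEq] at hq
    rw [← hq, hstt]
  · have hs : ∀ (g : GT) (i : ℕ), ((enc c S cy i).st g).isSome =
        decide ((i : ℤ) = (S.cf g).wpos) := by
      intro g i
      simp only [enc]; split_ifs with e <;> simp [e]
    have hn : ∀ (g : GT) (i : ℕ), (enc c S cy i).st g = none ↔ (i : ℤ) ≠ (S.cf g).wpos := by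
      intro g i
      simp only [enc]; split_ifs with e <;> simp [e]
    have hp : ∀ g : GT, ((prevc (enc c S cy) i).elim false fun m => (m.st g).isSome) =
        decide (0 < i ∧ (i : ℤ) = (S.cf g).wpos + 1) := by
      intro g
      cases i with
      | zero => simp [prevc]
      | succ i => simp [prevc, hs]
    have hg0 := hg.1
    have hg1 := hg.2.1
    have hh0 := hok.1
    have hh1 := hok.2.1
    cases dw <;> simp only [moveDir] at hwp <;> simp only [hs, hn, hp, decide_eq_decide,
      decide_eq_true_eq] <;> omega

lemma sweep_enc {K : Col M c → Col M c → Prop} {C : Option (Col M c) → Bool → Col M c → Prop}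
    {S S' : Abs M} {cy cy' : Fin 4 → ℕ → Fin 4} (hK : ∀ i < L, K (enc c S cy i) (enc c S' cy' i))
    (hC : ∀ i < L, C (prevc (enc c S' cy') i) (decide (i + 1 = L)) (enc c S' cy' i)) :
    SweepRel (pass K C) L (enc c S cy) (enc c S' cy') := pass_iff.2 ⟨hK, hC⟩

/-- Bounded acceptance of the simulating machine. -/
def AB (x : List Bool) (L m d j : ℕ) (q : Lab M c) (p : ℤ) (w : ℕ → Col M c) : Prop :=
  (sim M c).AccB x L m d j q p w

variable {m d j : ℕ} {q q' q₁ q₂ : Lab M c} {p : ℤ} {w w' : ℕ → Col M c}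

lemma AB.acc (hq : prog q = .acc) : AB x L m d j q p w := SweepMachine.AccB.acc _ _ _ _ _ hq

lemma AB.fork (hq : prog q = .fork q₁ q₂) (h₁ : AB x L m d m q₁ p w)
    (h₂ : AB x L m d m q₂ p w) : AB x L m (d + 1) j q p w :=
  SweepMachine.AccB.fork _ _ _ _ _ _ _ hq h₁ h₂

lemma AB.choose {R} (dir : Dir) (hq : prog q = .choose R) (hR : R (inputAt x p) q' dir)
    (h : AB x L m d j q' (moveDir p dir) w) : AB x L m d (j + 1) q p w :=
  SweepMachine.AccB.choose _ _ _ _ _ _ _ _ hq hR h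

lemma AB.sweep {Φ} (hq : prog q = .sweep Φ q') (hΦ : SweepRel Φ L w w')
    (h : AB x L m d j q' p w') : AB x L m d (j + 1) q p w :=
  SweepMachine.AccB.sweep _ _ _ _ _ _ _ _ hq hΦ h

lemma AB.mono (h : AB x L m d j q p w) {d' j' : ℕ} (hd : d ≤ d') (hj : j ≤ j') :
    AB x L m d' j' q p w := SweepMachine.AccB.mono h _ _ hd hj

end

/-! ### Balanced splitting of computation trees -/

section
variable {M : ATM} {c : ℕ} {x : List Bool} {L : ℕ}

/-- `Fr M x P a H s`: there is a fragment of an accepting computation tree, with root `a` and `s`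
nodes, all satisfying `P`; if `H = some b`, one subtree has been cut off, at the configuration `b`,
which is not counted. -/
inductive Fr (M : ATM) (x : List Bool) (P : M.Cfg → Prop) : M.Cfg → Option M.Cfg → ℕ → Prop
  | hole (a) (hP : P a) : Fr M x P a (some a) 0
  | leaf (a) (hP : P a) (h : M.accept a.state) : Fr M x P a none 1
  | estep (a tr H s) (hP : P a) (hne : ¬ M.univ a.state)
      (htr : M.trans a.state (inputAt x a.ipos) (a.tape a.wpos) tr)
      (h : Fr M x P (M.applyTr a tr) H s) : Fr M x P a H (s + 1)
  | ustepL (a H s₁ s₂) (hP : P a) (hu : M.univ a.state)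
      (h₁ : Fr M x P (M.applyTr a (M.utrans a.state (inputAt x a.ipos) (a.tape a.wpos)).1) H s₁)
      (h₂ : Fr M x P (M.applyTr a (M.utrans a.state (inputAt x a.ipos) (a.tape a.wpos)).2) none s₂) :
      Fr M x P a H (s₁ + s₂ + 1)
  | ustepR (a H s₁ s₂) (hP : P a) (hu : M.univ a.state)
      (h₁ : Fr M x P (M.applyTr a (M.utrans a.state (inputAt x a.ipos) (a.tape a.wpos)).1) none s₁)
      (h₂ : Fr M x P (M.applyTr a (M.utrans a.state (inputAt x a.ipos) (a.tape a.wpos)).2) H s₂) :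
      Fr M x P a H (s₁ + s₂ + 1)

variable {P : M.Cfg → Prop}

lemma Fr.root {a : M.Cfg} {H : Option M.Cfg} {s : ℕ} (h : Fr M x P a H s) : P a := by
  cases h <;> assumption

/-- The node `v` starts a fragment of size `s` with hole `H`, such that the fragment at its
successor (at both successors, if there is no hole) towards the hole has size at most `θ`. -/
def Light (M : ATM) (x : List Bool) (P : M.Cfg → Prop) (θ : ℕ) (v : M.Cfg) (H : Option M.Cfg)
    (s : ℕ) : Prop :=
  (¬ M.univ v.state ∧ ∃ tr s₁, M.trans v.state (inputAt x v.ipos) (v.tape v.wpos) tr ∧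
    Fr M x P (M.applyTr v tr) H s₁ ∧ s₁ ≤ θ ∧ s = s₁ + 1) ∨
  (M.univ v.state ∧ ∃ tr₁ tr₂ s₁ s₂,
    M.utrans v.state (inputAt x v.ipos) (v.tape v.wpos) = (tr₁, tr₂) ∧ s = s₁ + s₂ + 1 ∧
    ((Fr M x P (M.applyTr v tr₁) H s₁ ∧ Fr M x P (M.applyTr v tr₂) none s₂ ∧ s₁ ≤ θ ∧
        (H = none → s₂ ≤ θ)) ∨
      (Fr M x P (M.applyTr v tr₁) none s₁ ∧ Fr M x P (M.applyTr v tr₂) H s₂ ∧ s₂ ≤ θ ∧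
        (H = none → s₁ ≤ θ))))

/-- Walking down towards the hole, or into the larger successor if there is none, one finds the last
node whose fragment has more than `θ` nodes. -/
lemma Fr.split {a : M.Cfg} {H : Option M.Cfg} {s : ℕ} (h : Fr M x P a H s) (θ : ℕ) (hθ : θ < s)
    (hH : H = none → 1 ≤ θ) : ∃ v s₁ s', Fr M x P a (some v) s₁ ∧ s₁ + s' = s ∧ θ < s' ∧ P v ∧
      Light M x P θ v H s' := by
  induction h with
  | hole a hP => omega
  | leaf a hP h => have := hH rfl; omega
  | estep a tr H s hP hne htr h ih =>
    by_cases hs : θ < s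
    · obtain ⟨v, s₁, s', h1, h2, h3, h4⟩ := ih hs hH
      exact ⟨v, s₁ + 1, s', .estep _ _ _ _ hP hne htr h1, by omega, h3, h4⟩
    · exact ⟨a, 0, s + 1, .hole a hP, by omega, by omega, hP,
        .inl ⟨hne, tr, s, htr, h, by omega, rfl⟩⟩
  | ustepL a H s₁ s₂ hP hu h₁ h₂ ih₁ ih₂ =>
    by_cases hs : θ < s₁
    · obtain ⟨v, t₁, s', h1, h2, h3, h4⟩ := ih₁ hs hH
      exact ⟨v, t₁ + s₂ + 1, s', .ustepL _ _ _ _ hP hu h1 h₂, by omega, h3, h4⟩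
    by_cases hs' : H = none ∧ θ < s₂
    · obtain ⟨rfl, hs'⟩ := hs'
      obtain ⟨v, t₁, s', h1, h2, h3, h4⟩ := ih₂ hs' hH
      exact ⟨v, s₁ + t₁ + 1, s', .ustepR _ _ _ _ hP hu h₁ h1, by omega, h3, h4⟩
    · refine ⟨a, 0, s₁ + s₂ + 1, .hole a hP, by omega, by omega, hP,
        .inr ⟨hu, _, _, s₁, s₂, rfl, rfl, .inl ⟨h₁, h₂, by omega, fun e => ?_⟩⟩⟩
      by_contra h
      exact hs' ⟨e, by omega⟩
  | ustepR a H s₁ s₂ hP hu h₁ h₂ ih₁ ih₂ =>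
    by_cases hs : θ < s₂
    · obtain ⟨v, t₁, s', h1, h2, h3, h4⟩ := ih₂ hs hH
      exact ⟨v, s₁ + t₁ + 1, s', .ustepR _ _ _ _ hP hu h₁ h1, by omega, h3, h4⟩
    by_cases hs' : H = none ∧ θ < s₁
    · obtain ⟨rfl, hs'⟩ := hs'
      obtain ⟨v, t₁, s', h1, h2, h3, h4⟩ := ih₁ hs' hH
      exact ⟨v, t₁ + s₂ + 1, s', .ustepL _ _ _ _ hP hu h1 h₂, by omega, h3, h4⟩
    · refine ⟨a, 0, s₁ + s₂ + 1, .hole a hP, by omega, by omega, hP,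
        .inr ⟨hu, _, _, s₁, s₂, rfl, rfl, .inr ⟨h₁, h₂, by omega, fun e => ?_⟩⟩⟩
      by_contra h
      exact hs' ⟨e, by omega⟩

/-- The invariant of configurations: they fit into space `L`, and the input head is at most `Z` away
from its start. -/
def Bd (M : ATM) (L Z : ℕ) (a : M.Cfg) : Prop :=
  M.CfgOk L a ∧ -(Z : ℤ) ≤ a.ipos ∧ a.ipos ≤ Z

lemma applyTr_bd (a : M.Cfg) (tr : Tr M) :
    a.ipos - 1 ≤ (M.applyTr a tr).ipos ∧ (M.applyTr a tr).ipos ≤ a.ipos + 1 := by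
  obtain ⟨q, b, d, d'⟩ := tr
  cases d <;> simp only [ATM.applyTr, moveDir] <;> omega

lemma fr_of_tree {t : CTree M.Cfg} (ht : M.ValidTree x t) {Z : ℕ} (hok : t.Forall (M.CfgOk L))
    (h1 : -(Z : ℤ) ≤ t.root.ipos - t.size) (h2 : t.root.ipos + t.size ≤ Z) :
    Fr M x (Bd M L Z) t.root none t.size := by
  induction ht with
  | leaf a h =>
    simp only [CTree.root, CTree.size] at h1 h2
    exact .leaf a ⟨hok, by omega, by omega⟩ h
  | estep a tr t hne htr hroot ht ih =>
    simp only [CTree.root, CTree.size] at h1 h2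
    obtain ⟨ha, hok⟩ := hok
    have hb := applyTr_bd a tr
    rw [← hroot] at hb
    have := ih hok (by omega) (by omega)
    rw [hroot] at this
    have h3 := Fr.estep a tr none t.size ⟨ha, by omega, by omega⟩ hne htr this
    simpa only [CTree.root, CTree.size, add_comm] using h3
  | ustep a l r hu hl hr hlv hrv ihl ihr =>
    simp only [CTree.root, CTree.size] at h1 h2
    obtain ⟨ha, hokl, hokr⟩ := hok
    have hbl := applyTr_bd a (M.utrans a.state (inputAt x a.ipos) (a.tape a.wpos)).1
    have hbr := applyTr_bd a (M.utrans a.state (inputAt x a.ipos) (a.tape a.wpos)).2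
    rw [← hl] at hbl
    rw [← hr] at hbr
    have h4 := ihl hokl (by omega) (by omega)
    have h5 := ihr hokr (by omega) (by omega)
    rw [hl] at h4
    rw [hr] at h5
    have h3 := Fr.ustepL a none _ _ ⟨ha, by omega, by omega⟩ hu h4 h5
    have e : (CTree.node2 a l r).size = l.size + r.size + 1 := by simp only [CTree.size]
    rw [e]
    exact h3

/-! ### Completeness of the recursive verification -/

section
variable {m d Z : ℕ} {S : Abs M} {cy : Fin 4 → ℕ → Fin 4}

lemma chkL_complete (hL : 0 < L) (hz : S.nm .z < bet c ^ L)
    (h1 : 0 ≤ (S.cf .V).ipos + S.nm .z) (h2 : (S.cf .V).ipos < 0) (p : ℤ) :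
    AB x L m d 1 (.z .chkL) p (enc c S cy) := by
  have hb := bet_ge c
  set n := ((S.cf .V).ipos + S.nm .z).toNat with hn
  let S' : Abs M := { S with nm := fun
    | .r => S.nm .z - n - 1
    | t => S.nm t }
  obtain ⟨C, hC⟩ := exists_addC (c := c) (L := L) 0
    (b := bB) (a := fun f n => (n.u .V : ℕ) + n.dg .r + one f) (d := fun n => n.dg .z) S'
    (fun _ => bet c) (fun i => dig (fun _ => bet c) n i +
      dig (fun _ => bet c) (S.nm .z - n - 1) i + one (decide (i = 0))) (S.nm .z)
    (fun _ _ => rfl) (fun _ _ => rfl) (fun _ _ => rfl) (fun _ => bet_pos c)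
    (fun i => by
      have h1 := dig_le (b := fun _ => bet c) (fun _ => bet_pos c) n i
      have h2 := dig_le (b := fun _ => bet c) (fun _ => bet_pos c) (S.nm .z - n - 1) i
      have h3 : one (decide (i = 0)) ≤ 1 := by unfold one; split_ifs <;> simp
      omega)
    (by
      rw [val_one (f := fun i => dig (fun _ => bet c) n i +
        dig (fun _ => bet c) (S.nm .z - n - 1) i) hL, val_add,
        val_dig (by rw [wt_const]; omega), val_dig (by rw [wt_const]; omega)]
      omega)
    (by rwa [wt_const])
  exact AB.sweep (w' := enc c S' fun _ => C) rfl
    (sweep_enc (fun i _ => ⟨rfl, rfl⟩) (hC _ rfl)) (AB.acc rfl)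

lemma cwEq_complete (h1 : ((S.cf .V).ipos + S.nm .z).toNat = S.nm .y) (p : ℤ) :
    AB x L m d 1 (.z .cwEq) p (enc c S cy) := by
  refine AB.sweep (w' := enc c S cy) rfl (sweep_enc (fun i _ => rfl) fun i _ => ?_) (AB.acc rfl)
  ext
  simp [enc, h1, isS]

lemma cwGe_complete (h1 : (S.nm .y : ℤ) ≤ (S.cf .V).ipos + S.nm .z)
    (h2 : (S.cf .V).ipos + S.nm .z < (bet c ^ L : ℕ)) (p : ℤ) :
    AB x L m d 1 (.z .cwGe) p (enc c S cy) := by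
  let S' : Abs M := { S with nm := fun
    | .r => ((S.cf .V).ipos + S.nm .z).toNat - S.nm .y
    | t => S.nm t }
  obtain ⟨C, hC⟩ := exists_add (c := c) (L := L) 0 (a := fun _ n => (n.dg .y : ℕ) + n.dg .r)
    (d := fun n => (n.u .V : ℕ)) S' (S.nm .y) (((S.cf .V).ipos + S.nm .z).toNat - S.nm .y)
    ((S.cf .V).ipos + S.nm .z).toNat
    (fun _ _ => rfl) (fun _ _ => rfl) (by omega) (by omega)
  exact AB.sweep (w' := enc c S' fun _ => C) rfl
    (sweep_enc (fun i _ => ⟨rfl, rfl⟩) (hC _ rfl)) (AB.acc rfl)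

lemma cw_complete (hL : 0 < L) (hZ : 3 * Z < bet c ^ L) (hn : x.length ≤ Z)
    {σ : Option Bool} (k : ℕ) : ∀ (S : Abs M) (cy) (p : ℕ), S.nm .z = Z → 0 ≤ (S.cf .V).ipos →
      (S.cf .V).ipos ≤ Z → inputAt x (S.cf .V).ipos = σ → S.nm .y = Z + p →
      p + k = min (S.cf .V).ipos.toNat x.length →
      AB x L m d (2 * k + 2) (.ck .cw σ) p (enc c S cy) := by
  induction k with
  | zero =>
    intro S cy p hz h0 h1 hσ hy hp
    by_cases h : (S.cf .V).ipos ≤ x.length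
    · have e : (S.cf .V).ipos = p := by omega
      exact AB.choose (q' := .z .cwEq) .stay rfl (.inr (.inl ⟨by rw [← hσ, e], rfl, rfl⟩))
        (cwEq_complete (by omega) _)
    · have e1 : inputAt x (S.cf .V).ipos = none := inputAt_eq_none.2 (by omega)
      exact AB.choose (q' := .z .cwGe) .stay rfl (.inr (.inr ⟨hσ.symm.trans e1,
        inputAt_eq_none.2 (by omega), rfl, rfl⟩)) (cwGe_complete (by omega) (by omega) _)
  | succ k ih =>
    intro S cy p hz h0 h1 hσ hy hp
    let S' : Abs M := { S with nm := fun
      | .y0 => S.nm .y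
      | .y => S.nm .y + 1
      | t => S.nm t }
    obtain ⟨C, hC⟩ := exists_inc (c := c) (L := L) 0 (a := fun f n => (n.dg .y0 : ℕ) + one f)
      (d := fun n => (n.dg .y : ℕ)) S' (S.nm .y) (S.nm .y + 1) hL
      (fun _ _ => rfl) (fun _ _ => rfl) rfl (by omega)
    have h3 := ih S' (fun _ => C) (p + 1) hz h0 h1 hσ (by change S.nm .y + 1 = _; omega)
      (by change p + 1 + k = min (S.cf .V).ipos.toNat x.length; omega)
    exact AB.choose (j := 2 * k + 3) (q' := .ck .cwadd σ) .right rfl (.inl ⟨rfl, rfl⟩)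
      (AB.sweep (w' := enc c S' fun _ => C) rfl
        (sweep_enc (fun i _ => ⟨rfl, rfl, rfl⟩) (hC _ rfl)) h3)

lemma chk_complete (hL : 0 < L) (hZ : 3 * Z < bet c ^ L) (hn : x.length ≤ Z)
    (hz : S.nm .z = Z) (hV : Bd M L Z (S.cf .V)) (hm : 2 * x.length + 4 ≤ m) :
    AB x L m d m (.ck .chk (inputAt x (S.cf .V).ipos)) 0 (enc c S cy) := by
  obtain ⟨-, hV1, hV2⟩ := hV
  by_cases h : (S.cf .V).ipos < 0
  · refine AB.mono (d := d) (j := 2) ?_ le_rfl (by omega)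
    exact AB.choose (q' := .z .chkL) .stay rfl
      ⟨rfl, .inl ⟨inputAt_eq_none.2 (.inl h), rfl⟩⟩
      (chkL_complete hL (by omega) (by omega) h _)
  · let S' : Abs M := { S with nm := fun
      | .y => S.nm .z
      | t => S.nm t }
    refine AB.mono (d := d)
      (j := 2 * (min (S.cf .V).ipos.toNat x.length) + 2 + 2) ?_ le_rfl (by omega)
    refine AB.choose (q' := .ck .chk0 _) .stay rfl ⟨rfl, .inr rfl⟩ ?_
    refine AB.sweep (w' := enc c S' fun _ _ => 0) rfl
      (sweep_enc (fun i _ => ⟨rfl, rfl, rfl⟩) fun _ _ => trivial) ?_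
    exact cw_complete hL hZ hn _ S' _ 0 hz (by change 0 ≤ (S.cf .V).ipos; omega) hV2 rfl hz
      (by rw [zero_add])

/-- One round of splitting, given that the machine accepts on the parts. -/
lemma split_complete (hL : 0 < L) (hZ : 3 * Z < bet c ^ L) (hn : x.length ≤ Z)
    (hz : S.nm .z = Z) (hs : S.nm .s ≤ Z) (hm : 2 * x.length + 4 ≤ m) {δ : Spl M} (hδ : δ.Valid)
    {v : M.Cfg} (hv : Bd M L Z v) (hq : v.state = δ.q) (ha : v.tape v.wpos = δ.a)
    (hσ : inputAt x v.ipos = δ.σ) (hv1 : Bd M L Z (M.applyTr v δ.tr1))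
    (hv2 : Bd M L Z (M.applyTr v δ.tr2)) {s₁ s₂ s₃ : ℕ} (hsum : s₁ + s₂ + s₃ + 1 = S.nm .s)
    (h1 : ∀ (S' : Abs M) cy', S'.cf .A = S.cf .A → S'.cf .B = v → S'.nm .s = s₁ → S'.nm .z = Z →
      AB x L m d 2 (.node true) 0 (enc c S' cy'))
    (h2 : ∀ (S' : Abs M) cy', S'.cf .A = M.applyTr v δ.tr1 → S'.cf .B = S.cf .B →
      S'.nm .s = s₂ → S'.nm .z = Z → AB x L m d 2 (.node δ.h2) 0 (enc c S' cy'))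
    (h3 : δ.bin = true → ∀ (S' : Abs M) cy', S'.cf .A = M.applyTr v δ.tr2 → S'.cf .B = S.cf .B →
      S'.nm .s = s₃ → S'.nm .z = Z → AB x L m d 2 (.node δ.h3) 0 (enc c S' cy')) :
    AB x L m (d + 2) 2 (.node δ.h) 0 (enc c S cy) := by
  have hb := bet_ge c
  let S' : Abs M := { S with
    cf := fun
      | .A => S.cf .A
      | .B => S.cf .B
      | .V => v
      | .V1 => M.applyTr v δ.tr1
      | .V2 => M.applyTr v δ.tr2
    nm := fun
      | .s1 => s₁
      | .s2 => s₂
      | .s3 => s₃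
      | t => S.nm t }
  obtain ⟨hvo, hvl, hvr⟩ := hv
  obtain ⟨hvo1, hvl1, hvr1⟩ := hv1
  obtain ⟨hvo2, hvl2, hvr2⟩ := hv2
  obtain ⟨C0, hC0⟩ := exists_headC (c := c) 0 .V S' hvo
  obtain ⟨C1, hC1⟩ := exists_addC (c := c) (L := L) 1 (b := bB)
    (a := fun f n => (n.dg .s1 : ℕ) + n.dg .s2 + n.dg .s3 + one f) (d := fun n => n.dg .s) S'
    (fun _ => bet c) (fun i => dig (fun _ => bet c) s₁ i + dig (fun _ => bet c) s₂ i +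
      dig (fun _ => bet c) s₃ i + one (decide (i = 0))) (S.nm .s)
    (fun _ _ => rfl) (fun _ _ => rfl) (fun _ _ => rfl) (fun _ => bet_pos c)
    (fun i => by
      have h1 := dig_le (b := fun _ => bet c) (fun _ => bet_pos c) s₁ i
      have h2 := dig_le (b := fun _ => bet c) (fun _ => bet_pos c) s₂ i
      have h4 := dig_le (b := fun _ => bet c) (fun _ => bet_pos c) s₃ i
      have h3 : one (decide (i = 0)) ≤ 1 := by unfold one; split_ifs <;> simp
      omega)
    (by
      rw [val_one (f := fun i => dig (fun _ => bet c) s₁ i + dig (fun _ => bet c) s₂ i +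
        dig (fun _ => bet c) s₃ i) hL, val_add, val_add,
        val_dig (by rw [wt_const]; omega), val_dig (by rw [wt_const]; omega),
        val_dig (by rw [wt_const]; omega)]
      omega)
    (by rw [wt_const]; omega)
  have hz' : (S.nm .z : ℤ) = Z := by rw [hz]
  have e0 : S'.nm .z = S.nm .z := rfl
  obtain ⟨C2, hC2⟩ := exists_trC (c := c) 2 .V .V1 δ.tr1 S' hL rfl hvo hvo1
    (by rw [e0]; change 0 ≤ v.ipos + _; omega)
    (by rw [e0]; change 0 ≤ (M.applyTr v δ.tr1).ipos + _; omega)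
    (by rw [e0]; change v.ipos + _ < _; omega)
    (by rw [e0]; change (M.applyTr v δ.tr1).ipos + _ < _; omega)
  obtain ⟨C3, hC3⟩ := exists_trC (c := c) 3 .V .V2 δ.tr2 S' hL rfl hvo hvo2
    (by rw [e0]; change 0 ≤ v.ipos + _; omega)
    (by rw [e0]; change 0 ≤ (M.applyTr v δ.tr2).ipos + _; omega)
    (by rw [e0]; change v.ipos + _ < _; omega)
    (by rw [e0]; change (M.applyTr v δ.tr2).ipos + _ < _; omega)
  let cy' : Fin 4 → ℕ → Fin 4 := ![C0, C1, C2, C3]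
  refine AB.choose (q' := .sp .split δ) .stay rfl ⟨rfl, .inr (.inr ⟨δ, hδ, rfl, rfl⟩)⟩ ?_
  refine AB.sweep (w' := enc c S' cy') rfl (sweep_enc
    (fun i _ => ⟨⟨rfl, rfl, rfl⟩, ⟨rfl, rfl, rfl⟩, rfl, rfl⟩)
    (fun i hi => ⟨?_, hC0 cy' rfl i hi, hC2 cy' rfl i hi, hC3 cy' rfl i hi,
      hC1 cy' rfl i hi⟩)) ?_
  · intro q' hq'
    change (if (i : ℤ) = v.wpos then some v.state else none) = _ at hq'
    split_ifs at hq' with e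
    refine ⟨by rw [← hq]; simpa using hq'.symm, ?_⟩
    change v.tape i = δ.a
    rw [e, ha]
  refine AB.fork rfl (AB.fork rfl ?_ ?_) (AB.fork rfl ?_ ?_)
  · let T : Abs M := { S' with
      cf := fun
        | .A => S.cf .A
        | .B => v
        | g => S'.cf g
      nm := fun
        | .s => s₁
        | t => S'.nm t }
    refine AB.mono (j := 3) ?_ le_rfl (by omega)
    exact AB.sweep (w' := enc c T cy') rfl (sweep_enc
      (fun i _ => ⟨⟨rfl, rfl, rfl⟩, ⟨rfl, rfl, rfl⟩, rfl, rfl⟩) fun _ _ => trivial)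
      (h1 T _ rfl rfl rfl hz)
  · have := chk_complete (c := c) (S := S') (cy := cy') (d := d) hL hZ hn hz
      ⟨hvo, hvl, hvr⟩ hm
    rw [show (S'.cf .V).ipos = v.ipos from rfl, hσ] at this
    exact this
  · let T : Abs M := { S' with
      cf := fun
        | .A => M.applyTr v δ.tr1
        | g => S'.cf g
      nm := fun
        | .s => s₂
        | t => S'.nm t }
    refine AB.mono (j := 3) ?_ le_rfl (by omega)
    exact AB.sweep (w' := enc c T cy') rfl (sweep_enc
      (fun i _ => ⟨⟨rfl, rfl, rfl⟩, ⟨rfl, rfl, rfl⟩, rfl, rfl⟩) fun _ _ => trivial)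
      (h2 T _ rfl rfl rfl hz)
  · by_cases hbin : δ.bin = true
    · let T : Abs M := { S' with
        cf := fun
          | .A => M.applyTr v δ.tr2
          | g => S'.cf g
        nm := fun
          | .s => s₃
          | t => S'.nm t }
      refine AB.mono (j := 3) ?_ le_rfl (by omega)
      have e : prog (c := c) (.sp .cp3 δ) = _ := if_pos hbin
      exact AB.sweep (w' := enc c T cy') e (sweep_enc
        (fun i _ => ⟨⟨rfl, rfl, rfl⟩, ⟨rfl, rfl, rfl⟩, rfl, rfl⟩) fun _ _ => trivial)
        (h3 hbin T _ rfl rfl rfl hz)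
    · exact AB.acc (by simp only [prog, if_neg hbin])

lemma hole_complete (h : S.cf .A = S.cf .B) : AB x L m d 2 (.node true) 0 (enc c S cy) := by
  refine AB.choose (q' := .z .bHole) .stay rfl ⟨rfl, .inl ⟨rfl, rfl⟩⟩ ?_
  refine AB.sweep (w' := enc c S cy) rfl (sweep_enc (fun _ _ => rfl) fun i _ => ?_) (AB.acc rfl)
  simp [cpG, enc, h]

lemma leaf_complete (hL : 0 < L) (h : M.accept (S.cf .A).state) (h1 : 1 ≤ S.nm .s)
    (h2 : S.nm .s < bet c ^ L) : AB x L m d 2 (.node false) 0 (enc c S cy) := by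
  refine AB.choose (q' := .z .bAcc) .stay rfl ⟨rfl, .inr (.inl ⟨rfl, rfl⟩)⟩ ?_
  let S' : Abs M := { S with nm := fun
    | .r => S.nm .s - 1
    | t => S.nm t }
  obtain ⟨C, hC⟩ := exists_inc (c := c) (L := L) 0 (a := fun f n => (n.dg .r : ℕ) + one f)
    (d := fun n => (n.dg .s : ℕ)) S' (S.nm .s - 1) (S.nm .s) hL
    (fun _ _ => rfl) (fun _ _ => rfl) (by omega) h2
  refine AB.sweep (w' := enc c S' fun _ => C) rfl (sweep_enc (fun _ _ => ⟨rfl, rfl⟩)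
    fun i hi => ⟨fun q hq => ?_, hC _ rfl i hi⟩) (AB.acc rfl)
  change (if (i : ℤ) = (S.cf .A).wpos then some (S.cf .A).state else none) = _ at hq
  split_ifs at hq
  simp only [Option.some.injEq] at hq
  rwa [← hq]

lemma size_half {s : ℕ} (hs : 1 ≤ s) : Nat.size (s / 2) + 1 = Nat.size s := by
  have : Nat.bit s.bodd (s / 2) = s := by
    rw [← Nat.div2_val]; exact Nat.bit_bodd_div2 s
  conv_rhs => rw [← this]
  rw [Nat.size_bit (by omega)]

/-- The number of forks used to verify a fragment of size `s` with a hole (`h = true`) or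
without. -/
def dep (h : Bool) (s : ℕ) : ℕ := 4 * Nat.size s + if h then 2 else 0

/-- Splitting at half the size, a fragment without hole falls into parts of half the size, and so
does a fragment with hole, except for one part which has no hole. Hence the number of forks is
logarithmic in the size. -/
theorem node_complete (hL : 0 < L) (hZ : 3 * Z < bet c ^ L) (hn : x.length ≤ Z)
    (hm : 2 * x.length + 4 ≤ m) (s : ℕ) : ∀ (a : M.Cfg) (H : Option M.Cfg),
    Fr M x (Bd M L Z) a H s → ∀ (S : Abs M) cy, S.cf .A = a → (∀ b, H = some b → S.cf .B = b) →
    s ≤ S.nm .s → S.nm .s ≤ Z → S.nm .z = Z →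
    AB x L m (dep H.isSome s) 2 (.node H.isSome) 0 (enc c S cy) := by
  induction s using Nat.strong_induction_on with
  | _ s IH =>
  intro a H hF S cy hA hB hs hsZ hz
  by_cases hbase : s = 0 ∨ (H = none ∧ s = 1)
  · cases hF with
    | hole a hP => exact hole_complete (by rw [hA, hB _ rfl])
    | leaf a hP h => exact leaf_complete hL (by rwa [hA]) hs (by omega)
    | estep _ tr _ s₁ hP hne htr h =>
      obtain ⟨rfl, h0⟩ : H = none ∧ s₁ = 0 := by
        rcases hbase with h | ⟨h, h'⟩
        · omega
        · exact ⟨h, by omega⟩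
      subst h0
      cases h
    | ustepL _ _ s₁ s₂ hP hu h₁ h₂ =>
      obtain ⟨rfl, h0⟩ : H = none ∧ s₂ = 0 := by
        rcases hbase with h | ⟨h, h'⟩
        · omega
        · exact ⟨h, by omega⟩
      subst h0
      cases h₂
    | ustepR _ _ s₁ s₂ hP hu h₁ h₂ =>
      obtain ⟨rfl, h0⟩ : H = none ∧ s₁ = 0 := by
        rcases hbase with h | ⟨h, h'⟩
        · omega
        · exact ⟨h, by omega⟩
      subst h0
      cases h₁
  have hs1 : 1 ≤ s := by omega
  obtain ⟨v, s₁, s', hF1, hsum, hθ, hPv, hlight⟩ := hF.split (s / 2) (by omega) (by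
    rintro rfl
    have : s ≠ 1 := fun h => hbase (.inr ⟨rfl, h⟩)
    omega)
  have hsz := size_half hs1
  have hsz1 : ∀ t, t ≤ s / 2 → Nat.size t + 1 ≤ Nat.size s := fun t ht => by
    have := Nat.size_le_size ht; omega
  obtain ⟨d, hd⟩ : ∃ d, dep H.isSome s = d + 2 := ⟨dep H.isSome s - 2, by
    unfold dep; split_ifs <;> omega⟩
  have hd1 : ∀ (h : Bool) t, t ≤ s / 2 → dep h t ≤ d := fun h t ht => by
    have := hsz1 t ht
    unfold dep at hd ⊢; split_ifs at hd ⊢ <;> omega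
  have hd2 : ∀ t, t ≤ s → (H = none → t ≤ s / 2) → dep false t ≤ d := fun t ht ht' => by
    rcases H with _ | b
    · exact hd1 _ _ (ht' rfl)
    · have := Nat.size_le_size ht
      unfold dep at hd ⊢
      simp at hd ⊢
      omega
  rw [hd]
  have key1 : ∀ (S' : Abs M) cy', S'.cf .A = S.cf .A → S'.cf .B = v → s₁ ≤ S'.nm .s →
      S'.nm .s ≤ Z → S'.nm .z = Z → AB x L m d 2 (.node true) 0 (enc c S' cy') :=
    fun S' cy' e1 e2 e3 e4 e5 => (IH s₁ (by omega) a (some v) hF1 S' cy' (by rw [e1, hA])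
      (fun b hb => by rw [e2]; simpa using hb) e3 e4 e5).mono (hd1 _ _ (by omega)) le_rfl
  have key2 : ∀ (b : M.Cfg) (H' : Option M.Cfg) t, Fr M x (Bd M L Z) b H' t → t < s →
      dep H'.isSome t ≤ d → (H' = none ∨ H' = H) → ∀ (S' : Abs M) cy', S'.cf .A = b →
      S'.cf .B = S.cf .B → S'.nm .s = t → S'.nm .z = Z →
      AB x L m d 2 (.node H'.isSome) 0 (enc c S' cy') :=
    fun b H' t hF' ht hd' hH' S' cy' e1 e2 e3 e4 => (IH t ht b H' hF' S' cy' e1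
      (fun b' hb' => by
        rcases hH' with rfl | rfl
        · simp at hb'
        · rw [e2, hB _ hb']) (by omega) (by omega) e4).mono hd' le_rfl
  rcases hlight with ⟨hne, tr, s₂, htr, hF2, hle, rfl⟩ |
    ⟨hu, tr1, tr2, s₂, s₃, htr, rfl, ⟨hF2, hF3, hle, hle'⟩ | ⟨hF2, hF3, hle, hle'⟩⟩
  · exact split_complete (δ := ⟨H.isSome, H.isSome, false, false, v.state, v.tape v.wpos,
      inputAt x v.ipos, tr, tr⟩) (s₁ := S.nm .s - s₂ - 1) (s₂ := s₂) (s₃ := 0) hL hZ hn hz hsZ hm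
      (.inl ⟨rfl, hne, htr, rfl, rfl⟩) hPv rfl rfl rfl hF2.root hF2.root (by omega)
      (fun S' cy' e1 e2 e3 e4 => key1 S' cy' e1 e2 (by omega) (by omega) e4)
      (key2 _ H s₂ hF2 (by omega) (hd1 _ _ hle) (.inr rfl)) (by simp)
  · exact split_complete (δ := ⟨H.isSome, H.isSome, false, true, v.state, v.tape v.wpos,
      inputAt x v.ipos, tr1, tr2⟩) (s₁ := S.nm .s - s₂ - s₃ - 1) (s₂ := s₂) (s₃ := s₃)
      hL hZ hn hz hsZ hm (.inr ⟨rfl, hu, htr, .inl ⟨rfl, rfl⟩⟩) hPv rfl rfl rfl hF2.root hF3.root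
      (by omega) (fun S' cy' e1 e2 e3 e4 => key1 S' cy' e1 e2 (by omega) (by omega) e4)
      (key2 _ H s₂ hF2 (by omega) (hd1 _ _ hle) (.inr rfl))
      (fun _ => key2 _ none s₃ hF3 (by omega) (hd2 _ (by omega) hle') (.inl rfl))
  · exact split_complete (δ := ⟨H.isSome, false, H.isSome, true, v.state, v.tape v.wpos,
      inputAt x v.ipos, tr1, tr2⟩) (s₁ := S.nm .s - s₂ - s₃ - 1) (s₂ := s₂) (s₃ := s₃)
      hL hZ hn hz hsZ hm (.inr ⟨rfl, hu, htr, .inr ⟨rfl, rfl⟩⟩) hPv rfl rfl rfl hF2.root hF3.root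
      (by omega) (fun S' cy' e1 e2 e3 e4 => key1 S' cy' e1 e2 (by omega) (by omega) e4)
      (key2 _ none s₂ hF2 (by omega) (hd2 _ (by omega) hle') (.inl rfl))
      (fun _ => key2 _ H s₃ hF3 (by omega) (hd1 _ _ hle) (.inr rfl))

end
end

section
variable {M : ATM} {c : ℕ} {x : List Bool} {L m d j Z : ℕ}

/-! ### Completeness of the computation of the size budget -/

lemma rw1_complete {mm : Option (Fin c)} {w : ℕ → Col M c} (h : AB x L m d j (.w .done mm) 0 w)
    (k : ℕ) (hk : k ≤ x.length) : AB x L m d (j + k + 1) (.w .rw1 mm) ((k : ℤ) - 1) w := by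
  induction k with
  | zero =>
    exact AB.choose (q' := .w .done mm) .right rfl
      (.inr ⟨inputAt_eq_none.2 (.inl (by simp)), rfl, rfl⟩) (by simpa [moveDir] using h)
  | succ k ih =>
    refine AB.choose (j := j + k + 1) (q' := .w .rw1 mm) .left rfl
      (.inl ⟨fun e => ?_, rfl, rfl⟩) ?_
    · have := inputAt_eq_none.1 e
      omega
    · have := ih (by omega)
      simpa [moveDir] using this

/-- A scan of the input performs `n + 2` additions. -/
lemma walk_complete {mm : Option (Fin c)} (St : ℕ → Abs M)
    (hSt : ∀ i < x.length + 2, ∀ cy, ∃ cy',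
      SweepRel (addP mm) L (enc c (St i) cy) (enc c (St (i + 1)) cy'))
    (h : ∀ cy, AB x L m d j (.w .done mm) 0 (enc c (St (x.length + 2)) cy)) (cy) :
    AB x L m d (j + 3 * x.length + 5) (.w .walk mm) 0 (enc c (St 0) cy) := by
  suffices H : ∀ k p cy, p + k = x.length →
      AB x L m d (j + x.length + 2 * k + 5) (.w .walk mm) (p : ℤ) (enc c (St p) cy) from
    AB.mono (H x.length 0 cy (by omega)) le_rfl (by omega)
  intro k
  induction k with
  | zero =>
    intro p cy hp
    obtain rfl : p = x.length := by omega
    obtain ⟨cy₁, h₁⟩ := hSt x.length (by omega) cy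
    obtain ⟨cy₂, h₂⟩ := hSt (x.length + 1) (by omega) cy₁
    refine AB.choose (j := j + x.length + 4) (q' := .w .e1 mm) .stay rfl
      (.inr ⟨inputAt_eq_none.2 (by omega), rfl, rfl⟩) ?_
    refine AB.sweep (j := j + x.length + 3) rfl h₁ (AB.sweep (j := j + x.length + 2) rfl h₂ ?_)
    exact AB.choose (j := j + x.length + 1) (q' := .w .rw1 mm) .left rfl ⟨rfl, rfl⟩
      (rw1_complete (h cy₂) x.length le_rfl)
  | succ k ih =>
    intro p cy hp
    obtain ⟨cy₁, h₁⟩ := hSt p (by omega) cy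
    refine AB.choose (j := j + x.length + 2 * k + 6) (q' := .w .wadd mm) .right rfl
      (.inl ⟨fun e => ?_, rfl, rfl⟩) (AB.sweep (j := j + x.length + 2 * k + 5) rfl h₁ ?_)
    · have := inputAt_eq_none.1 e
      omega
    · have := ih (p + 1) cy₁ (by omega)
      simpa [moveDir] using this

/-- The final multiplications by `n + 2`, followed by the verification of the whole tree. -/
lemma rounds_complete {W : ℕ} (hZ : Z < bet c ^ L)
    (h : ∀ (S : Abs M) cy, S.cf .A = M.init → S.nm .s = Z → S.nm .z = W →
      AB x L m d 2 (.node false) 0 (enc c S cy)) (r : ℕ) :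
    r ≤ c → ∀ (S : Abs M) cy, S.nm .x * (x.length + 2) ^ r = Z → S.nm .y = 0 →
      AB x L m d (3 + r * (3 * x.length + 6)) (nxt M c r) 0 (enc c S cy) := by
  induction r with
  | zero =>
    intro _ S cy hx hy
    let S' : Abs M := { S with
      cf := fun
        | .A => M.init
        | g => S.cf g
      nm := fun
        | .s => S.nm .x
        | .z => W
        | t => S.nm t }
    change AB x L m d (3 + 0 * _) (.z .fin) 0 _
    rw [Nat.zero_mul]
    refine AB.sweep (j := 2) (w' := enc c S' fun _ _ => 0) rfl
      (sweep_enc (fun i _ => rfl) fun i _ => ⟨rfl, ?_, ?_⟩) (h S' _ rfl ?_ rfl)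
    · rw [prevc_isNone]
      simp [enc, S', ATM.init]
    · simp [enc, S', ATM.init, isS]
    · simpa using hx
  | succ r ih =>
    intro hr S cy hx hy
    have hle : S.nm .x * (x.length + 2) ≤ Z := by
      rw [← hx, pow_succ]
      have : 1 ≤ (x.length + 2) ^ r := Nat.one_le_pow _ _ (by omega)
      calc S.nm .x * (x.length + 2) = S.nm .x * (1 * (x.length + 2)) := by ring
        _ ≤ _ := Nat.mul_le_mul_left _ (Nat.mul_le_mul_right _ this)
    have e : nxt M c (r + 1) = .w .walk (some ⟨r, hr⟩) := by simp [nxt, Nat.lt_of_succ_le hr]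
    rw [e]
    let St : ℕ → Abs M := fun i => { S with nm := fun
      | .y0 => if i = 0 then S.nm .y0 else (i - 1) * S.nm .x
      | .y => i * S.nm .x
      | t => S.nm t }
    have e0 : St 0 = S := by
      have : (St 0).nm = S.nm := by
        funext t
        cases t <;> simp [St, hy]
      change { S with nm := (St 0).nm } = S
      rw [this]
    have key := walk_complete (x := x) (L := L) (m := m) (d := d) (c := c)
      (j := 3 + r * (3 * x.length + 6) + 1) (mm := some ⟨r, hr⟩) St ?_ ?_ cy
    · rw [e0] at key
      exact AB.mono key le_rfl (by have := Nat.add_one_mul r (3 * x.length + 6); omega)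
    · intro i hi cy
      obtain ⟨C, hC⟩ := exists_add (c := c) (L := L) 0
        (a := fun _ n => (n.dg .y0 : ℕ) + n.dg .x)
        (d := fun n => (n.dg .y : ℕ)) (St (i + 1)) (i * S.nm .x) (S.nm .x) ((i + 1) * S.nm .x)
        (fun _ _ => rfl) (fun _ _ => rfl) (by ring)
        (lt_of_le_of_lt (by rw [mul_comm]; exact Nat.mul_le_mul_left _ (by omega))
          (lt_of_le_of_lt hle hZ))
      exact ⟨fun _ => C, sweep_enc (fun i _ => ⟨rfl, rfl⟩) (hC _ rfl)⟩
    · intro cy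
      let S' : Abs M := { S with nm := fun
        | .x => (x.length + 2) * S.nm .x
        | .y => 0
        | t => S.nm t }
      refine AB.sweep (w' := enc c S' fun _ _ => 0) rfl
        (sweep_enc (fun i _ => ⟨rfl, ?_⟩) fun _ _ => trivial)
        (ih (by omega) S' _ ?_ rfl)
      · simp [enc, S', isS, dig_zero]
      · rw [← hx]; change (x.length + 2) * S.nm .x * _ = _
        ring

lemma wt_bSn (a l L : ℕ) (hL : 0 < L) (h : a + l ≤ L) :
    wt (bSn fun i => decide (a ≤ i ∧ i < a + l)) L = 2 ^ (l + 1) := by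
  have h1 : ∀ n, 0 < n → wt (bSn fun i => decide (a ≤ i ∧ i < a + l)) n =
      2 ^ (min n (a + l) - a + 1) := by
    intro n hn
    induction n, hn using Nat.le_induction with
    | base =>
      simp only [wt, Finset.prod_range_one, bSn, if_true, decide_eq_true_eq]
      split_ifs with h
      · rw [show min 1 (a + l) - a = 1 by omega]; norm_num
      · rw [show min 1 (a + l) - a = 0 by omega]; norm_num
    | succ n hn ih =>
      rw [wt_succ, ih]
      simp only [bSn, decide_eq_true_eq]
      rw [if_neg (by omega)]
      split_ifs with h
      · rw [show min (n + 1) (a + l) - a = min n (a + l) - a + 1 by omega]; ring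
      · rw [show min (n + 1) (a + l) - a = min n (a + l) - a by omega]; ring
  rw [h1 L hL]
  congr 2
  omega

/-- Marking one more segment of `log n` cells. -/
lemma seg_complete (hL : 0 < L) {N : ℕ} (hN : (N + 1) * logb x.length ≤ L)
    (hb : N + 1 < bet c ^ L)
    (h : ∀ (S : Abs M) cy, (∀ i, S.used i = decide (i < (N + 1) * logb x.length)) →
      S.nm .cnt = N + 1 → AB x L m d j (.z .bk) 0 (enc c S cy))
    (S : Abs M) (cy) (hu : ∀ i, S.used i = decide (i < N * logb x.length)) (hc : S.nm .cnt = N) :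
    AB x L m d (j + 3 * x.length + 8) (.z .blk) 0 (enc c S cy) := by
  have hexp : (N + 1) * logb x.length = N * logb x.length + logb x.length := Nat.succ_mul _ _
  set l := logb x.length with hl
  set a := N * l with ha
  have hlt : x.length + 2 < 2 ^ (l + 1) := Nat.lt_pow_succ_log_self (by norm_num) _
  have hw := wt_bSn a l L hL (by omega)
  let St : ℕ → Abs M := fun i => { S with
    used := fun i => decide (i < (N + 1) * l)
    cur := fun i => decide (a ≤ i ∧ i < a + l)
    nm := fun
      | .sg0 => i - 1
      | .sg => i
      | t => S.nm t }
  refine AB.choose (j := j + 3 * x.length + 7) (q' := .z .seg) .stay rfl ⟨rfl, .inl rfl⟩ ?_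
  refine AB.sweep (j := j + 3 * x.length + 6) (w' := enc c (St 0) fun _ _ => 0) rfl
    (sweep_enc (fun i _ => ⟨?_, ?_, rfl, ?_⟩) fun _ _ => trivial)
    (AB.mono (j := j + 1 + 3 * x.length + 5) (walk_complete St ?_ ?_ _) le_rfl (by omega))
  · simp only [enc, St, hu, decide_eq_true_eq, decide_eq_false_iff_not]
    omega
  · simp only [enc, St, hu, ← Bool.decide_or, decide_eq_decide]
    omega
  · simp [enc, St, isS, dig_zero]
  · intro i hi cy
    obtain ⟨C, hC⟩ := exists_addC (c := c) (L := L) 0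
      (b := bS) (a := fun f n => (n.dg .sg0 : ℕ) + one f) (d := fun n => n.dg .sg) (St (i + 1))
      (bSn (St 0).cur) (fun k => dig (bSn (St 0).cur) i k + one (decide (k = 0))) (i + 1)
      (fun cy k => by simp [bS, bSn, enc, St]) (fun _ _ => rfl) (fun _ _ => rfl) (bSn_pos _)
      (fun k => by
        have h1 := dig_le (bSn_pos (St 0).cur) i k
        have h2 : one (decide (k = 0)) ≤ bSn (St 0).cur k - 1 := by
          simp only [one, bSn, decide_eq_true_eq]
          split_ifs <;> simp
        omega)
      (by rw [val_one hL, val_dig (by rw [hw]; omega)]) (by rw [hw]; omega)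
    exact ⟨fun _ => C, sweep_enc (fun i _ => ⟨rfl, rfl, rfl, rfl⟩) (hC _ rfl)⟩
  · intro cy
    let S' : Abs M := { St 0 with nm := fun
      | .cnt => N + 1
      | .y0 => N
      | t => S.nm t }
    obtain ⟨C, hC⟩ := exists_inc (c := c) (L := L) 0 (a := fun f n => (n.dg .y0 : ℕ) + one f)
      (d := fun n => (n.dg .cnt : ℕ)) S' N (N + 1) hL
      (fun _ _ => rfl) (fun _ _ => rfl) rfl hb
    exact AB.sweep (w' := enc c S' fun _ => C) rfl
      (sweep_enc (fun i _ => ⟨rfl, by simp [enc, S', St, isS, hc]⟩) (hC _ rfl))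
      (h S' _ (fun _ => rfl) rfl)

/-- Marking the `t` segments that are still missing. After every second segment a fork resets the
number of steps since the last fork, so that `m` need not grow with `F`. -/
lemma blk_complete (hL : 0 < L) {F J : ℕ} (hF : F * logb x.length ≤ L) (hb : F < bet c ^ L)
    (hJ : J + 3 * x.length + 11 ≤ m) (hJ' : 6 * x.length + 20 ≤ m)
    (h : ∀ (S : Abs M) cy, S.nm .cnt = F → AB x L m d J (.z .exit) 0 (enc c S cy)) (t : ℕ) :
    ∀ (N : ℕ) (S : Abs M) (cy), N + t = F → (∀ i, S.used i = decide (i < N * logb x.length)) →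
      S.nm .cnt = N → AB x L m (d + t / 2) m (.z .blk) 0 (enc c S cy) := by
  have hseg : ∀ N, N < F → (N + 1) * logb x.length ≤ L := fun N hN =>
    (Nat.mul_le_mul_right _ hN).trans hF
  have hexit : ∀ (S : Abs M) cy, S.nm .cnt = F →
      AB x L m d (J + 1) (.z .blk) 0 (enc c S cy) := fun S cy hS =>
    AB.choose (q' := .z .exit) .stay rfl ⟨rfl, .inr rfl⟩ (h S cy hS)
  induction t using Nat.strong_induction_on with
  | _ t IH =>
  intro N S cy hN hu hc
  match t, IH, hN with
  | 0, _, hN => exact AB.mono (hexit S cy (by omega)) (by omega) (by omega)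
  | 1, _, hN =>
    refine AB.mono (d := d) (j := (J + 2) + 3 * x.length + 8) ?_ (by omega) (by omega)
    refine seg_complete hL (hseg N (by omega)) (by omega) (fun S' cy' hu' hc' => ?_) S cy hu hc
    exact AB.choose (q' := .z .blk) .stay rfl ⟨rfl, .inl rfl⟩ (hexit S' cy' (by omega))
  | t + 2, IH, hN =>
    refine AB.mono (d := d + t / 2 + 1)
      (j := (1 + 3 * x.length + 8 + 1) + 3 * x.length + 8) ?_ (by omega) (by omega)
    refine seg_complete hL (hseg N (by omega)) (by omega) (fun S' cy' hu' hc' => ?_) S cy hu hc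
    refine AB.choose (q' := .z .blk) .stay rfl ⟨rfl, .inl rfl⟩ ?_
    refine seg_complete hL (hseg (N + 1) (by omega)) (by omega) (fun S₂ cy₂ hu₂ hc₂ => ?_)
      S' cy' hu' hc'
    refine AB.choose (j := 0) (q' := .z .fk) .stay rfl ⟨rfl, .inr rfl⟩ ?_
    exact AB.fork rfl (AB.acc rfl) (IH t (by omega) (N + 2) S₂ cy₂ (by omega) hu₂ hc₂)

end

section
variable {M : ATM} {c : ℕ} {x : List Bool}

lemma logb_pos (n : ℕ) : 1 ≤ logb n :=
  Nat.log_pos (by norm_num) (by omega)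

/-- Three times the bound `F * (n + 2) ^ (c + 1)` on input positions fits into `F * log n` digits. -/
lemma budget_fits (c F n : ℕ) (hF : 1 ≤ F) :
    3 * (F * (n + 2) ^ (c + 1)) < bet c ^ (F * logb n) := by
  have hl := logb_pos n
  set l := logb n
  have h1 : n + 2 ≤ 4 ^ l := by
    have : n + 2 < 2 ^ (l + 1) := Nat.lt_pow_succ_log_self (by norm_num) _
    calc n + 2 ≤ 2 ^ (l + 1) := this.le
      _ ≤ 2 ^ (2 * l) := Nat.pow_le_pow_right (by norm_num) (by omega)
      _ = 4 ^ l := by rw [pow_mul]; norm_num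
  have h2 : 3 * F < 4 ^ (2 * F) := by
    have : F < 4 ^ F := Nat.lt_pow_self (by norm_num)
    have h4 : 4 ≤ 4 ^ F := by
      calc 4 = 4 ^ 1 := by norm_num
        _ ≤ _ := Nat.pow_le_pow_right (by norm_num) hF
    rw [two_mul, pow_add]
    nlinarith
  have h3 : (n + 2) ^ (c + 1) ≤ 4 ^ (l * (c + 1)) := by
    rw [pow_mul]; exact Nat.pow_le_pow_left h1 _
  calc 3 * (F * (n + 2) ^ (c + 1)) = 3 * F * (n + 2) ^ (c + 1) := by ring
    _ < 4 ^ (2 * F) * 4 ^ (l * (c + 1)) := Nat.mul_lt_mul_of_lt_of_le h2 h3 (by positivity)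
    _ = 4 ^ (2 * F + l * (c + 1)) := by rw [pow_add]
    _ ≤ 4 ^ ((c + 3) * (F * l)) := by
      refine Nat.pow_le_pow_right (by norm_num) ?_
      have a1 : F ≤ F * l := Nat.le_mul_of_pos_right _ hl
      have a2 : l * (c + 1) ≤ F * l * (c + 1) :=
        Nat.mul_le_mul_right _ (Nat.le_mul_of_pos_left _ hF)
      nlinarith
    _ = bet c ^ (F * l) := by rw [bet, ← pow_mul]

/-- An accepting computation tree of `M` yields acceptance of the simulating machine. -/
theorem sim_complete {F : ℕ} (hF : 1 ≤ F) {t : CTree M.Cfg} (hr : t.root = M.init)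
    (hv : M.ValidTree x t) (hok : t.Forall (M.CfgOk (F * logb x.length)))
    (hs : t.size ≤ F * (x.length + 2) ^ c) :
    (sim M c).AccB x (F * logb x.length) ((c + 3) * (3 * x.length + 10))
      (4 * Nat.size (F * (x.length + 2) ^ c) + F / 2) ((c + 3) * (3 * x.length + 10))
      (sim M c).start 0 (fun _ => (sim M c).init) := by
  have hl := logb_pos x.length
  have hfit := budget_fits c F x.length hF
  set L := F * logb x.length with hLdef
  set m := (c + 3) * (3 * x.length + 10) with hm
  have hm' : m = c * (3 * x.length + 6) + 4 * c + 9 * x.length + 30 := by rw [hm]; ring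
  have hL : 0 < L := Nat.mul_pos hF hl
  have hpow : 1 ≤ (x.length + 2) ^ c := Nat.one_le_pow _ _ (by omega)
  have hle : F * (x.length + 2) ^ c ≤ F * (x.length + 2) ^ (c + 1) :=
    Nat.mul_le_mul_left _ (Nat.pow_le_pow_right (by omega) (by omega))
  have hlen : x.length ≤ F * (x.length + 2) ^ (c + 1) := by
    have : x.length + 2 ≤ (x.length + 2) ^ (c + 1) := Nat.le_self_pow (by omega) _
    calc x.length ≤ 1 * (x.length + 2) ^ (c + 1) := by omega
      _ ≤ _ := Nat.mul_le_mul_right _ hF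
  have hFb : F ≤ F * (x.length + 2) ^ c := Nat.le_mul_of_pos_right _ hpow
  have hFr := fr_of_tree (L := L) (Z := F * (x.length + 2) ^ (c + 1)) hv hok
    (by rw [hr]; simp only [ATM.init]; omega) (by rw [hr]; simp only [ATM.init]; omega)
  rw [hr] at hFr
  have hnode : ∀ (S : Abs M) cy, S.cf .A = M.init → S.nm .s = F * (x.length + 2) ^ c →
      S.nm .z = F * (x.length + 2) ^ (c + 1) →
      AB x L m (4 * Nat.size (F * (x.length + 2) ^ c)) 2 (.node false) 0 (enc c S cy) := by
    intro S cy hA hS hz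
    refine AB.mono (node_complete hL hfit hlen (by omega) _ _ _ hFr S cy hA (by simp) (by omega)
      (by omega) hz) ?_ le_rfl
    have := Nat.size_le_size hs
    simp only [dep, Option.isSome_none, Bool.false_eq_true, if_false]
    omega
  have hexit : ∀ (S : Abs M) cy, S.nm .cnt = F →
      AB x L m (4 * Nat.size (F * (x.length + 2) ^ c)) (3 + c * (3 * x.length + 6) + 1) (.z .exit)
        0 (enc c S cy) := by
    intro S cy hS
    let S' : Abs M := { S with nm := fun
      | .x => S.nm .cnt
      | .y => 0
      | t => S.nm t }
    refine AB.sweep (w' := enc c S' fun _ _ => 0) rfl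
      (sweep_enc (fun i _ => ⟨rfl, by simp [enc, S', isS, dig_zero]⟩) fun _ _ => trivial)
      (rounds_complete (by omega) hnode c le_rfl S' _ ?_ rfl)
    rw [← hS]
  -- the work head at position `-1` makes all cells of the configurations look empty
  let S₀ : Abs M :=
    { used := fun _ => false
      cur := fun _ => false
      cf := fun _ => ⟨M.start, 0, fun _ => M.blank, -1⟩
      nm := fun _ => 0 }
  have h0 : (fun _ => col0 M c) = enc c S₀ fun _ _ => 0 := by
    funext i
    have h1 : (i : ℤ) ≠ -1 := by omega
    simp [col0, enc, S₀, dig_zero, h1]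
  have := blk_complete hL le_rfl (by omega) (by omega) (by omega) hexit F 0 S₀ (fun _ _ => 0)
    (by omega) (fun i => by simp [S₀]) rfl
  rw [← h0] at this
  exact this

end

/-! ### Assembling the bounds -/

lemma forall_mono {α : Type} {P R : α → Prop} (h : ∀ a, P a → R a) :
    ∀ {t : CTree α}, t.Forall P → t.Forall R
  | .leaf _, ht => h _ ht
  | .node1 _ _, ht => ⟨h _ ht.1, forall_mono h ht.2⟩
  | .node2 _ _ _, ht => ⟨h _ ht.1, forall_mono h ht.2.1, forall_mono h ht.2.2⟩

lemma CfgOk.mono {M : ATM} {s s' : ℕ} (hs : s ≤ s') {a : M.Cfg} (h : M.CfgOk s a) :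
    M.CfgOk s' a :=
  ⟨h.1, by have := h.2.1; omega, fun i hi => h.2.2 i (by omega)⟩

lemma size_le_div (F : ℕ) : Nat.size F ≤ F / 8 + 6 := by
  rw [Nat.size_le]
  have h : ∀ q, 8 * q + 8 ≤ 2 ^ (q + 6) := fun q => by
    induction q with
    | zero => norm_num
    | succ q ih => rw [show q + 1 + 6 = q + 6 + 1 by omega, pow_succ]; omega
  have := h (F / 8)
  omega

lemma size_mul_le (a b : ℕ) : Nat.size (a * b) ≤ Nat.size a + Nat.size b := by
  rw [Nat.size_le, pow_add]
  exact Nat.mul_lt_mul'' (Nat.lt_size_self a) (Nat.lt_size_self b)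

/-- The number of forks is at most `O(log n) + F`: the part of it that depends on `F` is
`4 * log F + F / 2`. -/
lemma depth_bound (c F n : ℕ) :
    4 * Nat.size (F * (n + 2) ^ c) + F / 2 ≤ (8 * c + 28) * logb n + F := by
  have hl := logb_pos n
  have h1 := size_mul_le F ((n + 2) ^ c)
  have h2 := size_le_div F
  have h3 : Nat.size ((n + 2) ^ c) ≤ c * (logb n + 1) + 1 := by
    rw [Nat.size_le]
    have : n + 2 < 2 ^ (logb n + 1) := Nat.lt_pow_succ_log_self (by norm_num) _
    calc (n + 2) ^ c ≤ (2 ^ (logb n + 1)) ^ c := Nat.pow_le_pow_left this.le _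
      _ = 2 ^ (c * (logb n + 1)) := by rw [← pow_mul, mul_comm]
      _ < _ := Nat.pow_lt_pow_right (by norm_num) (by omega)
  have h4 : c ≤ c * logb n := Nat.le_mul_of_pos_right _ hl
  have h5 : (8 * c + 28) * logb n = 8 * (c * logb n) + 28 * logb n := by ring
  have h6 : c * (logb n + 1) = c * logb n + c := by ring
  omega

/-- The number of Turing machine steps between two forks: each of the instructions of the sweep
machine takes at most `2 * L + 1` steps, `L` being `F * log n`. -/
lemma edge_bound (c F n : ℕ) (hF : 1 ≤ F) :
    (2 * (F * logb n) + 1) * ((c + 3) * (3 * n + 10) + 1) ≤ F * (n + 2) ^ (c + 12) := by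
  have hl : logb n ≤ n + 2 := Nat.log_le_self _ _
  have h2 : 2 ≤ n + 2 := by omega
  set y := n + 2
  have hc : c + 3 ≤ y ^ (c + 2) := by
    calc c + 3 ≤ 2 ^ (c + 2) := Nat.lt_pow_self (n := c + 2) (by norm_num)
      _ ≤ y ^ (c + 2) := Nat.pow_le_pow_left h2 _
  have h8 : 8 ≤ y ^ 3 := by
    calc 8 = 2 ^ 3 := by norm_num
      _ ≤ _ := Nat.pow_le_pow_left h2 _
  have a1 : 2 * (F * logb n) + 1 ≤ F * y ^ 4 := by
    have e : F * logb n ≤ F * y := Nat.mul_le_mul_left _ hl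
    have e2 : 1 ≤ F * y := Nat.mul_pos hF (by omega)
    calc 2 * (F * logb n) + 1 ≤ F * y * 8 := by omega
      _ ≤ F * y * y ^ 3 := Nat.mul_le_mul_left _ h8
      _ = F * y ^ 4 := by ring
  have a2 : (c + 3) * (3 * n + 10) + 1 ≤ y ^ (c + 2) * y ^ 6 := by
    have e : 3 * n + 11 ≤ y ^ 4 := by
      calc 3 * n + 11 ≤ y * 8 := by omega
        _ ≤ y * y ^ 3 := Nat.mul_le_mul_left _ h8
        _ = y ^ 4 := by ring
    calc (c + 3) * (3 * n + 10) + 1 ≤ (c + 3) * (3 * n + 11) := by nlinarith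
      _ ≤ y ^ (c + 2) * y ^ 4 := Nat.mul_le_mul hc e
      _ ≤ y ^ (c + 2) * y ^ 6 :=
        Nat.mul_le_mul_left _ (Nat.pow_le_pow_right (by omega) (by norm_num))
  calc _ ≤ F * y ^ 4 * (y ^ (c + 2) * y ^ 6) := Nat.mul_le_mul a1 a2
    _ = F * y ^ (c + 12) := by ring

/-- polynomial treesize ATMs can be assumed to have computation
trees that are subdivisions of shallow binary trees. -/
theorem atm_treesize_subset_atm_subdiv (Q : ParamProblem)
    (h : SolvableATMTreeSize Q) : SolvableATMSubdiv Q := by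
  obtain ⟨M, f, c, hf, hQ⟩ := h
  refine ⟨(sim M c).toATM, f, c + 12, 8 * c + 28, hf, fun x k => ?_⟩
  rw [hQ]
  have hl := logb_pos x.length
  constructor
  · rintro ⟨t, hr, hv, hok, hs⟩
    have hF : 1 ≤ f k := by
      rcases Nat.eq_zero_or_pos (f k) with h0 | h0
      · rw [h0, Nat.zero_mul] at hs
        cases t <;> simp [CTree.size] at hs
      · exact h0
    obtain ⟨t', h1, h2, h3, h4⟩ := SweepMachine.complete le_rfl (Nat.mul_pos hF hl)
      (sim_complete hF hr hv hok hs)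
    have he := edge_bound c (f k) x.length hF
    exact ⟨t', h1, h2, h3, SubdivShape.mono h4 _ _ _ he (depth_bound _ _ _) he⟩
  · rintro ⟨t, hr, hv, hok, -⟩
    obtain ⟨L, hL1, hL, hacc⟩ := SweepMachine.sound _ x _ t hr hv hok
    obtain ⟨N, hN, t', h1, h2, h3, h4⟩ := goal_of_acc hL1 hacc
    refine ⟨t', h1, h2, forall_mono (fun a => CfgOk.mono hL) h3, h4.trans ?_⟩
    exact Nat.mul_le_mul_right _ (Nat.le_of_mul_le_mul_right (hN.trans hL) hl)

end XALP
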